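/- arXiv:1210.7708 — 6 statements merged into one kernel-verified Lean document; each statement's English description precedes it below -/
import Mathlib

section
/- Let n ≥ 2, 1 ≤ k ≤ n-1 and 0 ≤ σ ≤ σ_n. Then m_k(1,σ) ≥ B_{n,k}(σ) := (1 − σ/σ_n)·T_{n-1}^{(k)}(1) + (σ/σ_n)·T_n^{(k)}(1). -/
open Polynomial Set

/-- `k`-th derivative of the Chebyshev polynomial `T_m`, evaluated at `x`. -/
noncomputable def chebDeriv (m : ℤ) (k : ℕ) (x : ℝ) : ℝ :=
  (derivative^[k] (Polynomial.Chebyshev.T ℝ m)).eval x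

/-- `σ_n = 2^(n-1) n! = T_n^{(n)}(1)`. -/
noncomputable def sigmaN (n : ℕ) : ℝ := 2 ^ (n - 1) * (n.factorial : ℝ)

/-- `f` is `n` times differentiable on the set `s`. -/
def NTimesDiffOn (n : ℕ) (f : ℝ → ℝ) (s : Set ℝ) : Prop :=
  ∀ i < n, DifferentiableOn ℝ (iteratedDerivWithin i f s) s

/-- The class `W^n_∞(σ)` on `[-1,1]`. -/
def memW (n : ℕ) (σ : ℝ) (f : ℝ → ℝ) : Prop :=
  NTimesDiffOn n f (Icc (-1:ℝ) 1) ∧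
  (∀ x ∈ Icc (-1:ℝ) 1, |f x| ≤ 1) ∧
  (∀ x ∈ Icc (-1:ℝ) 1, |iteratedDerivWithin n f (Icc (-1:ℝ) 1) x| ≤ σ)

/-- `m_k(x,σ) = sup { |f^{(k)}(x)| : f ∈ W^n_∞(σ) }`. -/
noncomputable def mval (n k : ℕ) (x σ : ℝ) : ℝ :=
  sSup {y | ∃ f : ℝ → ℝ, memW n σ f ∧
    y = |iteratedDerivWithin k f (Icc (-1:ℝ) 1) x|}

/-- `m_k^*(x,σ) = sup { |f^{(k)}(x)| : f ∈ W^n_∞(σ), f^{(k+1)}(x) = 0 }`. -/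
noncomputable def mstar (n k : ℕ) (x σ : ℝ) : ℝ :=
  sSup {y | ∃ f : ℝ → ℝ, memW n σ f ∧
    iteratedDerivWithin (k+1) f (Icc (-1:ℝ) 1) x = 0 ∧
    y = |iteratedDerivWithin k f (Icc (-1:ℝ) 1) x|}

/-- `μ_k(x₀)`: best constant in the pointwise Markov inequality. -/
noncomputable def muk (n k : ℕ) (x : ℝ) : ℝ :=
  sSup {y | ∃ p : Polynomial ℝ, p.natDegree ≤ n ∧
    (∀ t ∈ Icc (-1:ℝ) 1, |p.eval t| ≤ 1) ∧
    y = |(derivative^[k] p).eval x|}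

/-- `μ_k^*(x₀)`: best constant in the pointwise Schur-type inequality. -/
noncomputable def mukStar (n k : ℕ) (x : ℝ) : ℝ :=
  sSup {y | ∃ p : Polynomial ℝ, p.natDegree ≤ n ∧
    (∀ t ∈ Icc (-1:ℝ) 1, |p.eval t| ≤ 1) ∧
    (derivative^[k+1] p).eval x = 0 ∧
    y = |(derivative^[k] p).eval x|}


lemma iterDW_poly (p : ℝ[X]) (j : ℕ) : ∀ x ∈ Icc (-1:ℝ) 1,
    iteratedDerivWithin j (fun t => p.eval t) (Icc (-1:ℝ) 1) x = (derivative^[j] p).eval x := by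
  induction j with
  | zero => intro x _; simp
  | succ j ih =>
    intro x hx
    have hu : UniqueDiffWithinAt ℝ (Icc (-1:ℝ) 1) x := uniqueDiffOn_Icc (by norm_num) x hx
    rw [iteratedDerivWithin_succ, derivWithin_congr ih (ih x hx), Function.iterate_succ_apply']
    exact ((derivative^[j] p).hasDerivAt x).hasDerivWithinAt.derivWithin hu

lemma iterate_top (p : ℝ[X]) (n : ℕ) (hp : p.natDegree ≤ n) :
    derivative^[n] p = C ((n.factorial : ℝ) * p.coeff n) := by
  ext m
  rw [coeff_iterate_derivative, coeff_C]
  split_ifs with h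
  · subst h; simp [Nat.descFactorial_self]
  · rw [coeff_eq_zero_of_natDegree_lt (by omega)]; simp

lemma exists_poly (N : ℕ) (a : ℕ → ℝ) : ∃ P : ℝ[X], P.degree ≤ N ∧
    ∀ j ≤ N, (derivative^[j] P).eval 1 = a j := by
  set q : ℝ[X] := ∑ i ∈ Finset.range (N + 1), C (a i / (i.factorial : ℝ)) * X ^ i with hq
  have hqc : ∀ j ≤ N, q.coeff j = a j / (j.factorial : ℝ) := by
    intro j hj
    rw [hq, finsetSum_coeff]
    simp only [coeff_C_mul_X_pow]
    rw [Finset.sum_ite_eq]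
    simp [Nat.lt_succ_of_le hj]
  refine ⟨taylor (-1) q, ?_, ?_⟩
  · rw [degree_taylor, hq]
    refine (degree_sum_le _ _).trans (Finset.sup_le ?_)
    intro i hi
    refine (degree_C_mul_X_pow_le _ _).trans ?_
    have : i ≤ N := by simpa [Nat.lt_succ_iff] using hi
    exact_mod_cast this
  · intro j hj
    rw [← factorial_smul_hasseDeriv]
    simp only [LinearMap.smul_apply, eval_smul]
    rw [← taylor_coeff, taylor_taylor]
    have hf : (j.factorial : ℝ) ≠ 0 := by positivity
    simp only [add_neg_cancel, taylor_zero, hqc j hj, nsmul_eq_mul]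
    field_simp

/-- Descending from a bound on the top derivative when all lower ones vanish at 1. -/
lemma descend (n : ℕ) (G : ℕ → ℝ → ℝ) (σ : ℝ)
    (hG : ∀ j < n, ∀ x ∈ Icc (-1:ℝ) 1, HasDerivWithinAt (G j) (G (j+1) x) (Icc (-1:ℝ) 1) x)
    (h1 : ∀ j < n, G j 1 = 0) (hσ : ∀ x ∈ Icc (-1:ℝ) 1, |G n x| ≤ σ) :
    ∀ i ≤ n, ∀ x ∈ Icc (-1:ℝ) 1, |G (n - i) x| ≤ σ * 2 ^ i := by
  intro i
  induction i with
  | zero => intro _ x hx; simpa using hσ x hx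
  | succ i ih =>
    intro hi x hx
    have hlt : n - (i+1) < n := by omega
    have he : n - (i+1) + 1 = n - i := by omega
    have h := (convex_Icc (-1:ℝ) 1).norm_image_sub_le_of_norm_hasDerivWithin_le
      (f := G (n - (i+1))) (f' := G (n - i)) (C := σ * 2 ^ i) (x := 1) (y := x)
      (fun y hy => by have := hG _ hlt y hy; rwa [he] at this)
      (fun y hy => ih (by omega) y hy) (by simp) hx
    rw [h1 _ hlt, sub_zero, Real.norm_eq_abs, Real.norm_eq_abs] at h
    have h0 : 0 ≤ σ * 2 ^ i := (abs_nonneg _).trans (ih (by omega) x hx)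
    have h2 : |x - 1| ≤ 2 := by rw [abs_le]; constructor <;> linarith [hx.1, hx.2]
    calc _ ≤ σ * 2 ^ i * |x - 1| := h
      _ ≤ σ * 2 ^ i * 2 := by gcongr
      _ = _ := by ring

lemma bdd (n k : ℕ) (σ : ℝ) (hn : 1 ≤ n) (hk : k < n) (hσ : 0 ≤ σ) (f : ℝ → ℝ)
    (hf : memW n σ f) : |iteratedDerivWithin k f (Icc (-1:ℝ) 1) 1| ≤
      (1 + σ * 2 ^ n) * (derivative^[k] (Polynomial.Chebyshev.T ℝ ((n - 1 : ℕ) : ℤ))).eval 1 := by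
  obtain ⟨hd, hb, hs⟩ := hf
  obtain ⟨P, hPd, hP⟩ := exists_poly (n - 1) (fun j => iteratedDerivWithin j f (Icc (-1:ℝ) 1) 1)
  have hPn : derivative^[n] P = 0 := by
    apply iterate_derivative_eq_zero_of_degree_lt
    refine hPd.trans_lt ?_
    exact_mod_cast (by omega : n - 1 < n)
  have hdes := descend n
    (fun j x => iteratedDerivWithin j f (Icc (-1:ℝ) 1) x - (derivative^[j] P).eval x) σ
    (by
      intro j hj x hx
      refine HasDerivWithinAt.sub ?_ ?_
      · rw [iteratedDerivWithin_succ]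
        exact (hd j hj x hx).hasDerivWithinAt
      · rw [Function.iterate_succ_apply']
        exact ((derivative^[j] P).hasDerivAt x).hasDerivWithinAt)
    (by intro j hj; simp [hP j (by omega)])
    (by intro x hx; simpa [hPn] using hs x hx) n le_rfl
  have hM : 0 < 1 + σ * 2 ^ n := by positivity
  have hPb : ∀ x ∈ Icc (-1:ℝ) 1, |P.eval x| ≤ 1 + σ * 2 ^ n := by
    intro x hx
    have h1 := hdes x hx
    have h2 := hb x hx
    simp only [Nat.sub_self, iteratedDerivWithin_zero, Function.iterate_zero, id_eq] at h1
    rw [abs_le] at *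
    constructor <;> linarith
  have key : ∀ c : ℝ, |c| = 1 → c * (derivative^[k] P).eval 1 ≤ (1 + σ * 2 ^ n) *
      (derivative^[k] (Polynomial.Chebyshev.T ℝ ((n - 1 : ℕ) : ℤ))).eval 1 := by
    intro c hc
    have := Polynomial.Chebyshev.eval_iterate_derivative_le_of_forall_abs_le_one
      (n := n - 1) (P := C (c / (1 + σ * 2 ^ n)) * P) (k := k) (x := 1) le_rfl
      ((degree_mul_le _ _).trans ((add_le_add degree_C_le hPd).trans (by simp)))
      (by
        intro x hx
        rw [eval_mul, eval_C, abs_mul, abs_div, hc, abs_of_pos hM, div_mul_eq_mul_div, one_mul,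
          div_le_one hM]
        exact hPb x hx)
    rw [iterate_derivative_C_mul, eval_mul, eval_C, div_mul_eq_mul_div, div_le_iff₀ hM] at this
    linarith
  have e := hP k (by omega)
  rw [← e, abs_le]
  have k1 := key 1 (by simp)
  have k2 := key (-1) (by simp)
  constructor <;> linarith

/-- lower bound `m_k(1,σ) ≥ (1-σ/σ_n)·T_{n-1}^{(k)}(1) + (σ/σ_n)·T_n^{(k)}(1)`. -/
theorem endpoint_lower_bound (n k : ℕ) (σ : ℝ) (hn : 2 ≤ n)
    (hk1 : 1 ≤ k) (hk2 : k ≤ n - 1) (hσ0 : 0 ≤ σ) (hσn : σ ≤ sigmaN n) :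
    mval n k 1 σ ≥
      (1 - σ / sigmaN n) * chebDeriv ((n:ℤ) - 1) k 1 + (σ / sigmaN n) * chebDeriv n k 1 := by
  have hS : 0 < sigmaN n := by unfold sigmaN; positivity
  have hs0 : 0 ≤ σ / sigmaN n := by positivity
  have hs1 : σ / sigmaN n ≤ 1 := (div_le_one hS).2 hσn
  have hsS : σ / sigmaN n * sigmaN n = σ := div_mul_cancel₀ _ hS.ne'
  set s := σ / sigmaN n with hs
  set p : ℝ[X] := C (1 - s) * Polynomial.Chebyshev.T ℝ ((n:ℤ) - 1)
    + C s * Polynomial.Chebyshev.T ℝ n with hp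
  have hpk : (1 - s) * chebDeriv ((n:ℤ) - 1) k 1 + s * chebDeriv n k 1
      = (derivative^[k] p).eval 1 := by
    rw [hp, iterate_map_add, iterate_derivative_C_mul, iterate_derivative_C_mul]
    simp [chebDeriv]
  have hpn : derivative^[n] p = C σ := by
    have hT : derivative^[n] (Polynomial.Chebyshev.T ℝ ((n:ℤ) - 1)) = 0 := by
      apply iterate_derivative_eq_zero
      rw [Polynomial.Chebyshev.natDegree_T]
      omega
    have hT2 : derivative^[n] (Polynomial.Chebyshev.T ℝ (n:ℤ)) = C (sigmaN n) := by
      have hdeg : (Polynomial.Chebyshev.T ℝ (n:ℤ)).natDegree = n := by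
        rw [Polynomial.Chebyshev.natDegree_T]; simp
      have hl := Polynomial.Chebyshev.leadingCoeff_T ℝ (n:ℤ)
      rw [leadingCoeff, hdeg, Int.natAbs_natCast] at hl
      rw [iterate_top _ n hdeg.le, hl, sigmaN, mul_comm]
    rw [hp, iterate_map_add, iterate_derivative_C_mul, iterate_derivative_C_mul, hT, hT2,
      mul_zero, zero_add, ← C_mul, hsS]
  rw [hpk, ge_iff_le]
  refine (le_abs_self _).trans (le_csSup ?_ ?_)
  · refine ⟨(1 + σ * 2 ^ n) *
      (derivative^[k] (Polynomial.Chebyshev.T ℝ ((n - 1 : ℕ) : ℤ))).eval 1, ?_⟩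
    rintro y ⟨f, hf, rfl⟩
    exact bdd n k σ (by omega) (by omega) hσ0 f hf
  · refine ⟨fun t => p.eval t, ⟨?_, ?_, ?_⟩, ?_⟩
    · intro i _
      exact (derivative^[i] p).differentiable.differentiableOn.congr (iterDW_poly p i)
    · intro x hx
      have h1 := Polynomial.Chebyshev.abs_eval_T_real_le_one ((n:ℤ) - 1) (abs_le.2 hx)
      have h2 := Polynomial.Chebyshev.abs_eval_T_real_le_one (n:ℤ) (abs_le.2 hx)
      simp only [hp, eval_add, eval_mul, eval_C]
      rw [abs_le] at *
      constructor <;> nlinarith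
    · intro x hx
      rw [iterDW_poly p n x hx, hpn, eval_C, abs_of_nonneg hσ0]
    · rw [iterDW_poly p k 1 (by simp)]
end

section
/- For every fixed x ∈ [-1,1] and 0 ≤ k ≤ n, the function σ ↦ m_k(x,σ) is concave on [0,∞): for all σ', σ'' ≥ 0 and t ∈ [0,1], m_k(x, (1−t)σ' + tσ'') ≥ (1−t)·m_k(x,σ') + t·m_k(x,σ''). -/
open Polynomial Set

/-- Linearity of iterated derivatives inside the class. -/
lemma iter_lin (n : ℕ) (f g : ℝ → ℝ) (hf : NTimesDiffOn n f (Icc (-1:ℝ) 1))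
    (hg : NTimesDiffOn n g (Icc (-1:ℝ) 1)) (a b : ℝ) :
    ∀ j ≤ n, ∀ x ∈ Icc (-1:ℝ) 1,
      iteratedDerivWithin j (fun y => a * f y + b * g y) (Icc (-1:ℝ) 1) x =
        a * iteratedDerivWithin j f (Icc (-1:ℝ) 1) x +
        b * iteratedDerivWithin j g (Icc (-1:ℝ) 1) x := by
  intro j
  induction j with
  | zero => intro _ x _; simp
  | succ j ih =>
    intro hj x hx
    have ih' := ih (by omega)
    rw [iteratedDerivWithin_succ, iteratedDerivWithin_succ, iteratedDerivWithin_succ,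
      derivWithin_congr (fun y hy => ih' y hy) (ih' x hx)]
    have h1 := (hf j (by omega) x hx).hasDerivWithinAt
    have h2 := (hg j (by omega) x hx).hasDerivWithinAt
    exact ((h1.const_mul a).add (h2.const_mul b)).derivWithin
      (uniqueDiffOn_Icc (by norm_num) x hx)

lemma iter_zero (j : ℕ) : ∀ x ∈ Icc (-1:ℝ) 1,
    iteratedDerivWithin j (fun _ => (0:ℝ)) (Icc (-1:ℝ) 1) x = 0 := by
  induction j with
  | zero => intro x _; simp
  | succ j ih =>
    intro x hx
    rw [iteratedDerivWithin_succ, derivWithin_congr (fun y hy => ih y hy) (ih x hx)]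
    simp

lemma memW_zero (n : ℕ) (σ : ℝ) (h : 0 ≤ σ) : memW n σ (fun _ => 0) := by
  refine ⟨fun i _ => ?_, fun x _ => by simp, fun x hx => by rw [iter_zero n x hx]; simpa⟩
  exact (differentiableOn_const (0:ℝ)).congr (fun x hx => iter_zero i x hx)

lemma memW_lin (n : ℕ) (f g : ℝ → ℝ) (σ' σ'' t a b : ℝ) (ht0 : 0 ≤ t) (ht1 : t ≤ 1)
    (ha : |a| = 1 - t) (hb : |b| = t) (hf : memW n σ' f) (hg : memW n σ'' g) :
    memW n ((1 - t) * σ' + t * σ'') (fun y => a * f y + b * g y) := by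
  have key : ∀ u v U V : ℝ, |u| ≤ U → |v| ≤ V → |a * u + b * v| ≤ (1 - t) * U + t * V := by
    intro u v U V hu hv
    calc |a * u + b * v| ≤ |a * u| + |b * v| := abs_add_le _ _
      _ = (1 - t) * |u| + t * |v| := by rw [abs_mul, abs_mul, ha, hb]
      _ ≤ _ := by
        have := mul_le_mul_of_nonneg_left hu (by linarith : 0 ≤ 1 - t)
        have := mul_le_mul_of_nonneg_left hv ht0
        linarith
  have L := iter_lin n f g hf.1 hg.1 a b
  refine ⟨fun i hi => ?_, fun x hx => ?_, fun x hx => ?_⟩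
  · exact (((hf.1 i hi).const_mul a).add ((hg.1 i hi).const_mul b)).congr
      (fun x hx => L i hi.le x hx)
  · have := key _ _ _ _ (hf.2.1 x hx) (hg.2.1 x hx)
    linarith
  · rw [L n le_rfl x hx]
    exact key _ _ _ _ (hf.2.2 x hx) (hg.2.2 x hx)

/-- In every subinterval some point has controlled `j`-th derivative. -/
lemma exists_small (n : ℕ) (σ : ℝ) : ∀ j ≤ n, ∀ a b : ℝ, -1 ≤ a → a < b → b ≤ 1 →
    ∃ C : ℝ, ∀ f, memW n σ f → ∃ ξ ∈ Icc a b,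
      |iteratedDerivWithin j f (Icc (-1:ℝ) 1) ξ| ≤ C := by
  intro j
  induction j with
  | zero =>
    intro _ a b ha hab hb
    refine ⟨1, fun f hf => ⟨a, ⟨le_rfl, hab.le⟩, ?_⟩⟩
    simpa using hf.2.1 a ⟨ha, by linarith⟩
  | succ j ih =>
    intro hj a b ha hab hb
    obtain ⟨C1, h1⟩ := ih (by omega) a (a + (b - a) / 3) ha (by linarith) (by linarith)
    obtain ⟨C2, h2⟩ := ih (by omega) (b - (b - a) / 3) b (by linarith) (by linarith) hb
    refine ⟨(C1 + C2) / ((b - a) / 3), fun f hf => ?_⟩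
    obtain ⟨u, ⟨hu1, hu2⟩, hu⟩ := h1 f hf
    obtain ⟨v, ⟨hv1, hv2⟩, hv⟩ := h2 f hf
    have huv : u < v := by linarith
    have hd := hf.1 j (by omega)
    have hsub : Icc u v ⊆ Icc (-1:ℝ) 1 := Icc_subset_Icc (by linarith) (by linarith)
    obtain ⟨c, hc, hce⟩ := exists_hasDerivAt_eq_slope
      (iteratedDerivWithin j f (Icc (-1:ℝ) 1))
      (iteratedDerivWithin (j+1) f (Icc (-1:ℝ) 1)) huv (hd.continuousOn.mono hsub) (by
        intro y hy
        rw [iteratedDerivWithin_succ]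
        exact (hd y (hsub (Ioo_subset_Icc_self hy))).hasDerivWithinAt.hasDerivAt
          (Icc_mem_nhds (by linarith [hy.1]) (by linarith [hy.2])))
    refine ⟨c, ⟨by linarith [hc.1], by linarith [hc.2]⟩, ?_⟩
    rw [hce, abs_div, abs_of_pos (by linarith : 0 < v - u)]
    have hn := abs_sub (iteratedDerivWithin j f (Icc (-1:ℝ) 1) v)
      (iteratedDerivWithin j f (Icc (-1:ℝ) 1) u)
    have hC : 0 ≤ C1 + C2 := by
      linarith [abs_nonneg (iteratedDerivWithin j f (Icc (-1:ℝ) 1) v),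
        abs_nonneg (iteratedDerivWithin j f (Icc (-1:ℝ) 1) u)]
    exact div_le_div₀ hC (by linarith) (by linarith) (by linarith)

lemma deriv_bdd (n : ℕ) (σ : ℝ) : ∀ d k : ℕ, k + d = n → ∃ C : ℝ, ∀ f, memW n σ f →
    ∀ x ∈ Icc (-1:ℝ) 1, |iteratedDerivWithin k f (Icc (-1:ℝ) 1) x| ≤ C := by
  intro d
  induction d with
  | zero =>
    intro k hk
    obtain rfl : k = n := by omega
    exact ⟨σ, fun f hf => hf.2.2⟩
  | succ d ih =>
    intro k hk
    obtain ⟨D, hD⟩ := ih (k+1) (by omega)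
    obtain ⟨C, hC⟩ := exists_small n σ k (by omega) (-1) 1 le_rfl (by norm_num) le_rfl
    refine ⟨C + D * 2, fun f hf x hx => ?_⟩
    obtain ⟨ξ, hξ, hξC⟩ := hC f hf
    have hD' := hD f hf
    have hm := (convex_Icc (-1:ℝ) 1).norm_image_sub_le_of_norm_derivWithin_le (C := D)
      (hf.1 k (by omega)) (fun y hy => by
        have := hD' y hy
        rwa [iteratedDerivWithin_succ] at this) hξ hx
    rw [Real.norm_eq_abs, Real.norm_eq_abs] at hm
    have hD0 : 0 ≤ D := (abs_nonneg _).trans (hD' x hx)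
    have hxx : |x - ξ| ≤ 2 := by
      rw [abs_le]; constructor <;> linarith [hx.1, hx.2, hξ.1, hξ.2]
    have h3 := mul_le_mul_of_nonneg_left hxx hD0
    have h4 := abs_sub_abs_le_abs_sub (iteratedDerivWithin k f (Icc (-1:ℝ) 1) x)
      (iteratedDerivWithin k f (Icc (-1:ℝ) 1) ξ)
    linarith

lemma mul_sSup_le_aux (A : Set ℝ) (hA : A.Nonempty) (c M : ℝ) (hc : 0 ≤ c)
    (h : ∀ a ∈ A, c * a ≤ M) : c * sSup A ≤ M := by
  rcases hc.eq_or_lt with rfl | hc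
  · obtain ⟨a, ha⟩ := hA
    simpa using h a ha
  · rw [mul_comm, ← le_div_iff₀ hc]
    exact csSup_le hA fun a ha => by rw [le_div_iff₀ hc, mul_comm]; exact h a ha

lemma exists_sign (c u : ℝ) (hc : 0 ≤ c) : ∃ a : ℝ, |a| = c ∧ a * u = c * |u| := by
  rcases abs_cases u with ⟨h, _⟩ | ⟨h, _⟩
  · exact ⟨c, abs_of_nonneg hc, by rw [h]⟩
  · exact ⟨-c, by rw [abs_neg, abs_of_nonneg hc], by rw [h]; ring⟩

/-- for fixed `x ∈ [-1,1]` and `0 ≤ k ≤ n`, the map `σ ↦ m_k(x,σ)`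
is concave on `[0,∞)`. -/
theorem mval_concave_in_sigma (n k : ℕ) (x : ℝ) (hk : k ≤ n) (hx : x ∈ Icc (-1:ℝ) 1)
    (σ' σ'' t : ℝ) (hσ' : 0 ≤ σ') (hσ'' : 0 ≤ σ'') (ht0 : 0 ≤ t) (ht1 : t ≤ 1) :
    (1 - t) * mval n k x σ' + t * mval n k x σ'' ≤
      mval n k x ((1 - t) * σ' + t * σ'') := by
  have ne : ∀ σ : ℝ, 0 ≤ σ → {y | ∃ f : ℝ → ℝ, memW n σ f ∧
      y = |iteratedDerivWithin k f (Icc (-1:ℝ) 1) x|}.Nonempty :=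
    fun σ h => ⟨_, _, memW_zero n σ h, rfl⟩
  have main : ∀ y ∈ {y | ∃ f : ℝ → ℝ, memW n σ' f ∧
      y = |iteratedDerivWithin k f (Icc (-1:ℝ) 1) x|},
      ∀ z ∈ {y | ∃ f : ℝ → ℝ, memW n σ'' f ∧
      y = |iteratedDerivWithin k f (Icc (-1:ℝ) 1) x|},
      (1 - t) * y + t * z ≤ mval n k x ((1 - t) * σ' + t * σ'') := by
    rintro _ ⟨f, hf, rfl⟩ _ ⟨g, hg, rfl⟩
    obtain ⟨a, ha, hau⟩ := exists_sign (1 - t)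
      (iteratedDerivWithin k f (Icc (-1:ℝ) 1) x) (by linarith)
    obtain ⟨b, hb, hbu⟩ := exists_sign t (iteratedDerivWithin k g (Icc (-1:ℝ) 1) x) ht0
    obtain ⟨C, hC⟩ := deriv_bdd n ((1 - t) * σ' + t * σ'') (n - k) k (by omega)
    refine le_csSup ⟨C, ?_⟩ ⟨_, memW_lin n f g σ' σ'' t a b ht0 ht1 ha hb hf hg, ?_⟩
    · rintro _ ⟨h, hh, rfl⟩
      exact hC h hh x hx
    · rw [iter_lin n f g hf.1 hg.1 a b k hk x hx, hau, hbu]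
      have : 0 ≤ 1 - t := by linarith
      exact (abs_of_nonneg (by positivity)).symm
  have step : ∀ z ∈ {y | ∃ f : ℝ → ℝ, memW n σ'' f ∧
      y = |iteratedDerivWithin k f (Icc (-1:ℝ) 1) x|},
      t * z ≤ mval n k x ((1 - t) * σ' + t * σ'') - (1 - t) * mval n k x σ' := by
    intro z hz
    have := mul_sSup_le_aux _ (ne σ' hσ') (1 - t)
      (mval n k x ((1 - t) * σ' + t * σ'') - t * z) (by linarith)
      (fun y hy => by linarith [main y hy z hz])
    change (1 - t) * mval n k x σ' ≤ _ at this
    linarith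
  have := mul_sSup_le_aux _ (ne σ'' hσ'') t _ ht0 step
  change t * mval n k x σ'' ≤ _ at this
  linarith
end

section
/- (Comparison lemma) Let n ≥ 2, 1 ≤ k ≤ n-1, σ ≥ 0 and x₀ ∈ [-1,1]. Let p be a real polynomial of degree at most n such that: (1) p^{(k+1)}(x₀) = 0; (2) p has an n-alternance on [-1,1], i.e. there exist points -1 ≤ τ₁ < τ₂ < ⋯ < τ_n ≤ 1 with (−1)^{n−i}·p(τ_i) = 1 = sup_{x∈[-1,1]}|p(x)| for i = 1,…,n; (3) sup_{x∈[-1,1]}|p^{(n)}(x)| ≥ σ. Then every function f : ℝ → ℝ that is n times differentiable on [-1,1] and satisfies f^{(k+1)}(x₀) = 0, |f(x)| ≤ 1 on [-1,1], and |f^{(n)}(x)| ≤ σ on [-1,1], obeys |f^{(k)}(x₀)| ≤ |p^{(k)}(x₀)|. -/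
open Polynomial Set

/-- Mean value theorem on `[-1,1]` with one-sided derivatives. -/
lemma mvt_aux (u u' : ℝ → ℝ)
    (hu : ∀ x ∈ Icc (-1:ℝ) 1, HasDerivWithinAt u (u' x) (Icc (-1:ℝ) 1) x)
    {a b : ℝ} (ha : a ∈ Icc (-1:ℝ) 1) (hb : b ∈ Icc (-1:ℝ) 1) (hab : a < b) :
    ∃ c, a < c ∧ c < b ∧ c ∈ Icc (-1:ℝ) 1 ∧ u b - u a = u' c * (b - a) := by
  have hsub : Icc a b ⊆ Icc (-1:ℝ) 1 := Icc_subset_Icc ha.1 hb.2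
  obtain ⟨c, hc, h⟩ := exists_hasDerivAt_eq_slope u u' hab
    (fun x hx => ((hu x (hsub hx)).continuousWithinAt).mono hsub)
    (fun x hx => (hu x (hsub (Ioo_subset_Icc_self hx))).hasDerivAt
      (Icc_mem_nhds (lt_of_le_of_lt ha.1 hx.1) (lt_of_lt_of_le hx.2 hb.2)))
  refine ⟨c, hc.1, hc.2, hsub (Ioo_subset_Icc_self hc), ?_⟩
  rw [h, div_mul_cancel₀]
  exact (sub_pos.2 hab).ne'

lemma step_aux (u u' : ℝ → ℝ)
    (hu : ∀ x ∈ Icc (-1:ℝ) 1, HasDerivWithinAt u (u' x) (Icc (-1:ℝ) 1) x)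
    (m : ℕ) (t ε : ℕ → ℝ) (ht : ∀ i ≤ m, t i ∈ Icc (-1:ℝ) 1)
    (hlt : ∀ i < m, t i < t (i+1))
    (hs : ∀ i < m, 0 < ε i * (u (t (i+1)) - u (t i))) :
    ∃ w : ℕ → ℝ, ∀ i < m, t i < w i ∧ w i < t (i+1) ∧ w i ∈ Icc (-1:ℝ) 1 ∧
      0 < ε i * u' (w i) := by
  have : ∀ i, ∃ c, i < m → t i < c ∧ c < t (i+1) ∧ c ∈ Icc (-1:ℝ) 1 ∧ 0 < ε i * u' c := by
    intro i
    by_cases hi : i < m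
    · obtain ⟨c, h1, h2, h3, h4⟩ := mvt_aux u u' hu (ht i hi.le) (ht (i+1) hi) (hlt i hi)
      refine ⟨c, fun _ => ⟨h1, h2, h3, ?_⟩⟩
      have h5 := hs i hi
      rw [h4, ← mul_assoc] at h5
      exact pos_of_mul_pos_left h5 (sub_pos.2 (hlt i hi)).le
    · exact ⟨0, fun h => absurd h hi⟩
  choose w hw using this
  exact ⟨w, hw⟩

/-- `u` has `m` points of strict sign alternation in `[-1,1]`. -/
def AltPts (u : ℝ → ℝ) (m : ℕ) : Prop :=
  ∃ (t : ℕ → ℝ) (ε : ℕ → ℝ), (∀ i < m, t i ∈ Icc (-1:ℝ) 1) ∧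
    (∀ i, i + 1 < m → t i < t (i+1)) ∧ (∀ i, ε (i+1) = - ε i) ∧
    ∀ i < m, 0 < ε i * u (t i)

lemma AltPts.step (u u' : ℝ → ℝ)
    (hu : ∀ x ∈ Icc (-1:ℝ) 1, HasDerivWithinAt u (u' x) (Icc (-1:ℝ) 1) x)
    (m : ℕ) (h : AltPts u (m+1)) : AltPts u' m := by
  obtain ⟨t, ε, h1, h2, h3, h4⟩ := h
  obtain ⟨w, hw⟩ := step_aux u u' hu m t (fun i => ε (i+1)) (fun i hi => h1 i (by omega))
    (fun i hi => h2 i (by omega)) (fun i hi => by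
      have a := h4 i (by omega)
      have b := h4 (i+1) (by omega)
      have c := h3 i
      simp only [c] at b ⊢
      linarith)
  refine ⟨w, fun i => ε (i+1), fun i hi => (hw i hi).2.2.1, fun i hi => ?_, fun i => h3 _,
    fun i hi => (hw i hi).2.2.2⟩
  exact (hw i (by omega)).2.1.trans (hw (i+1) hi).1

lemma AltPts.iter (G : ℕ → ℝ → ℝ) (n : ℕ)
    (hG : ∀ j < n, ∀ x ∈ Icc (-1:ℝ) 1,
      HasDerivWithinAt (G j) (G (j+1) x) (Icc (-1:ℝ) 1) x)
    (a m d : ℕ) (hd : a + d ≤ n) (h : AltPts (G a) (m + d)) : AltPts (G (a + d)) m := by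
  induction d generalizing m with
  | zero => exact h
  | succ d ih =>
    have := ih (m+1) (by omega) (by convert h using 1; omega)
    exact AltPts.step _ _ (hG (a+d) (by omega)) m this

/-- Insert a zero `x₀` of `u` and pass to the derivative. -/
lemma ins_step (u u' : ℝ → ℝ)
    (hu : ∀ x ∈ Icc (-1:ℝ) 1, HasDerivWithinAt u (u' x) (Icc (-1:ℝ) 1) x)
    (x₀ : ℝ) (hx₀ : x₀ ∈ Icc (-1:ℝ) 1) (h0 : u x₀ = 0)
    (m i : ℕ) (t ε : ℕ → ℝ) (ht : ∀ j < m, t j ∈ Icc (-1:ℝ) 1)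
    (hlt : ∀ j, j + 1 < m → t j < t (j+1))
    (hl : ∀ j < m, j < i → t j < x₀) (hr : ∀ j < m, i ≤ j → x₀ < t j)
    (hi : i ≤ m)
    (hε : ∀ j, j + 1 ≠ i → ε (j+1) = - ε j)
    (hs : ∀ j < m, 0 < ε j * u (t j)) :
    ∃ w : ℕ → ℝ, (∀ j < m, w j ∈ Icc (-1:ℝ) 1) ∧
      (∀ j, j + 1 < m → w j < w (j+1)) ∧
      (∀ j < m, j < i → w j < x₀) ∧ (∀ j < m, i ≤ j → x₀ < w j) ∧
      (∀ j < m, 0 < (if j < i then - ε j else ε j) * u' (w j)) := by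
  set T : ℕ → ℝ := fun j => if j < i then t j else if j = i then x₀ else t (j-1) with hT
  have T1 : ∀ j, j < i → T j = t j := fun j hj => by simp [hT, hj]
  have T2 : T i = x₀ := by simp [hT]
  have T3 : ∀ j, i ≤ j → T (j+1) = t j := fun j hj => by
    have a : ¬ (j + 1 < i) := by omega
    have b : ¬ (j + 1 = i) := by omega
    simp [hT, a, b]
  have hTs : ∀ j < m, T j < T (j+1) ∧
      0 < (if j < i then - ε j else ε j) * (u (T (j+1)) - u (T j)) := by
    intro j hj
    have hsj := hs j hj
    rcases lt_trichotomy (j+1) i with h | h | h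
    · rw [T1 j (by omega), T1 (j+1) h, if_pos (by omega)]
      have e := hε j (by omega)
      have := hs (j+1) (by omega)
      rw [e] at this
      exact ⟨hlt j (by omega), by linarith⟩
    · have e1 : T (j+1) = x₀ := by rw [h, T2]
      rw [T1 j (by omega), e1, if_pos (by omega), h0]
      exact ⟨hl j hj (by omega), by linarith⟩
    · rw [T3 j (by omega), if_neg (by omega)]
      rcases Nat.eq_or_lt_of_le (Nat.lt_succ_iff.1 h) with h' | h'
      · rw [← h', T2, h0]
        subst h'
        exact ⟨hr _ hj le_rfl, by linarith⟩
      · obtain ⟨l, rfl⟩ : ∃ l, j = l + 1 := ⟨j - 1, by omega⟩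
        rw [T3 l (by omega)]
        have e := hε l (by omega)
        have := hs l (by omega)
        have e' : ε (l+1) * (u (t (l+1)) - u (t l)) = ε (l+1) * u (t (l+1)) + ε l * u (t l) := by
          rw [e]; ring
        rw [e']
        exact ⟨hlt l hj, by linarith⟩
  have hTm : ∀ j ≤ m, T j ∈ Icc (-1:ℝ) 1 := by
    intro j hj
    rcases lt_trichotomy j i with h | h | h
    · rw [T1 j h]; exact ht j (by omega)
    · rw [h, T2]; exact hx₀
    · obtain ⟨l, rfl⟩ : ∃ l, j = l + 1 := ⟨j - 1, by omega⟩
      rw [T3 l (by omega)]; exact ht l (by omega)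
  obtain ⟨w, hw⟩ := step_aux u u' hu m T (fun j => if j < i then - ε j else ε j) hTm
    (fun j hj => (hTs j hj).1) (fun j hj => (hTs j hj).2)
  refine ⟨w, fun j hj => (hw j hj).2.2.1, fun j hj =>
    (hw j (by omega)).2.1.trans (hw (j+1) hj).1, fun j hj hji => ?_, fun j hj hji => ?_,
    fun j hj => (hw j hj).2.2.2⟩
  · refine (hw j hj).2.1.trans_le ?_
    rcases Nat.eq_or_lt_of_le (Nat.succ_le_iff.2 hji) with h | h
    · have : T (j+1) = x₀ := by rw [← T2, ← h]
      exact this.le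
    · rw [T1 _ h]; exact (hl _ (by omega) h).le
  · refine lt_of_le_of_lt ?_ (hw j hj).1
    rcases Nat.eq_or_lt_of_le hji with h | h
    · rw [← h, T2]
    · obtain ⟨l, rfl⟩ : ∃ l, j = l + 1 := ⟨j - 1, by omega⟩
      rw [T3 l (by omega)]; exact (hr l (by omega) (by omega)).le

lemma AltPts.double (u u' u'' : ℝ → ℝ)
    (hu : ∀ x ∈ Icc (-1:ℝ) 1, HasDerivWithinAt u (u' x) (Icc (-1:ℝ) 1) x)
    (hu' : ∀ x ∈ Icc (-1:ℝ) 1, HasDerivWithinAt u' (u'' x) (Icc (-1:ℝ) 1) x)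
    (x₀ : ℝ) (hx₀ : x₀ ∈ Icc (-1:ℝ) 1) (h0 : u x₀ = 0) (h0' : u' x₀ = 0)
    (m : ℕ) (h : AltPts u m) : AltPts u'' m := by
  classical
  obtain ⟨t, ε, h1, h2, h3, h4⟩ := h
  have hex : ∃ j, m ≤ j ∨ x₀ < t j := ⟨m, Or.inl le_rfl⟩
  obtain ⟨i, hi⟩ : ∃ i, i = Nat.find hex := ⟨_, rfl⟩
  have him : i ≤ m := hi ▸ Nat.find_min' hex (Or.inl le_rfl)
  have hl : ∀ j < m, j < i → t j < x₀ := by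
    intro j hj hji
    have := Nat.find_min hex (hi ▸ hji)
    push Not at this
    refine lt_of_le_of_ne this.2 fun e => ?_
    have := h4 j hj
    rw [e, h0] at this
    simp at this
  have hr : ∀ j < m, i ≤ j → x₀ < t j := by
    intro j hj hij
    induction j, hij using Nat.le_induction with
    | base =>
      have := Nat.find_spec hex
      rw [← hi] at this
      rcases this with h | h
      · omega
      · exact h
    | succ j hij ih => exact (ih (by omega)).trans (h2 j hj)
  obtain ⟨w, w1, w2, w3, w4, w5⟩ := ins_step u u' hu x₀ hx₀ h0 m i t ε h1 h2 hl hr him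
    (fun j _ => h3 j) h4
  obtain ⟨v, v1, v2, v3, v4, v5⟩ := ins_step u' u'' hu' x₀ hx₀ h0' m i w
    (fun j => if j < i then - ε j else ε j) w1 w2 w3 w4 him
    (fun j hj => by
      have := h3 j
      by_cases h : j < i
      · have h' : j + 1 < i := by omega
        simp [h, h', this]
      · have h' : ¬ j + 1 < i := by omega
        simp [h, h', this]) w5
  refine ⟨v, ε, v1, v2, h3, fun j hj => ?_⟩
  have := v5 j hj
  by_cases h : j < i
  · simpa [h] using this
  · simpa [h] using this

/-- the comparison lemma. -/
theorem comparison_lemma (n k : ℕ) (σ x₀ : ℝ) (hn : 2 ≤ n) (hk1 : 1 ≤ k)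
    (hk2 : k ≤ n - 1) (hσ : 0 ≤ σ) (hx₀ : x₀ ∈ Icc (-1:ℝ) 1)
    (p : Polynomial ℝ) (hdeg : p.natDegree ≤ n)
    (hp1 : (derivative^[k+1] p).eval x₀ = 0)
    (hpbd : ∀ x ∈ Icc (-1:ℝ) 1, |p.eval x| ≤ 1)
    (hp2 : ∃ τ : Fin n → ℝ, StrictMono τ ∧ (∀ i, τ i ∈ Icc (-1:ℝ) 1) ∧
      ∀ i : Fin n, (-1:ℝ) ^ (n - 1 - (i:ℕ)) * p.eval (τ i) = 1)
    (hp3 : σ ≤ sSup {y | ∃ x ∈ Icc (-1:ℝ) 1, y = |(derivative^[n] p).eval x|})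
    (f : ℝ → ℝ) (hf : NTimesDiffOn n f (Icc (-1:ℝ) 1))
    (hf1 : iteratedDerivWithin (k+1) f (Icc (-1:ℝ) 1) x₀ = 0)
    (hf2 : ∀ x ∈ Icc (-1:ℝ) 1, |f x| ≤ 1)
    (hf3 : ∀ x ∈ Icc (-1:ℝ) 1, |iteratedDerivWithin n f (Icc (-1:ℝ) 1) x| ≤ σ) :
    |iteratedDerivWithin k f (Icc (-1:ℝ) 1) x₀| ≤ |(derivative^[k] p).eval x₀| := by
  by_contra hcon
  push Not at hcon
  obtain ⟨τ, hτm, hτs, hτ⟩ := hp2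
  set s := Icc (-1:ℝ) 1 with hs
  set F := iteratedDerivWithin k f s x₀ with hF
  have hFpos : 0 < |F| := lt_of_le_of_lt (abs_nonneg _) hcon
  obtain ⟨γ, hγ⟩ : ∃ γ, γ = (derivative^[k] p).eval x₀ / F := ⟨_, rfl⟩
  have hγ1 : |γ| < 1 := by
    rw [hγ, abs_div, div_lt_one hFpos]; exact hcon
  have hγF : γ * F = (derivative^[k] p).eval x₀ := by
    rw [hγ, div_mul_cancel₀]
    exact abs_pos.1 hFpos
  obtain ⟨G, hGdef⟩ : ∃ G : ℕ → ℝ → ℝ, ∀ j x, G j x =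
    (derivative^[j] p).eval x - γ * iteratedDerivWithin j f s x := ⟨_, fun _ _ => rfl⟩
  have hG : ∀ j < n, ∀ x ∈ s, HasDerivWithinAt (G j) (G (j+1) x) s x := by
    intro j hj x hx
    have e : G j = fun x => (derivative^[j] p).eval x - γ * iteratedDerivWithin j f s x :=
      funext fun x => hGdef j x
    rw [e, hGdef, Function.iterate_succ_apply', iteratedDerivWithin_succ]
    exact ((derivative^[j] p).hasDerivWithinAt x s).sub
      ((hf j hj x hx).hasDerivWithinAt.const_mul γ)
  have hGk : G k x₀ = 0 := by rw [hGdef, ← hγF]; simp [hF]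
  have hGk1 : G (k+1) x₀ = 0 := by rw [hGdef, hp1, hf1]; simp
  have halt : AltPts (G 0) n := by
    refine ⟨fun i => if h : i < n then τ ⟨i, h⟩ else 0, fun i => (-1)^(n-1) * (-1)^i, ?_, ?_, ?_, ?_⟩
    · intro i hi
      simp only [hi, dif_pos]; exact hτs _
    · intro i hi
      have hi' : i < n := by omega
      simp only [hi, hi', dif_pos]
      exact hτm (by simp [Fin.lt_def])
    · intro i; ring
    · intro i hi
      simp only [hi, dif_pos]
      have h1 := hτ ⟨i, hi⟩
      have e : ((-1:ℝ))^(n-1) * (-1)^i = (-1)^(n-1-i) := by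
        obtain ⟨d, hd⟩ : ∃ d, n - 1 = d + i := ⟨n-1-i, by omega⟩
        rw [hd, Nat.add_sub_cancel, pow_add, mul_assoc, ← mul_pow]; simp
      have h2 := hf2 _ (hτs ⟨i, hi⟩)
      rw [e, hGdef]
      simp only [Function.iterate_zero, id_eq, iteratedDerivWithin_zero]
      simp only at h1
      rw [mul_sub, h1]
      have h3 : |(-1:ℝ)^(n-1-i) * (γ * f (τ ⟨i, hi⟩))| < 1 := by
        rw [abs_mul, abs_mul]
        simp only [abs_pow, abs_neg, abs_one, one_pow, one_mul]
        calc |γ| * |f (τ ⟨i, hi⟩)| ≤ |γ| * 1 := by gcongr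
          _ < 1 := by linarith
      have := (abs_lt.1 h3).2
      linarith
  obtain ⟨c, hc⟩ : ∃ c, ∀ x, (derivative^[n] p).eval x = c := by
    have : (derivative^[n] p).natDegree ≤ 0 := by
      refine (natDegree_iterate_derivative p n).trans ?_
      omega
    rw [eq_C_of_natDegree_le_zero this]
    exact ⟨_, fun x => eval_C⟩
  have hσc : σ ≤ |c| := by
    refine hp3.trans (csSup_le ⟨_, x₀, hx₀, rfl⟩ ?_)
    rintro y ⟨x, _, rfl⟩
    rw [hc]
  have hGn : ∀ x ∈ s, |c - G n x| ≤ |c| := by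
    intro x hx
    rw [hGdef, hc, sub_sub_cancel, abs_mul]
    calc |γ| * |iteratedDerivWithin n f s x| ≤ 1 * σ := by
          gcongr
          exact hf3 x hx
      _ ≤ |c| := by linarith
  rcases Nat.lt_or_ge (k+1) n with hkn | hkn
  · have a1 : AltPts (G (0+k)) (n-k) :=
      AltPts.iter G n hG 0 (n-k) k (by omega) (by convert halt using 1; omega)
    rw [zero_add] at a1
    have a2 := AltPts.double (G k) (G (k+1)) (G (k+2)) (hG k (by omega)) (hG (k+1) hkn)
      x₀ hx₀ hGk hGk1 _ a1
    have a3 := AltPts.iter G n hG (k+2) 2 (n-k-2) (by omega) (by convert a2 using 1; omega)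
    have e : k + 2 + (n - k - 2) = n := by omega
    rw [e] at a3
    obtain ⟨t, ε, t1, _, t3, t4⟩ := a3
    have b0 := t4 0 (by omega)
    have b1 := t4 1 (by omega)
    have c0 := hGn _ (t1 0 (by omega))
    have c1 := hGn _ (t1 1 (by omega))
    have e1 := t3 0
    rw [zero_add] at e1
    rw [e1] at b1
    generalize G n (t 0) = y at *
    generalize G n (t 1) = z at *
    generalize ε 0 = η at *
    have hyz : y * z < 0 := by
      have hm := mul_pos b0 b1
      have : η ^ 2 * (y * z) < 0 := by nlinarith
      by_contra hcc
      push Not at hcc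
      nlinarith [mul_nonneg (sq_nonneg η) hcc]
    rw [abs_le] at c0 c1
    rcases le_total 0 c with h | h
    · rw [abs_of_nonneg h] at c0 c1
      nlinarith [mul_nonneg (show 0 ≤ y by linarith) (show 0 ≤ z by linarith)]
    · rw [abs_of_nonpos h] at c0 c1
      nlinarith [mul_nonneg (show 0 ≤ -y by linarith) (show 0 ≤ -z by linarith)]
  · have hkn' : n = k + 1 := by omega
    subst hkn'
    have a1 : AltPts (G (0+k)) 1 :=
      AltPts.iter G (k+1) hG 0 1 k (by omega) (by convert halt using 1; omega)
    rw [zero_add] at a1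
    have hc0 : c = 0 := by rw [← hc x₀]; exact hp1
    have hG0 : ∀ x ∈ s, G (k+1) x = 0 := by
      intro x hx
      have := hGn x hx
      rw [hc0] at this
      simpa using this
    obtain ⟨t, ε, t1, _, _, t4⟩ := a1
    have b0 := t4 0 (by omega)
    have hne : G k (t 0) ≠ 0 := by
      intro h; rw [h] at b0; simp at b0
    have hm := t1 0 (by omega)
    rcases lt_trichotomy (t 0) x₀ with h | h | h
    · obtain ⟨d, _, _, d3, d4⟩ := mvt_aux _ _ (hG k (by omega)) hm hx₀ h
      rw [hG0 d d3, hGk] at d4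
      exact hne (by linarith)
    · exact hne (h ▸ hGk)
    · obtain ⟨d, _, _, d3, d4⟩ := mvt_aux _ _ (hG k (by omega)) hx₀ hm h
      rw [hG0 d d3, hGk] at d4
      exact hne (by linarith)
end

section
/- Let n ≥ 10 and let ω₂ be the largest zero of the third derivative T_n''' of the Chebyshev polynomial T_n. Then |T_n''(ω₂)| ≤ (8/55)·T_n''(1). -/
open Polynomial Set

/-- Auxiliary function: `sin^3 t` times the second derivative at `cos t`, over `n`. -/
noncomputable def auxA (n : ℝ) (t : ℝ) : ℝ :=
  Real.cos t * Real.sin (n * t) - n * Real.sin t * Real.cos (n * t)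

/-- Auxiliary function: `sin^5 t` times the third derivative at `cos t`, over `n`. -/
noncomputable def auxB (n : ℝ) (t : ℝ) : ℝ :=
  3 * Real.cos t * auxA n t - (n ^ 2 - 1) * Real.sin t ^ 2 * Real.sin (n * t)

lemma hasDerivAt_auxA (n t : ℝ) :
    HasDerivAt (auxA n) ((n ^ 2 - 1) * Real.sin t * Real.sin (n * t)) t := by
  have h1 : HasDerivAt (fun t : ℝ => n * t) n t := by
    simpa using (hasDerivAt_id t).const_mul n
  have h := ((Real.hasDerivAt_cos t).mul h1.sin).sub
    (((Real.hasDerivAt_sin t).const_mul n).mul h1.cos)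
  refine h.congr_deriv ?_
  ring

lemma hasDerivAt_auxB (n t : ℝ) :
    HasDerivAt (auxB n) ((n ^ 2 - 4) * Real.sin t * auxA n t) t := by
  have h1 : HasDerivAt (fun t : ℝ => n * t) n t := by
    simpa using (hasDerivAt_id t).const_mul n
  have h := (((Real.hasDerivAt_cos t).const_mul 3).mul (hasDerivAt_auxA n t)).sub
    ((((Real.hasDerivAt_sin t).pow 2).const_mul (n ^ 2 - 1)).mul h1.sin)
  refine h.congr_deriv ?_
  simp only [auxA]
  norm_num
  ring

lemma auxA_pos (n t : ℝ) (hn : 10 ≤ n) (h0 : 0 < t) (h1 : n * t ≤ Real.pi) : 0 < auxA n t := by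
  have hm : StrictMonoOn (auxA n) (Icc 0 t) := by
    apply strictMonoOn_of_deriv_pos (convex_Icc 0 t)
    · exact fun x _ => (hasDerivAt_auxA n x).continuousAt.continuousWithinAt
    · intro x hx
      rw [interior_Icc] at hx
      rw [(hasDerivAt_auxA n x).deriv]
      have hx0 := hx.1
      have h3 : n * x < Real.pi := by nlinarith [hx.2]
      have h4 : 0 < Real.sin x := Real.sin_pos_of_pos_of_lt_pi hx0 (by nlinarith)
      have h5 : 0 < Real.sin (n * x) := Real.sin_pos_of_pos_of_lt_pi (by positivity) h3
      have h6 : 0 < n ^ 2 - 1 := by nlinarith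
      positivity
  have := hm (left_mem_Icc.2 h0.le) (right_mem_Icc.2 h0.le) h0
  simpa [auxA] using this

lemma auxB_pos (n t : ℝ) (hn : 10 ≤ n) (h0 : 0 < t) (h1 : n * t ≤ Real.pi) : 0 < auxB n t := by
  have hm : StrictMonoOn (auxB n) (Icc 0 t) := by
    apply strictMonoOn_of_deriv_pos (convex_Icc 0 t)
    · exact fun x _ => (hasDerivAt_auxB n x).continuousAt.continuousWithinAt
    · intro x hx
      rw [interior_Icc] at hx
      rw [(hasDerivAt_auxB n x).deriv]
      have hx0 := hx.1
      have h3 : n * x < Real.pi := by nlinarith [hx.2]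
      have h4 : 0 < Real.sin x := Real.sin_pos_of_pos_of_lt_pi hx0 (by nlinarith)
      have h5 : 0 < auxA n x := auxA_pos n x hn hx0 h3.le
      have h6 : 0 < n ^ 2 - 4 := by nlinarith
      positivity
  have := hm (left_mem_Icc.2 h0.le) (right_mem_Icc.2 h0.le) h0
  simpa [auxB, auxA] using this

set_option maxHeartbeats 1000000 in
lemma key_bound (n t : ℝ) (hn : 10 ≤ n) (h0 : 0 < t) (h1 : t ≤ Real.pi / 2)
    (hB : auxB n t = 0) : 189 / 8 ≤ (n ^ 2 + 2) * Real.sin t ^ 2 := by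
  by_contra! hlt
  have hpi := Real.pi_gt_d2
  have hpi' := Real.pi_lt_d2
  have hs2 := Real.sin_sq_add_cos_sq t
  have hc0 : 0 ≤ Real.cos t := Real.cos_nonneg_of_mem_Icc ⟨by linarith, h1⟩
  have hs0 : 0 < Real.sin t := Real.sin_pos_of_pos_of_lt_pi h0 (by linarith)
  have hc : 0 < Real.cos t := by
    rcases hc0.lt_or_eq with h | h
    · exact h
    · rw [← h] at hs2
      have : Real.sin t ^ 2 = 1 := by linarith
      rw [this] at hlt
      nlinarith
  have hjordan : 2 / Real.pi * t ≤ Real.sin t := Real.mul_le_sin h0.le h1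
  have hjordan' : 2 * (n * t) ≤ Real.pi * (n * Real.sin t) := by
    have : 2 * t ≤ Real.pi * Real.sin t := by
      have h := mul_le_mul_of_nonneg_left hjordan Real.pi_pos.le
      have e : Real.pi * (2 / Real.pi * t) = 2 * t := by field_simp
      linarith
    nlinarith
  have hBe : ((n ^ 2 + 2) * Real.sin t ^ 2 - 3) * Real.sin (n * t)
      + 3 * (n * Real.sin t) * Real.cos t * Real.cos (n * t) = 0 := by
    have : auxB n t = -(((n ^ 2 + 2) * Real.sin t ^ 2 - 3) * Real.sin (n * t)
      + 3 * (n * Real.sin t) * Real.cos t * Real.cos (n * t)) := by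
      simp only [auxB, auxA]
      linear_combination (3 * Real.sin (n * t)) * hs2
    linarith
  rcases le_total (n * t) Real.pi with hp | hp
  · exact (auxB_pos n t hn h0 hp).ne' hB
  have hm2 : 2 ≤ n * Real.sin t := by
    by_contra! h
    nlinarith
  have hK : 0 < (n ^ 2 + 2) * Real.sin t ^ 2 - 3 := by nlinarith
  set d := n * t - 3 * Real.pi / 2 with hd
  have hsin : Real.sin (n * t) = - Real.cos d := by
    have : n * t = d + Real.pi / 2 + Real.pi := by rw [hd]; ring
    rw [this, Real.sin_add_pi, Real.sin_add_pi_div_two]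
  have hcos : Real.cos (n * t) = Real.sin d := by
    have : n * t = d + Real.pi / 2 + Real.pi := by rw [hd]; ring
    rw [this, Real.cos_add_pi, Real.cos_add_pi_div_two, neg_neg]
  rw [hsin, hcos] at hBe
  have hP : 0 < 3 * (n * Real.sin t) * Real.cos t := by positivity
  rcases le_total d 0 with hd0 | hd0
  · have hcd : 0 ≤ Real.cos d := Real.cos_nonneg_of_mem_Icc ⟨by linarith, by linarith⟩
    have hsd : Real.sin d ≤ 0 := Real.sin_nonpos_of_nonpos_of_neg_pi_le hd0 (by linarith)
    have a1 := mul_nonneg hK.le hcd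
    have a2 := mul_nonpos_of_nonneg_of_nonpos hP.le hsd
    have e1 : ((n ^ 2 + 2) * Real.sin t ^ 2 - 3) * Real.cos d = 0 := by linarith
    have e2 : 3 * (n * Real.sin t) * Real.cos t * Real.sin d = 0 := by linarith
    have e3 := (mul_eq_zero.1 e1).resolve_left hK.ne'
    have e4 := (mul_eq_zero.1 e2).resolve_left hP.ne'
    have := Real.sin_sq_add_cos_sq d
    rw [e3, e4] at this
    norm_num at this
  have hm3 : 3 ≤ n * Real.sin t := by
    by_contra! h
    nlinarith
  rcases le_total (n * t) 5.1 with h5 | h5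
  · have hd4 : d ≤ 0.4 := by linarith
    have hsd : Real.sin d ≤ 0.4 := (Real.sin_le hd0).trans hd4
    have hcd : 0.92 ≤ Real.cos d := by
      have := Real.one_sub_sq_div_two_le_cos (x := d)
      nlinarith
    have hc1 : Real.cos t ≤ 1 := Real.cos_le_one t
    have b0 : Real.cos t * Real.sin d ≤ 0.4 := by
      calc Real.cos t * Real.sin d ≤ 1 * 0.4 :=
            mul_le_mul hc1 hsd (Real.sin_nonneg_of_nonneg_of_le_pi hd0 (by linarith)) zero_le_one
        _ = 0.4 := one_mul _
    have b1 := mul_le_mul_of_nonneg_left b0 (show 0 ≤ 3 * (n * Real.sin t) by positivity)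
    have b2 := mul_le_mul_of_nonneg_left hcd hK.le
    have b3 : (n * Real.sin t) * 3 ≤ (n * Real.sin t) ^ 2 := by
      rw [sq]
      exact mul_le_mul_of_nonneg_left hm3 (by linarith)
    have b4 := sq_nonneg (Real.sin t)
    linarith
  · have hn0 : 0 < n := by linarith
    have ht : 5.1 / n ≤ t := by rw [div_le_iff₀ hn0]; linarith
    have hu : 0 < 5.1 / n := by positivity
    have hu1 : 5.1 / n ≤ 0.51 := by rw [div_le_iff₀ hn0]; linarith
    have hmono : Real.sin (5.1 / n) ≤ Real.sin t :=
      Real.sin_le_sin_of_le_of_le_pi_div_two (by linarith) h1 ht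
    have hcub := Real.sin_ge_sub_cube hu.le
    set u := 5.1 / n with hudef
    have hnu : n * u = 5.1 := by rw [hudef]; field_simp
    have hsu : u * (1 - 0.51 ^ 2 / 6) ≤ Real.sin t := by
      have hu2 : u * u ^ 2 ≤ u * 0.51 ^ 2 :=
        mul_le_mul_of_nonneg_left (pow_le_pow_left₀ hu.le hu1 2) hu.le
      linarith
    have hns : 5.1 * (1 - 0.51 ^ 2 / 6) ≤ n * Real.sin t := by
      calc 5.1 * (1 - 0.51 ^ 2 / 6) = n * (u * (1 - 0.51 ^ 2 / 6)) := by rw [← hnu]; ring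
        _ ≤ _ := by gcongr
    have : (5.1 * (1 - 0.51 ^ 2 / 6)) ^ 2 ≤ (n * Real.sin t) ^ 2 := by
      apply pow_le_pow_left₀ _ hns
      norm_num
    have b4 := sq_nonneg (Real.sin t)
    rw [mul_pow] at this
    norm_num at this
    linarith

lemma cheb_ge (n k : ℕ) (x : ℝ) (hx : 1 ≤ x) : chebDeriv n k 1 ≤ chebDeriv n k x := by
  have h := Polynomial.Chebyshev.T_iterate_derivative_mem_span_T (R := ℝ) n k
  unfold chebDeriv
  refine Submodule.span_induction
    (p := fun (P : ℝ[X]) _ => P.eval 1 ≤ P.eval x) ?_ ?_ ?_ ?_ h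
  · rintro _ ⟨m, _, rfl⟩
    simpa using Polynomial.Chebyshev.one_le_eval_T_real m hx
  · simp
  · intro P Q _ _ hP hQ
    simpa using add_le_add hP hQ
  · intro a P _ hP
    simp only [nsmul_eq_mul, eval_mul, eval_natCast]
    gcongr

lemma cheb_neg (n : ℕ) (x : ℝ) (hx : chebDeriv n 3 x = 0) : chebDeriv n 3 (-x) = 0 := by
  unfold chebDeriv at *
  have h : (Polynomial.Chebyshev.T ℝ n).comp (-X) =
      C ((-1 : ℝ) ^ n) * Polynomial.Chebyshev.T ℝ n := by
    apply Polynomial.funext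
    intro y
    simp [Polynomial.Chebyshev.T_eval_neg]
  have h2 := congrArg (fun P => (derivative^[3] P).eval x) h
  rw [iterate_derivative_C_mul] at h2
  simp only [eval_mul, hx, mul_zero] at h2
  simpa [derivative_comp] using h2

/-- `|T_n''(ω₂)| ≤ (8/55)·T_n''(1)` for `n ≥ 10`, where `ω₂` is the
largest zero of `T_n'''`. -/
theorem cheb_second_deriv_at_last_critical_point (n : ℕ) (hn : 10 ≤ n) (ω₂ : ℝ)
    (hω : IsGreatest {x : ℝ | chebDeriv n 3 x = 0} ω₂) :
    |chebDeriv n 2 ω₂| ≤ (8 / 55) * chebDeriv n 2 1 := by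
  have h3 : chebDeriv n 3 ω₂ = 0 := hω.1
  have hN : (10 : ℝ) ≤ n := by exact_mod_cast hn
  have hpos : ω₂ ≥ 0 := by
    have := hω.2 (cheb_neg n ω₂ h3)
    linarith
  have r0 := Polynomial.Chebyshev.iterate_derivative_T_eval_one_recurrence (R := ℝ) n 0
  have r1 := Polynomial.Chebyshev.iterate_derivative_T_eval_one_recurrence (R := ℝ) n 1
  have r2 := Polynomial.Chebyshev.iterate_derivative_T_eval_one_recurrence (R := ℝ) n 2
  have hT1 : (derivative^[0] (Polynomial.Chebyshev.T ℝ n)).eval 1 = 1 := by simp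
  rw [hT1] at r0
  have v2 : chebDeriv n 2 1 = (n : ℝ) ^ 2 * ((n : ℝ) ^ 2 - 1) / 3 := by
    unfold chebDeriv
    norm_num at r0 r1 ⊢
    rw [r0] at r1
    linarith
  have v3 : 0 < chebDeriv n 3 1 := by
    have e : 5 * chebDeriv n 3 1 = ((n : ℝ) ^ 2 - 4) * chebDeriv n 2 1 := by
      unfold chebDeriv
      norm_num at r2 ⊢
      linarith
    have : 0 < ((n : ℝ) ^ 2 - 4) * chebDeriv n 2 1 := by
      rw [v2]
      have a : 0 < (n : ℝ) ^ 2 - 4 := by nlinarith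
      have b : 0 < (n : ℝ) ^ 2 - 1 := by nlinarith
      positivity
    linarith
  have hlt : ω₂ < 1 := by
    by_contra! h
    have := cheb_ge n 3 ω₂ h
    linarith
  obtain ⟨t, ht0, ht1, rfl⟩ : ∃ t, 0 < t ∧ t ≤ Real.pi / 2 ∧ Real.cos t = ω₂ :=
    ⟨Real.arccos ω₂, Real.arccos_pos.2 hlt, Real.arccos_le_pi_div_two.2 hpos,
      Real.cos_arccos (by linarith) hlt.le⟩
  have hs2 := Real.sin_sq_add_cos_sq t
  have q0 := Polynomial.Chebyshev.one_sub_X_sq_mul_iterate_derivative_T_eval (R := ℝ) n 0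
    (Real.cos t)
  have q1 := Polynomial.Chebyshev.one_sub_X_sq_mul_iterate_derivative_T_eval (R := ℝ) n 1
    (Real.cos t)
  have hT : chebDeriv n 0 (Real.cos t) = Real.cos (n * t) := by
    simp [chebDeriv]
  have hU : chebDeriv n 1 (Real.cos t) * Real.sin t = n * Real.sin (n * t) := by
    have := Polynomial.Chebyshev.U_real_cos t ((n : ℤ) - 1)
    push_cast at this
    rw [sub_add_cancel] at this
    simp only [chebDeriv, Function.iterate_one, Polynomial.Chebyshev.T_derivative_eq_U]
    rw [← this]
    simp [mul_assoc]
  have q0' : (1 - Real.cos t ^ 2) * chebDeriv n 2 (Real.cos t) =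
      Real.cos t * chebDeriv n 1 (Real.cos t) - (n : ℝ) ^ 2 * chebDeriv n 0 (Real.cos t) := by
    unfold chebDeriv
    simpa using q0
  have q1' : (1 - Real.cos t ^ 2) * chebDeriv n 3 (Real.cos t) =
      3 * Real.cos t * chebDeriv n 2 (Real.cos t)
        - ((n : ℝ) ^ 2 - 1) * chebDeriv n 1 (Real.cos t) := by
    unfold chebDeriv
    norm_num at q1 ⊢
    linarith
  rw [h3, mul_zero] at q1'
  rw [hT] at q0'
  have hs : 1 - Real.cos t ^ 2 = Real.sin t ^ 2 := by linarith
  rw [hs] at q0'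
  have hB : auxB n t = 0 := by
    have hn0 : (n : ℝ) ≠ 0 := by positivity
    apply mul_left_cancel₀ hn0
    simp only [auxB, auxA]
    linear_combination (-3 * Real.cos t ^ 2 + (n ^ 2 - 1) * Real.sin t ^ 2) * hU
      - 3 * Real.cos t * Real.sin t * q0' - Real.sin t ^ 3 * q1'
  have hK := key_bound n t hN ht0 ht1 hB
  have hfin : chebDeriv n 2 (Real.cos t) * (((n : ℝ) ^ 2 + 2) * Real.sin t ^ 2 - 3) =
      -((n : ℝ) ^ 2 * ((n : ℝ) ^ 2 - 1) * Real.cos (n * t)) := by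
    linear_combination (n ^ 2 - 1) * q0' + Real.cos t * q1'
      + 3 * chebDeriv n 2 (Real.cos t) * hs2
  have habs := congrArg abs hfin
  have hn1 : 0 < (n : ℝ) ^ 2 * ((n : ℝ) ^ 2 - 1) := by
    have b : 0 < (n : ℝ) ^ 2 - 1 := by nlinarith
    positivity
  rw [abs_mul, abs_neg, abs_mul, abs_of_pos hn1, abs_of_pos (a := (_ : ℝ) - 3) (by linarith)] at habs
  have hle := mul_le_mul_of_nonneg_left (Real.abs_cos_le_one (n * t)) hn1.le
  have hge := mul_le_mul_of_nonneg_left hK (abs_nonneg (chebDeriv n 2 (Real.cos t)))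
  rw [v2]
  linarith
end

section
/- Let n ≥ 2 and 1 ≤ k ≤ n-1, and let ω_{k-1} be the largest zero of T_n^{(k)}. Then for every x ∈ [0, ω_{k-1}], |T_n^{(k)}(x)| ≤ (1/(2k+1))·T_n^{(k)}(1). -/
open Polynomial Set

/-- A Wronskian-type comparison with the degree-two solution of the ultraspherical equation. -/
lemma aux_D_nonneg (l b N : ℝ) (hl : 0 < l) (hb : 0 ≤ b) (hN : N = 4 * (l + 1) * (b + 1))
    (y y1 y2 : ℝ → ℝ) (hy : ∀ x, HasDerivAt y (y1 x) x) (hy1 : ∀ x, HasDerivAt y1 (y2 x) x)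
    (ode : ∀ x, (1 - x ^ 2) * y2 x = (2 * l + 1) * x * y1 x - N * y x)
    (x0 : ℝ) (h0 : 0 < x0) (h01 : x0 < 1) (hpos : ∀ x, x0 ≤ x → x ≤ 1 → 0 ≤ y1 x) :
    0 ≤ y1 x0 * (4 * (l + 1) * (2 * l + 1) * x0 ^ 2 - N * (1 - x0 ^ 2))
      - 4 * (l + 1) * N * x0 * y x0 := by
  set D : ℝ → ℝ := fun x => y1 x * (4 * (l + 1) * (2 * l + 1) * x ^ 2 - N * (1 - x ^ 2))
      - 4 * (l + 1) * N * x * y x with hD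
  set I : ℝ → ℝ := fun x => x ^ b * (1 - x ^ 2) ^ (l + 1 / 2) with hI
  have hcy : Continuous y := continuous_iff_continuousAt.2 fun x => (hy x).continuousAt
  have hcy1 : Continuous y1 := continuous_iff_continuousAt.2 fun x => (hy1 x).continuousAt
  have hDd : ∀ x, HasDerivAt D (y2 x * (4 * (l + 1) * (2 * l + 1) * x ^ 2 - N * (1 - x ^ 2))
      + y1 x * (8 * (l + 1) * (2 * l + 1) * x + 2 * N * x)
      - 4 * (l + 1) * N * (y x + x * y1 x)) x := by
    intro x
    have e1 : HasDerivAt (fun x : ℝ => 4 * (l + 1) * (2 * l + 1) * x ^ 2 - N * (1 - x ^ 2))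
        (8 * (l + 1) * (2 * l + 1) * x + 2 * N * x) x := by
      have := (((hasDerivAt_id x).pow 2).const_mul (4 * (l + 1) * (2 * l + 1))).sub
        ((((hasDerivAt_id x).pow 2).const_sub 1).const_mul N)
      convert! this using 1
      simp; ring
    have e2 : HasDerivAt (fun x : ℝ => 4 * (l + 1) * N * x * y x)
        (4 * (l + 1) * N * (y x + x * y1 x)) x := by
      have := ((hasDerivAt_id x).const_mul (4 * (l + 1) * N)).mul (hy x)
      convert! this using 1
      simp; ring
    have := ((hy1 x).mul e1).sub e2
    convert! this using 1
  have hId : ∀ x, 0 < x → x < 1 →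
      HasDerivAt I (I x * (b / x - (2 * l + 1) * x / (1 - x ^ 2))) x := by
    intro x hx hx1
    have hw : 0 < 1 - x ^ 2 := by nlinarith
    have e1 := (hasDerivAt_id x).rpow_const (p := b) (Or.inl hx.ne')
    have e2 := (((hasDerivAt_id x).pow 2).const_sub 1).rpow_const (p := l + 1 / 2)
      (Or.inl (by simpa using hw.ne'))
    have := e1.mul e2
    convert! this using 1
    simp only [hI, id, Pi.pow_apply]
    rw [Real.rpow_sub_one hx.ne', Real.rpow_sub_one hw.ne']
    simp
    field_simp
    ring
  have hIcont : Continuous I := by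
    refine (Continuous.rpow_const continuous_id fun x => Or.inr hb).mul
      (Continuous.rpow_const (by fun_prop) fun x => Or.inr (by linarith))
  have hDcont : Continuous D := continuous_iff_continuousAt.2 fun x => (hDd x).continuousAt
  have hanti : AntitoneOn (fun x => D x * I x) (Icc x0 1) := by
    apply antitoneOn_of_deriv_nonpos (convex_Icc _ _) (hDcont.mul hIcont).continuousOn
    · intro x hx
      rw [interior_Icc] at hx
      exact ((hDd x).mul (hId x (h0.trans hx.1) hx.2)).differentiableAt.differentiableWithinAt
    · intro x hx
      rw [interior_Icc] at hx
      have hx0 : 0 < x := h0.trans hx.1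
      have hw : 0 < 1 - x ^ 2 := by nlinarith [hx.2]
      have hI0 : 0 < I x := by
        simp only [hI]; positivity
      have hd := ((hDd x).mul (hId x hx0 hx.2)).deriv
      refine le_of_eq_of_le hd ?_
      have key : (y2 x * (4 * (l + 1) * (2 * l + 1) * x ^ 2 - N * (1 - x ^ 2))
          + y1 x * (8 * (l + 1) * (2 * l + 1) * x + 2 * N * x)
          - 4 * (l + 1) * N * (y x + x * y1 x)) * I x
          + D x * (I x * (b / x - (2 * l + 1) * x / (1 - x ^ 2)))
          = - (I x * y1 x * b * (4 * (l + 1) * (2 * l + 1) * x ^ 2 + N * (1 - x ^ 2)) / x) := by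
        have h2 : y2 x = ((2 * l + 1) * x * y1 x - N * y x) / (1 - x ^ 2) := by
          rw [eq_div_iff hw.ne', mul_comm]; exact ode x
        rw [h2]
        simp only [hD]
        field_simp
        rw [hN]
        ring
      rw [key]
      have := hpos x hx.1.le hx.2.le
      have hN0 : 0 < N := by rw [hN]; positivity
      have : 0 ≤ I x * y1 x * b * (4 * (l + 1) * (2 * l + 1) * x ^ 2 + N * (1 - x ^ 2)) / x := by
        positivity
      linarith
  have h := hanti (left_mem_Icc.2 h01.le) (right_mem_Icc.2 h01.le) h01.le
  have hI1 : I 1 = 0 := by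
    simp only [hI]
    rw [one_pow, sub_self, Real.zero_rpow (by linarith), mul_zero]
  simp only [hI1, mul_zero] at h
  have hw : 0 < 1 - x0 ^ 2 := by nlinarith
  have hI0 : 0 < I x0 := by
    simp only [hI]; positivity
  exact nonneg_of_mul_nonneg_left h hI0

lemma aux_last_min (l b N : ℝ) (hl : 0 < l) (hb : 0 ≤ b) (hN : N = 4 * (l + 1) * (b + 1))
    (y y1 y2 : ℝ → ℝ) (hy : ∀ x, HasDerivAt y (y1 x) x) (hy1 : ∀ x, HasDerivAt y1 (y2 x) x)
    (ode : ∀ x, (1 - x ^ 2) * y2 x = (2 * l + 1) * x * y1 x - N * y x)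
    (z : ℝ) (h0 : 0 ≤ z) (h01 : z < 1) (hz : y1 z = 0) (hyz : y z ≤ 0) (hy1pos : 0 ≤ y 1)
    (hpos : ∀ x, z < x → x ≤ 1 → 0 < y1 x) :
    (2 * l + 1) * (- y z) ≤ y 1 := by
  have hN0 : 0 < N := by rw [hN]; positivity
  set Q : ℝ → ℝ := fun x => (l + 1) ^ 2 * y x ^ 2
    + (2 * l + 1) * (l + 1) / N * ((1 - x ^ 2) * y1 x ^ 2) with hQ
  have hQd : ∀ x, HasDerivAt Q
      (2 * (y1 x * ((l + 1) * l * (2 * (2 * l + 1) * x * y1 x / N - y x)))) x := by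
    intro x
    have := (((hy x).pow 2).const_mul ((l + 1) ^ 2)).add
      (((((hasDerivAt_id x).pow 2).const_sub 1).mul ((hy1 x).pow 2)).const_mul
        ((2 * l + 1) * (l + 1) / N))
    convert! this using 1
    simp
    have := ode x
    field_simp
    linear_combination (- y1 x * (2 * l + 1)) * this
  have hQcont : Continuous Q := continuous_iff_continuousAt.2 fun x => (hQd x).continuousAt
  have hcy : Continuous y := continuous_iff_continuousAt.2 fun x => (hy x).continuousAt
  have hQpos : ∀ x, z < x → x < 1 → 0 < Q x := by
    intro x hx hx1
    have := hpos x hx hx1.le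
    have hw : 0 < 1 - x ^ 2 := by nlinarith
    simp only [hQ]; positivity
  have hgd : ∀ x, z < x → x < 1 → HasDerivAt (fun x => - l * y x + Real.sqrt (Q x))
      (- l * y1 x + (2 * (y1 x * ((l + 1) * l * (2 * (2 * l + 1) * x * y1 x / N - y x))))
        / (2 * Real.sqrt (Q x))) x := by
    intro x hx hx1
    exact ((hy x).const_mul (-l)).add ((hQd x).sqrt (hQpos x hx hx1).ne')
  have hmono : MonotoneOn (fun x => - l * y x + Real.sqrt (Q x)) (Icc z 1) := by
    apply monotoneOn_of_deriv_nonneg (convex_Icc _ _) (by fun_prop)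
    · intro x hx
      rw [interior_Icc] at hx
      exact (hgd x hx.1 hx.2).differentiableAt.differentiableWithinAt
    · intro x hx
      rw [interior_Icc] at hx
      rw [(hgd x hx.1 hx.2).deriv]
      have hx0 : 0 < x := lt_of_le_of_lt h0 hx.1
      have hQx := hQpos x hx.1 hx.2
      have hS := Real.sqrt_pos.2 hQx
      have hw : 0 < 1 - x ^ 2 := by nlinarith [hx.2]
      have hp := hpos x hx.1 hx.2.le
      have hDn := aux_D_nonneg l b N hl hb hN y y1 y2 hy hy1 ode x hx0 hx.2
        (fun t ht ht1 => (hpos t (lt_of_lt_of_le hx.1 ht) ht1).le)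
      -- y ≤ (2l+1) x y1 / N
      have hyle : N * y x ≤ (2 * l + 1) * x * y1 x := by
        have h1 : 0 ≤ N * y1 x * (1 - x ^ 2) := by positivity
        have h2 : 0 ≤ (4 * (l + 1) * x) * ((2 * l + 1) * x * y1 x - N * y x) := by nlinarith
        have := nonneg_of_mul_nonneg_right h2 (by positivity)
        linarith
      have hyle' : y x ≤ (2 * l + 1) * x * y1 x / N := by
        rw [le_div_iff₀ hN0]; linarith
      have hnn : 0 ≤ (2 * l + 1) * x * y1 x / N := by positivity
      have hsq : Real.sqrt (Q x) ≤ (l + 1) * (2 * (2 * l + 1) * x * y1 x / N - y x) := by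
        apply Real.sqrt_le_iff.2
        constructor
        · apply mul_nonneg (by linarith)
          have : 2 * (2 * l + 1) * x * y1 x / N = 2 * ((2 * l + 1) * x * y1 x / N) := by ring
          linarith
        · have : ((l + 1) * (2 * (2 * l + 1) * x * y1 x / N - y x)) ^ 2 - Q x
            = (l + 1) * (2 * l + 1) * y1 x / N ^ 2 *
             (y1 x * (4 * (l + 1) * (2 * l + 1) * x ^ 2 - N * (1 - x ^ 2))
              - 4 * (l + 1) * N * x * y x) := by
            simp only [hQ]
            field_simp
            ring
          have h3 : 0 ≤ (l + 1) * (2 * l + 1) * y1 x / N ^ 2 *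
             (y1 x * (4 * (l + 1) * (2 * l + 1) * x ^ 2 - N * (1 - x ^ 2))
              - 4 * (l + 1) * N * x * y x) := mul_nonneg (by positivity) hDn
          linarith
      have : - l * y1 x + (2 * (y1 x * ((l + 1) * l * (2 * (2 * l + 1) * x * y1 x / N - y x))))
        / (2 * Real.sqrt (Q x)) = l * y1 x / Real.sqrt (Q x) *
          ((l + 1) * (2 * (2 * l + 1) * x * y1 x / N - y x) - Real.sqrt (Q x)) := by
        field_simp
        ring
      rw [this]
      exact mul_nonneg (by positivity) (by linarith)
  have h := hmono (left_mem_Icc.2 h01.le) (right_mem_Icc.2 h01.le) h01.le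
  have q1 : Real.sqrt (Q 1) = (l + 1) * y 1 := by
    have : Q 1 = ((l + 1) * y 1) ^ 2 := by simp only [hQ]; ring
    rw [this, Real.sqrt_sq (by positivity)]
  have q2 : Real.sqrt (Q z) = (l + 1) * (- y z) := by
    have : Q z = ((l + 1) * (- y z)) ^ 2 := by simp only [hQ, hz]; ring
    rw [this, Real.sqrt_sq (mul_nonneg (by linarith) (by linarith))]
  simp only [q1, q2] at h
  linarith

lemma aux_energy (l N : ℝ) (hl : 0 < l) (hN0 : 0 < N)
    (y y1 y2 : ℝ → ℝ) (hy : ∀ x, HasDerivAt y (y1 x) x) (hy1 : ∀ x, HasDerivAt y1 (y2 x) x)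
    (ode : ∀ x, (1 - x ^ 2) * y2 x = (2 * l + 1) * x * y1 x - N * y x)
    (x z : ℝ) (h0 : 0 ≤ x) (hxz : x ≤ z) (h01 : z < 1) (hz : y1 z = 0) :
    |y x| ≤ |y z| := by
  set f : ℝ → ℝ := fun x => N * y x ^ 2 + (1 - x ^ 2) * y1 x ^ 2 with hf
  have hfd : ∀ x, HasDerivAt f (4 * l * x * y1 x ^ 2) x := by
    intro x
    have := (((hy x).pow 2).const_mul N).add
      ((((hasDerivAt_id x).pow 2).const_sub 1).mul ((hy1 x).pow 2))
    convert! this using 1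
    simp
    have := ode x
    linear_combination (-2 * y1 x) * this
  have hmono : MonotoneOn f (Icc 0 1) := by
    apply monotoneOn_of_deriv_nonneg (convex_Icc _ _)
      (fun x _ => (hfd x).continuousAt.continuousWithinAt)
      (fun x _ => (hfd x).differentiableAt.differentiableWithinAt)
    intro x hx
    rw [interior_Icc] at hx
    rw [(hfd x).deriv]
    have := hx.1
    positivity
  have h := hmono ⟨h0, by linarith⟩ ⟨by linarith, h01.le⟩ hxz
  simp only [hf, hz] at h
  have hw : 0 ≤ (1 - x ^ 2) * y1 x ^ 2 := mul_nonneg (by nlinarith) (sq_nonneg _)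
  have : N * y x ^ 2 ≤ N * y z ^ 2 := by linarith
  exact sq_le_sq.1 (le_of_mul_le_mul_left this hN0)

lemma cheb_hasDeriv (m : ℤ) (k : ℕ) (x : ℝ) :
    HasDerivAt (chebDeriv m k) (chebDeriv m (k + 1) x) x := by
  unfold chebDeriv
  rw [Function.iterate_succ_apply']
  exact Polynomial.hasDerivAt _ _

lemma cheb_ode (n k : ℕ) (x : ℝ) :
    (1 - x ^ 2) * chebDeriv n (k + 2) x =
      (2 * (k : ℝ) + 1) * x * chebDeriv n (k + 1) x - ((n : ℝ) ^ 2 - k ^ 2) * chebDeriv n k x := by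
  have := Polynomial.Chebyshev.one_sub_X_sq_mul_iterate_derivative_T_eval (R := ℝ) n k x
  simpa [chebDeriv] using this

lemma cheb_one_pos (n k : ℕ) (hk : k ≤ n) : 0 < chebDeriv n k 1 := by
  induction k with
  | zero => simp [chebDeriv]
  | succ k ih =>
    have h := cheb_ode n k 1
    have i := ih (by omega)
    have hkn : (k : ℝ) + 1 ≤ n := by exact_mod_cast hk
    have hk0 : (0 : ℝ) ≤ k := by positivity
    have h1 : 0 < ((n : ℝ) ^ 2 - k ^ 2) * chebDeriv n k 1 := mul_pos (by nlinarith) i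
    have h2 : 0 < (2 * (k : ℝ) + 1) * chebDeriv n (k + 1) 1 := by linarith
    exact (pos_iff_pos_of_mul_pos h2).1 (by positivity)

lemma cheb_top (n : ℕ) (x : ℝ) : chebDeriv n (n + 1) x = 0 := by
  unfold chebDeriv
  rw [Polynomial.iterate_derivative_eq_zero]
  · simp
  · rw [Polynomial.Chebyshev.natDegree_T]; simp

lemma cheb_pos_ge_one (n j : ℕ) (hj : j ≤ n) : ∀ x, 1 ≤ x → 0 < chebDeriv n (n - j) x := by
  have key : ∀ k, k ≤ n → (∀ x, 1 ≤ x → 0 ≤ chebDeriv n (k + 1) x) →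
      ∀ x, 1 ≤ x → 0 < chebDeriv n k x := by
    intro k hk h x hx
    have hmono : MonotoneOn (chebDeriv n k) (Ici 1) := by
      apply monotoneOn_of_deriv_nonneg (convex_Ici _)
        (fun x _ => (cheb_hasDeriv n k x).continuousAt.continuousWithinAt)
        (fun x _ => (cheb_hasDeriv n k x).differentiableAt.differentiableWithinAt)
      intro t ht
      rw [interior_Ici] at ht
      rw [(cheb_hasDeriv n k t).deriv]
      exact h t (le_of_lt ht)
    exact lt_of_lt_of_le (cheb_one_pos n k hk) (hmono (mem_Ici.2 le_rfl) hx hx)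
  induction j with
  | zero => exact key n le_rfl fun x _ => (cheb_top n x).ge
  | succ j ih =>
    apply key _ (by omega)
    have : n - (j + 1) + 1 = n - j := by omega
    rw [this]
    exact fun x hx => (ih (by omega) x hx).le

lemma cheb_zero (n k : ℕ) (h : Odd (n + k)) : chebDeriv n k 0 = 0 := by
  induction k using Nat.twoStepInduction with
  | zero =>
    simp only [chebDeriv, Function.iterate_zero, id]
    exact Polynomial.Chebyshev.T_eval_zero_of_odd _ (by exact_mod_cast h)
  | one =>
    simp only [chebDeriv, Function.iterate_one]
    rw [Polynomial.Chebyshev.T_derivative_eq_U, eval_mul,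
      Polynomial.Chebyshev.U_eval_zero_of_odd, mul_zero]
    obtain ⟨r, hr⟩ := h
    exact ⟨r - 1, by omega⟩
  | more k ih _ =>
    have h1 := cheb_ode n k 0
    rw [ih (by obtain ⟨r, hr⟩ := h; exact ⟨r - 1, by omega⟩)] at h1
    simpa using h1

theorem cheb_kth_deriv_bound_on_interior (n k : ℕ) (hn : 2 ≤ n) (hk1 : 1 ≤ k)
    (hk2 : k ≤ n - 1) (ω : ℝ) (hω : IsGreatest {x : ℝ | chebDeriv n k x = 0} ω) :
    ∀ x ∈ Icc (0:ℝ) ω, |chebDeriv n k x| ≤ (1 / (2 * (k:ℝ) + 1)) * chebDeriv n k 1 := by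
  intro x hx
  have hω0 : chebDeriv n k ω = 0 := hω.1
  have hposk : ∀ t, 1 ≤ t → 0 < chebDeriv n k t := by
    have := cheb_pos_ge_one n (n - k) (by omega)
    rwa [show n - (n - k) = k by omega] at this
  have hω1 : ω < 1 := by
    by_contra hcon
    have := hposk ω (not_lt.1 hcon)
    linarith
  have hcont : ∀ j, Continuous (chebDeriv n j) := fun j =>
    continuous_iff_continuousAt.2 fun x => (cheb_hasDeriv n j x).continuousAt
  have hy11 : 0 < chebDeriv n (k + 1) 1 := cheb_one_pos n (k + 1) (by omega)
  have hl : (0 : ℝ) < k := by exact_mod_cast hk1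
  have hrhs : 0 ≤ (1 / (2 * (k:ℝ) + 1)) * chebDeriv n k 1 :=
    mul_nonneg (by positivity) (hposk 1 le_rfl).le
  set Z : Set ℝ := Icc 0 1 ∩ {t | chebDeriv n (k + 1) t = 0} with hZ
  have hZc : IsCompact Z :=
    isCompact_Icc.inter_right (isClosed_eq (hcont (k + 1)) continuous_const)
  -- positivity of the derivative to the right of any zero-free interval
  have hsign : ∀ a, 0 ≤ a → (∀ t, a < t → t ≤ 1 → chebDeriv n (k + 1) t ≠ 0) →
      ∀ t, a < t → t ≤ 1 → 0 < chebDeriv n (k + 1) t := by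
    intro a ha h t ht ht1
    by_contra hcon
    obtain ⟨c, hc, hc0⟩ := intermediate_value_Icc ht1 (hcont (k + 1)).continuousOn
      ⟨not_lt.1 hcon, hy11.le⟩
    exact h c (lt_of_lt_of_le ht hc.1) hc.2 hc0
  have hmonoY : ∀ a, 0 ≤ a → a ≤ 1 → (∀ t, a < t → t ≤ 1 → 0 < chebDeriv n (k + 1) t) →
      StrictMonoOn (chebDeriv n k) (Icc a 1) := by
    intro a ha ha1 h
    apply strictMonoOn_of_deriv_pos (convex_Icc _ _) (hcont k).continuousOn
    intro t ht
    rw [interior_Icc] at ht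
    rw [(cheb_hasDeriv n k t).deriv]
    exact h t ht.1 ht.2.le
  rcases Z.eq_empty_or_nonempty with hE | hne
  · have hnz : ∀ t, 0 ≤ t → t ≤ 1 → chebDeriv n (k + 1) t ≠ 0 := by
      intro t h0 h1 h
      have : t ∈ Z := ⟨⟨h0, h1⟩, h⟩
      rw [hE] at this
      exact this
    have hsm := hmonoY 0 le_rfl zero_le_one
      (hsign 0 le_rfl fun t h0 h1 => hnz t h0.le h1)
    have hodd : Odd (n + k) := by
      by_contra hcon
      apply hnz 0 le_rfl zero_le_one
      apply cheb_zero
      rw [← add_assoc]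
      exact (Nat.not_odd_iff_even.1 hcon).add_one
    have hz0 := cheb_zero n k hodd
    have : x = 0 := by
      apply le_antisymm _ hx.1
      by_contra hcon
      have := hsm (left_mem_Icc.2 zero_le_one) ⟨hx.1.trans hx.2, hω1.le⟩
        (lt_of_lt_of_le (not_le.1 hcon) hx.2)
      rw [hz0, hω0] at this
      exact lt_irrefl _ this
    rw [this, hz0, abs_zero]
    exact hrhs
  · obtain ⟨z, hzZ, hzmax⟩ := hZc.exists_isGreatest hne
    have hz : chebDeriv n (k + 1) z = 0 := hzZ.2
    have hz0 : 0 ≤ z := hzZ.1.1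
    have hz1 : z < 1 := by
      rcases lt_or_eq_of_le hzZ.1.2 with h | h
      · exact h
      · rw [h] at hz; linarith
    have hp := hsign z hz0 (fun t ht ht1 h =>
      absurd (hzmax ⟨⟨hz0.trans ht.le, ht1⟩, h⟩) (not_le.2 ht))
    have hsm := hmonoY z hz0 hz1.le hp
    have hnk : k + 2 ≤ n := by
      by_contra hcon
      have hnk : n = k + 1 := by omega
      have hd : ∀ t, HasDerivAt (chebDeriv n (k + 1)) 0 t := by
        intro t
        have h := cheb_hasDeriv n (k + 1) t
        have h2 := cheb_top n t
        rw [show n + 1 = k + 1 + 1 by omega] at h2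
        rwa [h2] at h
      have := is_const_of_deriv_eq_zero (fun t => (hd t).differentiableAt)
        (fun t => (hd t).deriv) z 1
      linarith
    have hnk' : (k : ℝ) + 2 ≤ n := by exact_mod_cast hnk
    set N : ℝ := (n : ℝ) ^ 2 - k ^ 2 with hN
    have hN4 : 4 * ((k : ℝ) + 1) ≤ N := by rw [hN]; nlinarith
    have hN0 : 0 < N := by linarith
    have hyz : chebDeriv n k z ≤ 0 := by
      by_contra hcon
      have ho := cheb_ode n k z
      rw [hz, ← hN] at ho
      have hw : 0 < 1 - z ^ 2 := by nlinarith
      have h1 : 0 < N * chebDeriv n k z := mul_pos hN0 (not_le.1 hcon)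
      have h2 : chebDeriv n (k + 2) z < 0 := by
        by_contra h3
        have := mul_nonneg hw.le (not_lt.1 h3)
        linarith
      -- the derivative is negative just to the right of z
      have hev := (hcont (k + 2)).continuousAt.eventually_lt continuousAt_const h2
      obtain ⟨ε, hε, hball⟩ := Metric.eventually_nhds_iff.1 hev
      set e := min (ε / 2) (1 - z) with he
      have he0 : 0 < e := lt_min (by linarith) (by linarith)
      have he1 : e ≤ ε / 2 := min_le_left _ _
      have he2 : e ≤ 1 - z := min_le_right _ _
      obtain ⟨c, hc, hceq⟩ := exists_hasDerivAt_eq_slope (chebDeriv n (k + 1))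
        (chebDeriv n (k + 2)) (show z < z + e by linarith) (hcont (k + 1)).continuousOn
        (fun t _ => cheb_hasDeriv n (k + 1) t)
      have hcn := @hball c (by
        rw [Real.dist_eq, abs_of_pos (by linarith [hc.1])]; linarith [hc.2])
      rw [hceq, hz] at hcn
      have hpe := hp (z + e) (by linarith) (by linarith)
      have : 0 < (chebDeriv n (k + 1) (z + e) - 0) / (z + e - z) :=
        div_pos (by linarith) (by linarith)
      linarith
    have hmain := aux_last_min k (N / (4 * ((k : ℝ) + 1)) - 1) N hl
      (by rw [sub_nonneg, le_div_iff₀ (by positivity)]; linarith) (by field_simp; ring)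
      (chebDeriv n k) (chebDeriv n (k + 1)) (chebDeriv n (k + 2))
      (cheb_hasDeriv n k) (cheb_hasDeriv n (k + 1)) (cheb_ode n k) z hz0 hz1 hz hyz
      (hposk 1 le_rfl).le hp
    have hle : |chebDeriv n k x| ≤ - chebDeriv n k z := by
      rcases le_total x z with hxz | hzx
      · have := aux_energy k N hl hN0
          (chebDeriv n k) (chebDeriv n (k + 1)) (chebDeriv n (k + 2))
          (cheb_hasDeriv n k) (cheb_hasDeriv n (k + 1)) (cheb_ode n k) x z hx.1 hxz hz1 hz
        rwa [abs_of_nonpos hyz] at this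
      · have h1 := hsm.monotoneOn (left_mem_Icc.2 hz1.le) ⟨hzx, hx.2.trans hω1.le⟩ hzx
        have h2 := hsm.monotoneOn ⟨hzx, hx.2.trans hω1.le⟩ ⟨hzx.trans hx.2, hω1.le⟩ hx.2
        rw [hω0] at h2
        rw [abs_of_nonpos h2]
        linarith
    rw [one_div, inv_mul_eq_div, le_div_iff₀ (by positivity)]
    nlinarith
end

section
/- (Schur-type theorem for higher derivatives) Let n ≥ 2 and 1 ≤ k ≤ n-1, and let ω_k be the largest zero of T_n^{(k+1)}. Then max_{x₀∈[-1,1]} μ_k^*(x₀) = max{ |T_n^{(k)}(ω_k)|, μ_k^*(1) }. -/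
open Polynomial Set

/-- The `j`-th derivative of `f` at `x`. -/
noncomputable def dv (j : ℕ) (f : ℝ[X]) (x : ℝ) : ℝ := (derivative^[j] f).eval x

/-- All roots real (counted with multiplicity). -/
def RR (f : ℝ[X]) : Prop := f.natDegree ≤ Multiset.card f.roots

/-- All roots real and simple. -/
def SR (f : ℝ[X]) : Prop := f.natDegree ≤ f.roots.toFinset.card

lemma RR.deriv {f : ℝ[X]} (h : RR f) : RR (derivative f) := by
  unfold RR at *
  have h1 := card_roots_le_derivative f
  have h2 := natDegree_derivative_le f
  omega

lemma SR.deriv {f : ℝ[X]} (h : SR f) : SR (derivative f) := by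
  unfold SR at *
  have h1 := card_roots_toFinset_le_derivative f
  have h2 := natDegree_derivative_le f
  omega

lemma RR.iter {f : ℝ[X]} (h : RR f) (j : ℕ) : RR (derivative^[j] f) := by
  induction j with
  | zero => simpa using h
  | succ j ih => rw [Function.iterate_succ_apply']; exact ih.deriv

lemma SR.iter {f : ℝ[X]} (h : SR f) (j : ℕ) : SR (derivative^[j] f) := by
  induction j with
  | zero => simpa using h
  | succ j ih => rw [Function.iterate_succ_apply']; exact ih.deriv

lemma SR.rr {f : ℝ[X]} (h : SR f) : RR f := by
  unfold SR RR at *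
  exact h.trans (Multiset.toFinset_card_le _)

lemma lag_aux (s : Multiset ℝ) (x : ℝ) :
    0 ≤ ((derivative (s.map (fun a => X - C a)).prod).eval x) ^ 2
      - ((s.map (fun a => X - C a)).prod).eval x
        * (derivative (derivative (s.map (fun a => X - C a)).prod)).eval x ∧
    (0 < Multiset.card s → ((s.map (fun a => X - C a)).prod).eval x ≠ 0 →
    0 < ((derivative (s.map (fun a => X - C a)).prod).eval x) ^ 2
      - ((s.map (fun a => X - C a)).prod).eval x
        * (derivative (derivative (s.map (fun a => X - C a)).prod)).eval x) := by
  induction s using Multiset.induction_on with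
  | empty => simp
  | cons a s ih =>
    obtain ⟨ih, -⟩ := ih
    simp only [Multiset.map_cons, Multiset.prod_cons]
    set h := (s.map (fun a => X - C a)).prod with hh
    have key : (derivative ((X - C a) * h)).eval x ^ 2 - ((X - C a) * h).eval x *
        (derivative (derivative ((X - C a) * h))).eval x =
        h.eval x ^ 2 + (x - a) ^ 2 * ((derivative h).eval x ^ 2 - h.eval x *
          (derivative (derivative h)).eval x) := by
      simp only [derivative_mul, derivative_sub, derivative_X, derivative_C, eval_add, eval_mul,
        eval_sub, eval_X, eval_C, derivative_add, sub_zero, one_mul]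
      ring
    rw [key]
    refine ⟨by positivity, fun _ hne => ?_⟩
    have : h.eval x ≠ 0 := by
      intro h0; apply hne; simp [h0]
    positivity

lemma RR.lag {f : ℝ[X]} (h : RR f) (x : ℝ) :
    f.eval x * (derivative (derivative f)).eval x ≤ ((derivative f).eval x) ^ 2 := by
  have hc : Multiset.card f.roots = f.natDegree := le_antisymm (card_roots' f) h
  have hf := C_leadingCoeff_mul_prod_multiset_X_sub_C hc
  have := (lag_aux f.roots x).1
  rw [← hf]
  simp only [derivative_C_mul, eval_C_mul] at *
  nlinarith [mul_nonneg (sq_nonneg f.leadingCoeff) this]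

lemma RR.lag_pos {f : ℝ[X]} (h : RR f) (x : ℝ) (hd : 0 < f.natDegree) (hx : f.eval x ≠ 0) :
    f.eval x * (derivative (derivative f)).eval x < ((derivative f).eval x) ^ 2 := by
  have hc : Multiset.card f.roots = f.natDegree := le_antisymm (card_roots' f) h
  have hf := C_leadingCoeff_mul_prod_multiset_X_sub_C hc
  have hl : f.leadingCoeff ≠ 0 := by
    intro h0
    rw [leadingCoeff_eq_zero] at h0
    simp [h0] at hx
  have := (lag_aux f.roots x).2 (by omega) (by
    intro h0; apply hx; rw [← hf]; simp [h0])
  have h2 : 0 < f.leadingCoeff ^ 2 := by positivity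
  rw [← hf]
  simp only [derivative_C_mul, eval_C_mul] at *
  nlinarith [mul_pos h2 this]

lemma SR.lag_pos {f : ℝ[X]} (h : SR f) (x : ℝ) (hd : 0 < f.natDegree) :
    f.eval x * (derivative (derivative f)).eval x < ((derivative f).eval x) ^ 2 := by
  by_cases hx : f.eval x = 0
  · have hf : f ≠ 0 := by rintro rfl; simp at hd
    have hn : f.roots.Nodup := by
      rw [← Multiset.toFinset_card_eq_card_iff_nodup]
      exact le_antisymm (Multiset.toFinset_card_le _) ((card_roots' f).trans h)
    have h1 : ¬ 1 < f.rootMultiplicity x := by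
      rw [← count_roots, not_lt]
      exact Multiset.nodup_iff_count_le_one.1 hn x
    rw [one_lt_rootMultiplicity_iff_isRoot hf] at h1
    have h2 : (derivative f).eval x ≠ 0 := fun h0 => h1 ⟨hx, h0⟩
    rw [hx, zero_mul]; positivity
  · exact h.rr.lag_pos x hd hx

lemma dv_succ (j : ℕ) (f : ℝ[X]) (x : ℝ) : dv (j+1) f x = (derivative (derivative^[j] f)).eval x := by
  simp [dv, Function.iterate_succ_apply']

lemma dv_succ' (j : ℕ) (f : ℝ[X]) (x : ℝ) : dv (j+1) f x = dv j (derivative f) x := by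
  simp [dv]

lemma dv_zero (f : ℝ[X]) (x : ℝ) : dv 0 f x = f.eval x := rfl

lemma dv_add (j : ℕ) (f g : ℝ[X]) (x : ℝ) : dv j (f + g) x = dv j f x + dv j g x := by
  simp [dv]

lemma dv_sub (j : ℕ) (f g : ℝ[X]) (x : ℝ) : dv j (f - g) x = dv j f x - dv j g x := by
  simp [dv]

lemma dv_Cmul (j : ℕ) (c : ℝ) (f : ℝ[X]) (x : ℝ) : dv j (C c * f) x = c * dv j f x := by
  simp [dv, iterate_derivative_C_mul]

lemma dv_sum {ι : Type*} (j : ℕ) (s : Finset ι) (f : ι → ℝ[X]) (x : ℝ) :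
    dv j (∑ i ∈ s, f i) x = ∑ i ∈ s, dv j (f i) x := by
  simp [dv, iterate_derivative_sum, eval_finsetSum]

lemma dv_lin (j : ℕ) (a b : ℝ) (f : ℝ[X]) (x : ℝ) :
    dv (j+1) ((C b * X + C a) * f) x = (b * x + a) * dv (j+1) f x + (j+1) * b * dv j f x := by
  have : (C b * X + C a) * f = C b * (f * X) + C a * f := by ring
  rw [this, dv_add, dv_Cmul, dv_Cmul]
  have : dv (j+1) (f * X) x = dv (j+1) f x * x + (j+1) * dv j f x := by
    simp [dv, iterate_derivative_mul_X]
  rw [this]; ring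

lemma dv_X_sub (j : ℕ) (a : ℝ) (f : ℝ[X]) (x : ℝ) :
    dv (j+1) ((X - C a) * f) x = (x - a) * dv (j+1) f x + (j+1) * dv j f x := by
  have := dv_lin j (-a) 1 f x
  simp only [C_1, one_mul, C_neg, mul_one] at this
  rw [← sub_eq_add_neg] at this
  rw [this]; ring

lemma dv_quad (j : ℕ) (f : ℝ[X]) (x : ℝ) :
    dv (j+2) ((X^2 - 1) * f) x = (x^2-1) * dv (j+2) f x + 2 * (j+2) * x * dv (j+1) f x
      + (j+2)*(j+1) * dv j f x := by
  have : (X^2 - 1) * f = (X - C 1) * ((X - C (-1)) * f) := by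
    simp only [C_1, C_neg]; ring
  rw [this, dv_X_sub, dv_X_sub, dv_X_sub]
  push_cast; ring

lemma dv_continuous (j : ℕ) (f : ℝ[X]) : Continuous (dv j f) := by
  unfold dv; exact Polynomial.continuous _

lemma natDegree_iter (f : ℝ[X]) (j : ℕ) (hj : j ≤ f.natDegree) :
    (derivative^[j] f).natDegree = f.natDegree - j := by
  induction j with
  | zero => simp
  | succ j ih =>
    have := ih (by omega)
    rw [Function.iterate_succ_apply',
      natDegree_eq_of_degree_eq_some (degree_derivative_eq _ (by omega)), this]
    omega

lemma SR.dv_lt {f : ℝ[X]} (h : SR f) (j : ℕ) (x : ℝ) (hd : j < f.natDegree) :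
    dv j f x * dv (j+2) f x < dv (j+1) f x ^ 2 := by
  have := (h.iter j).lag_pos x (by rw [natDegree_iter f j hd.le]; omega)
  simpa [dv, Function.iterate_succ_apply'] using this

lemma RR.dv_le {f : ℝ[X]} (h : RR f) (j : ℕ) (x : ℝ) :
    dv j f x * dv (j+2) f x ≤ dv (j+1) f x ^ 2 := by
  have := (h.iter j).lag x
  simpa [dv, Function.iterate_succ_apply'] using this

lemma RR.dv_lt {f : ℝ[X]} (h : RR f) (j : ℕ) (x : ℝ) (hd : j < f.natDegree)
    (hx : dv j f x ≠ 0) :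
    dv j f x * dv (j+2) f x < dv (j+1) f x ^ 2 := by
  have := (h.iter j).lag_pos x (by rw [natDegree_iter f j hd.le]; omega) hx
  simpa [dv, Function.iterate_succ_apply'] using this

/-- Second order Taylor formula with continuous remainder. -/
lemma taylor2 (f : ℝ[X]) : ∃ R : ℝ → ℝ → ℝ, Continuous (fun z : ℝ × ℝ => R z.1 z.2) ∧
    ∀ t h, f.eval (t + h) = f.eval t + h * dv 1 f t + h^2 / 2 * dv 2 f t + h^3 * R t h := by
  induction f using Polynomial.induction_on' with
  | add p q hp hq =>
    obtain ⟨R, hR, h1⟩ := hp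
    obtain ⟨S, hS, h2⟩ := hq
    refine ⟨fun t h => R t h + S t h, hR.add hS, fun t h => ?_⟩
    rw [eval_add, h1, h2, dv_add, dv_add, eval_add]; ring
  | monomial m a =>
    rw [← C_mul_X_pow_eq_monomial]
    induction m with
    | zero => exact ⟨fun _ _ => 0, continuous_const, fun t h => by simp [dv]⟩
    | succ m ih =>
      obtain ⟨R, hR, h1⟩ := ih
      set g := C a * X ^ m with hg
      have hgs : C a * X ^ (m+1) = (X - C 0) * g := by simp [hg, pow_succ]; ring
      rw [hgs]
      clear_value g
      refine ⟨fun t h => t * R t h + dv 2 g t / 2 + h * R t h, ?_, fun t h => ?_⟩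
      · have := dv_continuous 2 g
        fun_prop
      · rw [dv_X_sub, dv_X_sub, eval_mul, h1, eval_mul, dv_zero]
        simp; ring

open Filter Topology in
lemma perturb (p : ℝ[X]) (hp : ∀ t ∈ Icc (-1:ℝ) 1, |p.eval t| ≤ 1) (q : ℝ → ℝ[X]) (h : ℝ → ℝ)
    (hc : ContinuousOn h (Icc (-1) 1))
    (hE : ∀ t ∈ Icc (-1:ℝ) 1, |p.eval t| = 1 → p.eval t * h t < 0) (j : ℕ) (K s0 : ℝ) (hs0 : 0 < s0)
    (h1 : ∀ s, 0 < s → s ≤ s0 → ∀ t ∈ Icc (-1:ℝ) 1, |(q s).eval t - p.eval t| ≤ K * s)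
    (h2 : ∀ s, 0 < s → s ≤ s0 → ∀ t ∈ Icc (-1:ℝ) 1, ∃ t' ∈ Icc (-1:ℝ) 1,
      |(q s).eval t - p.eval t' - s^j * h t| ≤ K * s^(j+1)) :
    ∀ᶠ s in 𝓝[>] (0:ℝ), ∀ t ∈ Icc (-1:ℝ) 1, |(q s).eval t| ≤ 1 := by
  have hne : (Icc (-1:ℝ) 1).Nonempty := ⟨0, by norm_num⟩
  have hφ : ContinuousOn (fun t => max (-(p.eval t * h t)) (1 - |p.eval t|)) (Icc (-1:ℝ) 1) := by
    have : ContinuousOn (fun t => p.eval t) (Icc (-1:ℝ) 1) := p.continuous.continuousOn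
    exact ((this.mul hc).neg).sup (continuousOn_const.sub this.abs)
  obtain ⟨t0, ht0, hmin⟩ := isCompact_Icc.exists_isMinOn hne hφ
  obtain ⟨η, hη⟩ : ∃ η, η = max (-(p.eval t0 * h t0)) (1 - |p.eval t0|) := ⟨_, rfl⟩
  have hηpos : 0 < η := by
    rw [hη]
    rcases (hp t0 ht0).lt_or_eq with h | h
    · exact lt_max_of_lt_right (by linarith)
    · exact lt_max_of_lt_left (by linarith [hE t0 ht0 h])
  have hall : ∀ t ∈ Icc (-1:ℝ) 1, η ≤ -(p.eval t * h t) ∨ η ≤ 1 - |p.eval t| := by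
    intro t ht
    have := hmin ht
    simp only [mem_setOf_eq] at this
    rw [← hη] at this
    exact le_max_iff.1 this
  obtain ⟨K', hK'⟩ : ∃ K', K' = |K| + 1 := ⟨_, rfl⟩
  have hKpos : 0 < K' := by rw [hK']; positivity
  have hKK : K ≤ K' := by rw [hK']; linarith [le_abs_self K]
  obtain ⟨s1, hs1⟩ : ∃ s1, s1 = min s0 (min 1 η / K') := ⟨_, rfl⟩
  have hs1pos : 0 < s1 := by rw [hs1]; positivity
  filter_upwards [Ioc_mem_nhdsGT hs1pos] with s hs t ht
  obtain ⟨hs, hss⟩ := hs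
  have hss0 : s ≤ s0 := hss.trans (hs1 ▸ min_le_left _ _)
  have hsK : K' * s ≤ min 1 η := by
    have : s ≤ min 1 η / K' := hss.trans (hs1 ▸ min_le_right _ _)
    rw [le_div_iff₀ hKpos] at this; linarith
  have hsK1 : K * s ≤ 1 := (mul_le_mul_of_nonneg_right hKK hs.le).trans (hsK.trans (min_le_left _ _))
  have hsKη : K * s ≤ η := (mul_le_mul_of_nonneg_right hKK hs.le).trans (hsK.trans (min_le_right _ _))
  have e1 := abs_le.1 (h1 s hs hss0 t ht)
  have hpt := abs_le.1 (hp t ht)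
  rcases hall t ht with hh | hh
  · obtain ⟨t', ht', e2⟩ := h2 s hs hss0 t ht
    have e2 := abs_le.1 e2
    have hpt' := abs_le.1 (hp t' ht')
    have hsj : 0 < s^j := by positivity
    have e3 : K * s^(j+1) ≤ s^j * η := by
      have : K * s^(j+1) = s^j * (K * s) := by ring
      rw [this]; exact mul_le_mul_of_nonneg_left hsKη hsj.le
    rcases lt_trichotomy (p.eval t) 0 with hp0 | hp0 | hp0
    · have hh0 : η ≤ h t := by
        have : 0 < h t := by by_contra hcon; push Not at hcon; nlinarith
        nlinarith
      have := mul_le_mul_of_nonneg_left hh0 hsj.le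
      rw [abs_le]; constructor <;> linarith
    · rw [hp0] at hh; linarith
    · have hh0 : h t ≤ -η := by
        have : h t < 0 := by by_contra hcon; push Not at hcon; nlinarith
        nlinarith
      have := mul_le_mul_of_nonneg_left hh0 hsj.le
      rw [abs_le]; constructor <;> linarith
  · rw [abs_le]
    have := abs_le.1 (show |p.eval t| ≤ 1 - η by linarith)
    constructor <;> linarith

/-- The data of a global maximizer. -/
structure GMax (n k : ℕ) (M : ℝ) : Prop where
  le : ∀ q : ℝ[X], q.natDegree ≤ n → (∀ t ∈ Icc (-1:ℝ) 1, |q.eval t| ≤ 1) →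
    ∀ y ∈ Icc (-1:ℝ) 1, dv (k+1) q y = 0 → dv k q y ≤ M

open Filter Topology in
lemma no_gain {n k : ℕ} {M : ℝ} (hM : GMax n k M) {p r u : ℝ[X]} {x0 : ℝ} (hx0 : x0 ∈ Ioo (-1:ℝ) 1)
    (hp0 : dv k p x0 = M) (hp1 : dv (k+1) p x0 = 0) (hp2 : dv (k+2) p x0 < 0)
    (hpn : p.natDegree ≤ n) (hrn : r.natDegree ≤ n) (hun : u.natDegree ≤ n)
    (hq : ∀ᶠ s in 𝓝[>] (0:ℝ), ∀ t ∈ Icc (-1:ℝ) 1, |(p + C s * r + C (s^2) * u).eval t| ≤ 1)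
    (ν : ℝ) (hgain : ∀ᶠ s in 𝓝[>] (0:ℝ), M < dv k (p + C s * r + C (s^2) * u) (x0 + s * ν)) :
    False := by
  obtain ⟨R, hR, hT⟩ := taylor2 (derivative^[k] p)
  have hT' : ∀ h, dv k p (x0 + h) = M + h^2 * (dv (k+2) p x0 / 2 + h * R x0 h) := by
    intro h
    have e1 : dv 1 (derivative^[k] p) x0 = 0 := by
      rw [← hp1]; simp [dv, Function.iterate_succ_apply']
    have e2 : dv 2 (derivative^[k] p) x0 = dv (k+2) p x0 := by
      simp [dv, Function.iterate_succ_apply']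
    have := hT x0 h
    rw [e1, e2] at this
    change dv k p (x0 + h) = dv k p x0 + _ + _ + _ at this
    rw [this, hp0]; ring
  have hev : ∀ᶠ h in 𝓝 (0:ℝ), dv (k+2) p x0 / 2 + h * R x0 h < 0 := by
    have hcont : Continuous (fun h => dv (k+2) p x0 / 2 + h * R x0 h) := by
      have : Continuous (fun h : ℝ => R x0 h) :=
        hR.comp (Continuous.prodMk continuous_const continuous_id)
      fun_prop
    refine hcont.continuousAt.eventually (Iio_mem_nhds ?_)
    simp; linarith
  obtain ⟨ε, hε, hball⟩ := Metric.eventually_nhds_iff.1 hev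
  obtain ⟨ρ, hρ⟩ : ∃ ρ, ρ = min (ε/2) (min (1 - x0) (x0 + 1)) := ⟨_, rfl⟩
  have hρ0 : 0 < ρ := by
    rw [hρ]; refine lt_min (by linarith) (lt_min (by linarith [hx0.2]) (by linarith [hx0.1]))
  have hρ1 : ρ < ε := by
    have : ρ ≤ ε/2 := hρ ▸ min_le_left _ _
    linarith
  have hρ2 : x0 + ρ ≤ 1 := by
    have : ρ ≤ 1 - x0 := hρ ▸ (min_le_right _ _).trans (min_le_left _ _)
    linarith
  have hρ3 : -1 ≤ x0 - ρ := by
    have : ρ ≤ x0 + 1 := hρ ▸ (min_le_right _ _).trans (min_le_right _ _)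
    linarith
  have hA : dv k p (x0 + ρ) < M := by
    rw [hT']
    have := hball (y := ρ) (by simp [abs_of_pos hρ0, hρ1])
    have : 0 < ρ^2 := by positivity
    nlinarith
  have hB : dv k p (x0 + (-ρ)) < M := by
    rw [hT']
    have := hball (y := -ρ) (by simp [abs_of_pos hρ0, hρ1])
    have : 0 < (-ρ)^2 := by rw [neg_sq]; positivity
    nlinarith
  have hlim : ∀ y, dv k p y < M → ∀ᶠ s in 𝓝[>] (0:ℝ), dv k (p + C s * r + C (s^2) * u) y < M := by
    intro y hy
    apply eventually_nhdsWithin_of_eventually_nhds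
    have hcont : Continuous (fun s => dv k (p + C s * r + C (s^2) * u) y) := by
      simp only [dv_add, dv_Cmul]; fun_prop
    refine hcont.continuousAt.eventually (Iio_mem_nhds ?_)
    simpa using hy
  have hsm : ∀ᶠ s in 𝓝[>] (0:ℝ), |s * ν| < ρ := by
    apply eventually_nhdsWithin_of_eventually_nhds
    have hcont : Continuous (fun s : ℝ => |s * ν|) := by fun_prop
    refine hcont.continuousAt.eventually (Iio_mem_nhds ?_)
    simpa using hρ0
  obtain ⟨s, hs1, hs2, hs3, hs4, hs5⟩ :=
    (hq.and (hgain.and ((hlim _ hA).and ((hlim _ hB).and hsm)))).exists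
  set q := p + C s * r + C (s^2) * u with hqdef
  have hqn : q.natDegree ≤ n := by
    rw [hqdef]
    refine (natDegree_add_le _ _).trans (max_le ((natDegree_add_le _ _).trans (max_le hpn ?_)) ?_)
    · exact (natDegree_C_mul_le _ _).trans hrn
    · exact (natDegree_C_mul_le _ _).trans hun
  rw [abs_lt] at hs5
  have hmem : x0 + s * ν ∈ Icc (x0 + -ρ) (x0 + ρ) := ⟨by linarith, by linarith⟩
  obtain ⟨y, hy, hymax⟩ := isCompact_Icc.exists_isMaxOn ⟨_, hmem⟩
    (dv_continuous k q).continuousOn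
  have hyM : M < dv k q y := hs2.trans_le (hymax hmem)
  have hy1 : y ≠ x0 + ρ := by rintro rfl; linarith
  have hy2 : y ≠ x0 + -ρ := by rintro rfl; linarith
  have hyI : y ∈ Ioo (x0 + -ρ) (x0 + ρ) := ⟨lt_of_le_of_ne hy.1 hy2.symm, lt_of_le_of_ne hy.2 hy1⟩
  have hloc : IsLocalMax (dv k q) y := hymax.isLocalMax (Icc_mem_nhds hyI.1 hyI.2)
  have hd : HasDerivAt (dv k q) (dv (k+1) q y) y := by
    rw [dv_succ]; exact Polynomial.hasDerivAt _ _
  have := hloc.hasDerivAt_eq_zero hd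
  exact absurd (hM.le q hqn hs1 y ⟨by linarith [hyI.1], by linarith [hyI.2]⟩ this) (by linarith)

/-- First order perturbations stay admissible. -/
lemma perturb1 (p r : ℝ[X]) (hp : ∀ t ∈ Icc (-1:ℝ) 1, |p.eval t| ≤ 1)
    (hE : ∀ t ∈ Icc (-1:ℝ) 1, |p.eval t| = 1 → p.eval t * r.eval t < 0) :
    ∀ᶠ s in nhdsWithin (0:ℝ) (Ioi 0), ∀ t ∈ Icc (-1:ℝ) 1, |(p + C s * r).eval t| ≤ 1 := by
  obtain ⟨K, hK⟩ := isCompact_Icc.exists_bound_of_continuousOn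
    (f := fun t => r.eval t) (s := Icc (-1:ℝ) 1) r.continuous.continuousOn
  have hK0 : 0 ≤ K := (norm_nonneg _).trans (hK 0 (by norm_num))
  refine perturb p hp (fun s => p + C s * r) (fun t => r.eval t) r.continuous.continuousOn hE 1 K 1
    one_pos ?_ ?_
  · intro s hs _ t ht
    have := hK t ht
    simp only [eval_add, eval_mul, eval_C, add_sub_cancel_left, abs_mul, abs_of_pos hs]
    rw [Real.norm_eq_abs] at this
    nlinarith
  · intro s hs _ t ht
    refine ⟨t, ht, ?_⟩
    simp; positivity


/-- The node polynomial of a finite set. -/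
noncomputable def nodeP (E : Finset ℝ) : ℝ[X] := ∏ t ∈ E, (X - C t)

lemma nodeP_monic (E : Finset ℝ) : (nodeP E).Monic := monic_prod_X_sub_C _ _

lemma nodeP_natDegree (E : Finset ℝ) : (nodeP E).natDegree = E.card :=
  natDegree_finsetProd_X_sub_C_eq_card (fun t => t) (s := E)

lemma nodeP_roots (E : Finset ℝ) : (nodeP E).roots = E.val := roots_prod_X_sub_C E

lemma nodeP_SR (E : Finset ℝ) : SR (nodeP E) := by
  unfold SR
  rw [nodeP_roots, nodeP_natDegree, Finset.val_toFinset]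

lemma nodeP_eval (E : Finset ℝ) {t : ℝ} (ht : t ∈ E) : (nodeP E).eval t = 0 := by
  unfold nodeP
  rw [eval_prod]
  exact Finset.prod_eq_zero ht (by simp)

lemma nodeP_dvd (E : Finset ℝ) (f : ℝ[X]) (hf : ∀ t ∈ E, f.eval t = 0) : nodeP E ∣ f := by
  by_cases h0 : f = 0
  · simp [h0]
  · have : nodeP E = (E.val.map (fun a => X - C a)).prod := rfl
    rw [this, Multiset.prod_X_sub_C_dvd_iff_le_roots h0]
    rw [Finset.val_le_iff_val_subset]
    intro t ht
    rw [mem_roots h0]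
    exact hf t ht

lemma nodeP_erase (E : Finset ℝ) {t : ℝ} (ht : t ∈ E) : nodeP E = (X - C t) * nodeP (E.erase t) :=
  (Finset.mul_prod_erase E (fun t => X - C t) ht).symm

/-- Interior extremal points are critical. -/
lemma crit_of_ext (p : ℝ[X]) (hp : ∀ t ∈ Icc (-1:ℝ) 1, |p.eval t| ≤ 1) {t : ℝ}
    (ht : t ∈ Ioo (-1:ℝ) 1) (h1 : |p.eval t| = 1) : (derivative p).eval t = 0 := by
  have hd := p.hasDerivAt t
  have hn : Icc (-1:ℝ) 1 ∈ nhds t := Icc_mem_nhds ht.1 ht.2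
  rcases (abs_eq one_pos.le).1 h1 with h | h
  · have : IsLocalMax (fun x => p.eval x) t := by
      filter_upwards [hn] with y hy
      rw [h]; exact (abs_le.1 (hp y hy)).2
    exact this.hasDerivAt_eq_zero hd
  · have : IsLocalMin (fun x => p.eval x) t := by
      filter_upwards [hn] with y hy
      rw [h]; exact (abs_le.1 (hp y hy)).1
    exact this.hasDerivAt_eq_zero hd

lemma ext_finset (p : ℝ[X]) (hp : ∀ t ∈ Icc (-1:ℝ) 1, |p.eval t| ≤ 1) (hp' : derivative p ≠ 0) :
    ∃ E : Finset ℝ, (∀ t, t ∈ E ↔ t ∈ Icc (-1:ℝ) 1 ∧ |p.eval t| = 1) ∧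
      nodeP E ∣ (X^2 - 1) * derivative p := by
  classical
  have hx : (X^2 - 1 : ℝ[X]) ≠ 0 := by
    have := X_pow_sub_C_ne_zero (R := ℝ) (n := 2) (by norm_num) 1
    simpa using this
  have h0 : (X^2 - 1) * derivative p ≠ 0 := mul_ne_zero hx hp'
  have key : ∀ t ∈ Icc (-1:ℝ) 1, |p.eval t| = 1 → ((X^2 - 1) * derivative p).eval t = 0 := by
    intro t ht h1
    by_cases h2 : t ∈ Ioo (-1:ℝ) 1
    · simp [crit_of_ext p hp h2 h1]
    · have : t = 1 ∨ t = -1 := by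
        by_contra hcon
        push Not at hcon
        exact h2 ⟨lt_of_le_of_ne ht.1 hcon.2.symm, lt_of_le_of_ne ht.2 hcon.1⟩
      rcases this with rfl | rfl <;> simp
  refine ⟨((X^2 - 1) * derivative p).roots.toFinset.filter
    (fun t => t ∈ Icc (-1:ℝ) 1 ∧ |p.eval t| = 1), ?_, ?_⟩
  · intro t
    rw [Finset.mem_filter, Multiset.mem_toFinset, mem_roots h0]
    constructor
    · exact fun h => h.2
    · exact fun h => ⟨key t h.1 h.2, h⟩
  · apply nodeP_dvd
    intro t ht
    rw [Finset.mem_filter] at ht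
    exact key t ht.2.1 ht.2.2

/-- Constrained first order condition. -/
lemma FOc {n k : ℕ} {M : ℝ} (hM : GMax n k M) (hM0 : 0 < M) {p r : ℝ[X]} {x0 : ℝ}
    (hx0 : x0 ∈ Icc (-1:ℝ) 1)
    (hp : ∀ t ∈ Icc (-1:ℝ) 1, |p.eval t| ≤ 1)
    (hp0 : dv k p x0 = M) (hp1 : dv (k+1) p x0 = 0)
    (hpn : p.natDegree ≤ n) (hrn : r.natDegree ≤ n)
    (hE : ∀ t ∈ Icc (-1:ℝ) 1, |p.eval t| = 1 → p.eval t * r.eval t ≤ 0)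
    (hr : dv (k+1) r x0 = 0) : dv k r x0 ≤ 0 := by
  by_contra hcon
  push Not at hcon
  obtain ⟨δ, hδ⟩ : ∃ δ, δ = dv k r x0 / (2 * M) := ⟨_, rfl⟩
  have hδ0 : 0 < δ := by rw [hδ]; positivity
  have hδM : δ * M = dv k r x0 / 2 := by rw [hδ]; field_simp
  have hE' : ∀ t ∈ Icc (-1:ℝ) 1, |p.eval t| = 1 → p.eval t * (r - C δ * p).eval t < 0 := by
    intro t ht h1
    have h2 : p.eval t ^ 2 = 1 := by rw [← sq_abs, h1]; norm_num
    have := hE t ht h1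
    simp only [eval_sub, eval_mul, eval_C]
    nlinarith
  have h := perturb1 p (r - C δ * p) hp hE'
  obtain ⟨s, hs, hs0⟩ := (h.and self_mem_nhdsWithin).exists
  have hs0 : 0 < s := hs0
  have := hM.le (p + C s * (r - C δ * p)) ?_ hs x0 hx0 ?_
  · simp only [dv_add, dv_sub, dv_Cmul, hp0] at this
    nlinarith
  · refine (natDegree_add_le _ _).trans (max_le hpn ((natDegree_C_mul_le _ _).trans ?_))
    exact (natDegree_sub_le _ _).trans (max_le hrn ((natDegree_C_mul_le _ _).trans hpn))
  · simp only [dv_add, dv_sub, dv_Cmul, hp1, hr]; ring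

lemma card_ge {n k : ℕ} {M : ℝ} (hk : 1 ≤ k) (hkn : k + 1 ≤ n) (hM : GMax n k M) (hM0 : 0 < M)
    {p : ℝ[X]} {x0 : ℝ} (hx0 : x0 ∈ Icc (-1:ℝ) 1)
    (hp : ∀ t ∈ Icc (-1:ℝ) 1, |p.eval t| ≤ 1)
    (hp0 : dv k p x0 = M) (hp1 : dv (k+1) p x0 = 0)
    (hpn : p.natDegree ≤ n) (E : Finset ℝ)
    (hE : ∀ t, t ∈ E ↔ t ∈ Icc (-1:ℝ) 1 ∧ |p.eval t| = 1) : n ≤ E.card := by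
  by_contra hcon
  push Not at hcon
  obtain ⟨E', hsub, hcard⟩ := Infinite.exists_superset_card_eq E (n-1) (by omega)
  obtain ⟨K, rfl⟩ : ∃ K, k = K + 1 := ⟨k-1, by omega⟩
  have hlt := (nodeP_SR E').dv_lt K x0 (by rw [nodeP_natDegree]; omega)
  set w := nodeP E' with hw
  have hwn : w.natDegree = n - 1 := by rw [hw, nodeP_natDegree, hcard]
  have := FOc hM hM0 hx0 hp hp0 hp1 hpn
    (r := C ((K+2) * dv (K+1) w x0) * w - C (dv (K+2) w x0) * ((X - C x0) * w)) ?_ ?_ ?_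
  · simp only [dv_sub, dv_Cmul, dv_X_sub] at this
    have hK : (0:ℝ) ≤ K := Nat.cast_nonneg K
    nlinarith [sq_nonneg (dv (K+1) w x0)]
  · refine (natDegree_sub_le _ _).trans (max_le ((natDegree_C_mul_le _ _).trans ?_)
      ((natDegree_C_mul_le _ _).trans ?_))
    · omega
    · refine natDegree_mul_le.trans ?_
      rw [natDegree_X_sub_C]; omega
  · intro t ht h1
    have : w.eval t = 0 := nodeP_eval E' (hsub ((hE t).2 ⟨ht, h1⟩))
    simp [this]
  · simp only [dv_sub, dv_Cmul, dv_X_sub]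
    push_cast
    ring


lemma ode_deg (f : ℝ[X]) (hf : f ≠ 0) (b : ℝ)
    (h : f = C b * (X * derivative f + (X^2 - 1) * derivative (derivative f))) :
    b * (f.natDegree : ℝ)^2 = 1 := by
  set d := f.natDegree with hd
  have hl : f.coeff d ≠ 0 := by rw [hd]; exact leadingCoeff_ne_zero.2 hf
  have h2 : f.coeff (d+2) = 0 := coeff_eq_zero_of_natDegree_lt (by omega)
  have hc := congrArg (fun g => g.coeff d) h
  simp only [coeff_C_mul, coeff_add, sub_mul, one_mul, coeff_sub] at hc
  have e1 : (X * derivative f).coeff d = d * f.coeff d := by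
    cases d with
    | zero => simp
    | succ d => rw [coeff_X_mul, coeff_derivative]; push_cast; ring
  have e2 : (X^2 * derivative (derivative f)).coeff d = d * (d - 1) * f.coeff d := by
    rcases d with _ | _ | d
    · simp
    · simp [coeff_X_pow_mul']
    · rw [coeff_X_pow_mul, coeff_derivative, coeff_derivative]; push_cast; ring
  have e3 : (derivative (derivative f)).coeff d = 0 := by
    rw [coeff_derivative, coeff_derivative, h2]; ring
  rw [e1, e2, e3] at hc
  have : f.coeff d * (b * (d:ℝ)^2 - 1) = 0 := by linarith
  rcases mul_eq_zero.1 this with h | h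
  · exact absurd h hl
  · linarith

lemma eq_C_mul_of_dvd {f g : ℝ[X]} (hg : g.Monic) (hd : g ∣ f) (hdeg : f.natDegree ≤ g.natDegree) :
    ∃ c, f = C c * g := by
  obtain ⟨q, rfl⟩ := hd
  by_cases hq : q = 0
  · exact ⟨0, by simp [hq]⟩
  rw [hg.natDegree_mul' hq] at hdeg
  have : q.natDegree = 0 := by omega
  rw [natDegree_eq_zero] at this
  obtain ⟨c, rfl⟩ := this
  exact ⟨c, mul_comm _ _⟩

lemma X2_monic : (X^2 - 1 : ℝ[X]).Monic := by
  have := monic_X_pow_sub_C (R := ℝ) (n := 2) 1 (by norm_num)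
  simpa using this

lemma X2_natDegree : (X^2 - 1 : ℝ[X]).natDegree = 2 := by
  have := natDegree_X_pow_sub_C (R := ℝ) (n := 2) (r := 1)
  simpa using this

lemma full_case {n : ℕ} (hn : 1 ≤ n) (p : ℝ[X]) (hp' : derivative p ≠ 0) (hpn : p.natDegree ≤ n)
    (E : Finset ℝ)
    (hE : ∀ t ∈ E, |p.eval t| = 1)
    (hd : nodeP E ∣ (X^2 - 1) * derivative p) (hcard : E.card = n + 1) :
    ∃ α : ℝ, |α| = 1 ∧ p = C α * Chebyshev.T ℝ n := by
  classical
  have hX : (X^2 - 1 : ℝ[X]) ≠ 0 := X2_monic.ne_zero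
  have hdp : (derivative p).natDegree ≤ n - 1 := (natDegree_derivative_le p).trans (by omega)
  obtain ⟨c, hc⟩ := eq_C_mul_of_dvd (nodeP_monic E) hd (by
    rw [nodeP_natDegree, hcard]
    refine natDegree_mul_le.trans ?_
    rw [X2_natDegree]; omega)
  have hc0 : c ≠ 0 := by
    rintro rfl
    simp [hX, hp'] at hc
  have hmem : ∀ t : ℝ, t^2 = 1 → t ∈ E := by
    intro t ht
    have := congrArg (fun g => g.eval t) hc
    simp only [eval_mul, eval_sub, eval_pow, eval_X, eval_one, ht, eval_C, sub_self, zero_mul] at this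
    have h0 : (nodeP E).eval t = 0 := by
      rcases mul_eq_zero.1 this.symm with h | h
      · exact absurd h hc0
      · exact h
    have : t ∈ (nodeP E).roots := (mem_roots (nodeP_monic E).ne_zero).2 h0
    rwa [nodeP_roots] at this
  have h1 : (1:ℝ) ∈ E := hmem 1 (by norm_num)
  have h2 : (-1:ℝ) ∈ E.erase 1 := Finset.mem_erase.2 ⟨by norm_num, hmem (-1) (by norm_num)⟩
  obtain ⟨I, hI⟩ : ∃ I, I = (E.erase 1).erase (-1) := ⟨_, rfl⟩
  have hIc : I.card = n - 1 := by
    rw [hI, Finset.card_erase_of_mem h2, Finset.card_erase_of_mem h1]; omega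
  have hEI : nodeP E = (X^2 - 1) * nodeP I := by
    rw [nodeP_erase E h1, nodeP_erase _ h2, ← hI]
    simp only [map_neg, map_one]; ring
  have hpI : derivative p = C c * nodeP I := by
    rw [hEI] at hc
    apply mul_left_cancel₀ hX
    rw [hc]; ring
  have hIroot : ∀ t ∈ I, (derivative p).eval t = 0 := by
    intro t ht
    rw [hpI, eval_mul, nodeP_eval I ht, mul_zero]
  have hIE : ∀ t ∈ I, t ∈ E := by
    intro t ht
    rw [hI] at ht
    exact Finset.mem_of_mem_erase (Finset.mem_of_mem_erase ht)
  obtain ⟨h, hh⟩ := nodeP_dvd E (1 - p^2) (by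
    intro t ht
    have := hE t ht
    simp only [eval_sub, eval_one, eval_pow]
    rw [← sq_abs, this]; norm_num)
  have hder : -(2 * p * derivative p) = derivative (nodeP E) * h + nodeP E * derivative h := by
    have := congrArg derivative hh
    simp only [pow_two, derivative_sub, derivative_one, derivative_mul] at this
    rw [← this]
    ring
  obtain ⟨a1, ha1⟩ : ∃ a, h = C a * nodeP I := by
    apply eq_C_mul_of_dvd (nodeP_monic I)
    · apply nodeP_dvd
      intro t ht
      have e := congrArg (fun g => g.eval t) hder
      simp only [eval_neg, eval_mul, eval_add, hIroot t ht, nodeP_eval E (hIE t ht)] at e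
      have hne : (derivative (nodeP E)).eval t ≠ 0 := by
        intro h0
        have := (nodeP_SR E).dv_lt 0 t (by rw [nodeP_natDegree]; omega)
        rw [dv_zero, nodeP_eval E (hIE t ht)] at this
        simp [dv, h0] at this
      have : (derivative (nodeP E)).eval t * h.eval t = 0 := by linarith
      rcases mul_eq_zero.1 this with h | h
      · exact absurd h hne
      · exact h
    · rw [nodeP_natDegree, hIc]
      by_cases hh0 : h = 0
      · simp [hh0]
      have := congrArg natDegree hh
      rw [(nodeP_monic E).natDegree_mul' hh0, nodeP_natDegree, hcard] at this
      have h3 : (1 - p^2).natDegree ≤ 2 * n := by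
        refine (natDegree_sub_le _ _).trans (max_le (by simp) ?_)
        refine natDegree_pow_le.trans ?_
        omega
      omega
  obtain ⟨b, hb⟩ : ∃ b, b = - (a1 / c^2) := ⟨_, rfl⟩
  have hF : 1 - p^2 = C (-b) * ((X^2 - 1) * derivative p ^ 2) := by
    rw [hh, ha1, hEI, hpI, hb, neg_neg]
    have : C a1 = C (a1 / c^2) * (C c ^ 2 : ℝ[X]) := by
      rw [← C_pow, ← C_mul]; congr 1; field_simp
    rw [this]; ring
  have hode : p = C b * (X * derivative p + (X^2 - 1) * derivative (derivative p)) := by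
    have := congrArg derivative hF
    simp only [pow_two, derivative_sub, derivative_one, derivative_mul, derivative_C,
      derivative_X, map_neg] at this
    apply mul_left_cancel₀ hp'
    apply mul_left_cancel₀ (show (-2 : ℝ[X]) ≠ 0 by simp)
    linear_combination this
  have hpd : p.natDegree = n := by
    have := congrArg natDegree hpI
    rw [natDegree_C_mul hc0, nodeP_natDegree, hIc] at this
    have h4 := natDegree_derivative_le p
    have h5 : p.natDegree ≠ 0 := by
      intro h0
      exact hp' (derivative_of_natDegree_zero h0)
    omega
  have hp0 : p ≠ 0 := by rintro rfl; simp at hp'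
  have hbn := ode_deg p hp0 b hode
  rw [hpd] at hbn
  obtain ⟨T, hT⟩ : ∃ T, T = Chebyshev.T ℝ (n:ℤ) := ⟨_, rfl⟩
  rw [← hT]
  have hTn : T.natDegree = n := by rw [hT]; simp [Chebyshev.natDegree_T]
  have hT0 : T ≠ 0 := by
    intro h0; rw [h0] at hTn; simp at hTn; omega
  have hTode : T = C b * (X * derivative T + (X^2 - 1) * derivative (derivative T)) := by
    have := Chebyshev.one_sub_X_sq_mul_derivative_derivative_T_eq_poly_in_T (R := ℝ) n
    rw [← hT] at this
    have hbC : (C b * (n:ℝ[X])^2) = 1 := by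
      have : (n:ℝ[X]) = C (n:ℝ) := by simp
      rw [this, ← C_pow, ← C_mul, hbn]; simp
    simp only [Function.iterate_succ_apply, Function.iterate_zero_apply, Int.cast_natCast] at this
    linear_combination C b * this - T * hbC
  obtain ⟨α, hα⟩ : ∃ α, α = p.coeff n / T.coeff n := ⟨_, rfl⟩
  have hTc : T.coeff n ≠ 0 := by
    rw [← hTn]; exact leadingCoeff_ne_zero.2 hT0
  have hD : p - C α * T = 0 := by
    by_contra hD0
    have hDode := ode_deg (p - C α * T) hD0 b (by
      simp only [derivative_sub, derivative_C_mul]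
      linear_combination hode - C α * hTode)
    have hle : (p - C α * T).natDegree ≤ n :=
      (natDegree_sub_le _ _).trans (max_le hpn ((natDegree_C_mul_le _ _).trans hTn.le))
    have hco : (p - C α * T).coeff n = 0 := by
      rw [coeff_sub, coeff_C_mul, hα]; field_simp; ring
    have hne : (p - C α * T).natDegree ≠ n := by
      intro h
      apply hD0
      rw [← leadingCoeff_eq_zero, leadingCoeff, h, hco]
    have hlt : (p - C α * T).natDegree < n := lt_of_le_of_ne hle hne
    have hlt' : ((p - C α * T).natDegree : ℝ) < n := by exact_mod_cast hlt
    have hb0 : b ≠ 0 := by rintro rfl; simp at hbn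
    have : ((p - C α * T).natDegree : ℝ)^2 = (n:ℝ)^2 := by
      apply mul_left_cancel₀ hb0; rw [hDode, hbn]
    have h6 : (0:ℝ) ≤ ((p - C α * T).natDegree : ℝ) := Nat.cast_nonneg _
    nlinarith
  refine ⟨α, ?_, sub_eq_zero.1 hD⟩
  have e := congrArg (fun g => g.eval 1) hD
  have hT1 : T.eval 1 = 1 := by rw [hT]; simp
  simp only [eval_sub, eval_mul, eval_C, hT1, eval_zero] at e
  have := hE 1 h1
  rwa [show p.eval 1 = α by linarith] at this


lemma dv_hasDerivAt (j : ℕ) (f : ℝ[X]) (x : ℝ) : HasDerivAt (dv j f) (dv (j+1) f x) x := by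
  rw [dv_succ]; exact Polynomial.hasDerivAt _ _

lemma dv_comp_neg (j : ℕ) (f : ℝ[X]) (x : ℝ) : dv j (f.comp (-X)) x = (-1)^j * dv j f (-x) := by
  induction j generalizing f with
  | zero => simp [dv]
  | succ j ih =>
    rw [dv_succ', dv_succ', derivative_comp]
    simp only [derivative_neg, derivative_X, neg_mul, one_mul]
    have : -(derivative f).comp (-X) = C (-1) * (derivative f).comp (-X) := by simp
    rw [this, dv_Cmul, ih]; ring

lemma cheb_abs_neg (n j : ℕ) (x : ℝ) :
    |dv j (Chebyshev.T ℝ n) (-x)| = |dv j (Chebyshev.T ℝ n) x| := by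
  have h : ∃ e : ℝ, |e| = 1 ∧ (Chebyshev.T ℝ n).comp (-X) = C e * Chebyshev.T ℝ n := by
    refine ⟨((((n:ℤ).negOnePow : ℤˣ) : ℤ) : ℝ), ?_, ?_⟩
    · rw [← Int.cast_abs, Int.isUnit_iff_abs_eq.1 (Units.isUnit _)]; simp
    · apply Polynomial.funext
      intro r
      rw [eval_comp]
      simp [Chebyshev.T_eval_neg]
  obtain ⟨e, he, hT⟩ := h
  have h1 := dv_comp_neg j (Chebyshev.T ℝ n) x
  rw [hT, dv_Cmul] at h1
  have h2 := congrArg abs h1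
  rw [abs_mul, abs_mul, he, abs_pow] at h2
  simp at h2
  exact h2.symm

lemma cheb_pos {n j : ℕ} (hj : 1 ≤ j) (hjn : j ≤ n) {x : ℝ} (hx : 1 ≤ x) :
    0 < dv j (Chebyshev.T ℝ n) x := by
  have h1 := Chebyshev.eval_iterate_derivative_le_of_forall_abs_le_one (n := n) (P := 0) (k := j) hx
    (by simp) (by simp)
  have h2 := (Chebyshev.eval_iterate_derivative_eq_iff_of_bounded (n := n) (P := 0) (k := j) hj hjn hx
    (by simp) (by simp)).not
  simp only [iterate_derivative_zero, eval_zero] at h1 h2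
  have h3 : ¬ ((0:ℝ[X]) = Chebyshev.T ℝ n) := by
    intro h
    have := congrArg (fun g => g.eval 1) h
    simp at this
  exact lt_of_le_of_ne h1 (h2.2 h3)

lemma cheb_mono {n k : ℕ} (hkn : k < n) {x y : ℝ} (hx : 0 ≤ x) (hxy : x ≤ y)
    (h1 : dv (k+1) (Chebyshev.T ℝ n) x = 0) (h2 : dv (k+1) (Chebyshev.T ℝ n) y = 0) :
    |dv k (Chebyshev.T ℝ n) x| ≤ |dv k (Chebyshev.T ℝ n) y| := by
  obtain ⟨c, hc⟩ : ∃ c : ℝ, c = (n:ℝ)^2 - (k:ℝ)^2 := ⟨_, rfl⟩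
  have hc0 : 0 < c := by
    have : (k:ℝ) < n := by exact_mod_cast hkn
    have : (0:ℝ) ≤ k := Nat.cast_nonneg k
    rw [hc]; nlinarith
  set T := Chebyshev.T ℝ n with hT
  have hode : ∀ z, (1 - z^2) * dv (k+2) T z = (2*k+1) * z * dv (k+1) T z - c * dv k T z := by
    intro z
    have := Chebyshev.one_sub_X_sq_mul_iterate_derivative_T_eval (R := ℝ) n k z
    rw [← hT] at this
    simp only [Int.cast_natCast] at this
    rw [hc]; exact this
  have hder : ∀ z, HasDerivAt (fun z => c * dv k T z ^ 2 + (1 - z^2) * dv (k+1) T z ^ 2)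
      (4 * k * z * dv (k+1) T z ^ 2) z := by
    intro z
    have a := (dv_hasDerivAt k T z).pow 2
    have b := (dv_hasDerivAt (k+1) T z).pow 2
    have d := ((hasDerivAt_id z).pow 2).const_sub 1
    have e := (a.const_mul c).add (d.mul b)
    refine e.congr_deriv ?_
    have := hode z
    simp
    linear_combination (2 * dv (k+1) T z) * this
  have hmono : MonotoneOn (fun z => c * dv k T z ^ 2 + (1 - z^2) * dv (k+1) T z ^ 2) (Ici 0) := by
    apply monotoneOn_of_deriv_nonneg (convex_Ici 0)
    · exact fun z _ => (hder z).continuousAt.continuousWithinAt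
    · exact fun z _ => (hder z).differentiableAt.differentiableWithinAt
    · intro z hz
      rw [interior_Ici] at hz
      rw [(hder z).deriv]
      have : 0 ≤ z := le_of_lt hz
      positivity
  have := hmono (mem_Ici.2 hx) (mem_Ici.2 (hx.trans hxy)) hxy
  simp only [h1, h2] at this
  apply sq_le_sq.1
  nlinarith


lemma exists_max (n k : ℕ) : ∃ (p : ℝ[X]) (x0 : ℝ), p.natDegree ≤ n ∧
    (∀ t ∈ Icc (-1:ℝ) 1, |p.eval t| ≤ 1) ∧ x0 ∈ Icc (-1:ℝ) 1 ∧ dv (k+1) p x0 = 0 ∧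
    GMax n k (dv k p x0) := by
  classical
  obtain ⟨v, hv⟩ : ∃ v : Fin (n+1) → ℝ, v = fun i : Fin (n+1) => ((i:ℕ):ℝ) / (n+1) := ⟨_, rfl⟩
  have hn0 : (0:ℝ) < (n:ℝ) + 1 := by positivity
  have hinj : Function.Injective v := by
    intro i j hij
    rw [hv] at hij
    simp only at hij
    rw [div_left_inj' hn0.ne'] at hij
    exact Fin.ext (by exact_mod_cast hij)
  have hvI : ∀ i, v i ∈ Icc (-1:ℝ) 1 := by
    intro i
    rw [hv]
    simp only
    constructor
    · have : (0:ℝ) ≤ ((i:ℕ):ℝ) / (n+1) := by positivity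
      linarith
    · rw [div_le_one hn0]
      have : (i:ℕ) ≤ n + 1 := i.2.le
      exact_mod_cast this
  obtain ⟨L, hL⟩ : ∃ L : Fin (n+1) → ℝ[X], L = Lagrange.basis Finset.univ v := ⟨_, rfl⟩
  obtain ⟨P, hP⟩ : ∃ P : (Fin (n+1) → ℝ) → ℝ[X], P = fun a => ∑ i, C (a i) * L i := ⟨_, rfl⟩
  have hPd : ∀ a j x, dv j (P a) x = ∑ i, a i * dv j (L i) x := by
    intro a j x
    rw [hP]; simp only [dv_sum, dv_Cmul]
  have hPi : ∀ a, P a = Lagrange.interpolate Finset.univ v a := by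
    intro a; rw [hP, Lagrange.interpolate_apply, hL]
  have hPn : ∀ a, (P a).natDegree ≤ n := by
    intro a
    have := Lagrange.degree_interpolate_lt (s := Finset.univ) (v := v) a hinj.injOn
    rw [← hPi] at this
    simp only [Finset.card_univ, Fintype.card_fin] at this
    exact natDegree_le_of_degree_le (Order.lt_succ_iff.1 this)
  have hPs : ∀ q : ℝ[X], q.natDegree ≤ n → P (fun i => q.eval (v i)) = q := by
    intro q hq
    rw [hPi]
    symm
    apply Lagrange.eq_interpolate hinj.injOn
    refine lt_of_le_of_lt degree_le_natDegree ?_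
    simp only [Finset.card_univ, Fintype.card_fin]
    exact_mod_cast Nat.lt_succ_of_le hq
  have hcd : ∀ j, Continuous (fun z : (Fin (n+1) → ℝ) × ℝ => dv j (P z.1) z.2) := by
    intro j
    simp only [hPd]
    apply continuous_finsetSum
    intro i _
    exact ((continuous_apply i).comp continuous_fst).mul ((dv_continuous j (L i)).comp continuous_snd)
  obtain ⟨S, hS⟩ : ∃ S : Set ((Fin (n+1) → ℝ) × ℝ), S = ((Set.pi univ fun _ => Icc (-1:ℝ) 1) ×ˢ Icc (-1:ℝ) 1) ∩
      {z | (∀ t ∈ Icc (-1:ℝ) 1, |(P z.1).eval t| ≤ 1) ∧ dv (k+1) (P z.1) z.2 = 0} := ⟨_, rfl⟩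
  have hScomp : IsCompact S := by
    rw [hS]
    apply IsCompact.inter_right
    · exact (isCompact_univ_pi fun _ => isCompact_Icc).prod isCompact_Icc
    · apply IsClosed.inter
      · have hset : {z : (Fin (n+1) → ℝ) × ℝ | ∀ t ∈ Icc (-1:ℝ) 1, |(P z.1).eval t| ≤ 1} =
            ⋂ t ∈ Icc (-1:ℝ) 1, {z : (Fin (n+1) → ℝ) × ℝ | |(P z.1).eval t| ≤ 1} := by
          ext z; simp
        change IsClosed {z : (Fin (n+1) → ℝ) × ℝ | ∀ t ∈ Icc (-1:ℝ) 1, |(P z.1).eval t| ≤ 1}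
        rw [hset]
        apply isClosed_iInter
        intro t
        apply isClosed_iInter
        intro _
        apply isClosed_le _ continuous_const
        have : Continuous fun z : (Fin (n+1) → ℝ) × ℝ => dv 0 (P z.1) t :=
          (hcd 0).comp (continuous_fst.prodMk continuous_const)
        exact this.abs
      · exact isClosed_eq (hcd (k+1)) continuous_const
  have hmemS : ∀ q : ℝ[X], q.natDegree ≤ n → (∀ t ∈ Icc (-1:ℝ) 1, |q.eval t| ≤ 1) →
      ∀ y ∈ Icc (-1:ℝ) 1, dv (k+1) q y = 0 → ((fun i => q.eval (v i), y) : (Fin (n+1) → ℝ) × ℝ) ∈ S := by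
    intro q hq hb y hy hy0
    rw [hS]
    refine ⟨⟨?_, hy⟩, ?_, ?_⟩
    · intro i _
      exact abs_le.1 (hb (v i) (hvI i))
    · simp only [hPs q hq]; exact hb
    · simp only [hPs q hq]; exact hy0
  have hne : S.Nonempty := ⟨_, hmemS 0 (by simp) (by simp) 0 (by norm_num) (by simp [dv])⟩
  obtain ⟨z, hz, hmax⟩ := hScomp.exists_isMaxOn hne (hcd k).continuousOn
  have hz' := hz
  rw [hS] at hz'
  refine ⟨P z.1, z.2, hPn _, hz'.2.1, hz'.1.2, hz'.2.2, ⟨?_⟩⟩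
  intro q hq hb y hy hy0
  have := hmax (hmemS q hq hb y hy hy0)
  simpa only [mem_ofPred_eq, hPs q hq] using this


open Filter Topology in
/-- Unconstrained first order condition. -/
lemma FOu {n k : ℕ} {M : ℝ} (hM : GMax n k M) (hM0 : 0 < M) {p r : ℝ[X]} {x0 : ℝ}
    (hx0 : x0 ∈ Ioo (-1:ℝ) 1)
    (hp : ∀ t ∈ Icc (-1:ℝ) 1, |p.eval t| ≤ 1)
    (hp0 : dv k p x0 = M) (hp1 : dv (k+1) p x0 = 0) (hp2 : dv (k+2) p x0 < 0)
    (hpn : p.natDegree ≤ n) (hrn : r.natDegree ≤ n)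
    (hE : ∀ t ∈ Icc (-1:ℝ) 1, |p.eval t| = 1 → p.eval t * r.eval t ≤ 0) : dv k r x0 ≤ 0 := by
  by_contra hcon
  push Not at hcon
  obtain ⟨δ, hδ⟩ : ∃ δ, δ = dv k r x0 / (2 * M) := ⟨_, rfl⟩
  have hδ0 : 0 < δ := by rw [hδ]; positivity
  have hδM : δ * M = dv k r x0 / 2 := by rw [hδ]; field_simp
  have hE' : ∀ t ∈ Icc (-1:ℝ) 1, |p.eval t| = 1 → p.eval t * (r - C δ * p).eval t < 0 := by
    intro t ht h1
    have h2 : p.eval t ^ 2 = 1 := by rw [← sq_abs, h1]; norm_num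
    have := hE t ht h1
    simp only [eval_sub, eval_mul, eval_C]
    nlinarith
  have h := perturb1 p (r - C δ * p) hp hE'
  refine no_gain hM hx0 hp0 hp1 hp2 hpn (r := r - C δ * p) (u := 0) ?_ (by simp) ?_ 0 ?_
  · exact (natDegree_sub_le _ _).trans (max_le hrn ((natDegree_C_mul_le _ _).trans hpn))
  · simpa using h
  · filter_upwards [self_mem_nhdsWithin] with s hs
    have hs : 0 < s := hs
    simp only [mul_zero, add_zero, dv_add, dv_sub, dv_Cmul, hp0]
    nlinarith

open Filter Topology in
lemma end_slope (g : ℝ[X]) (h : ∀ t ∈ Icc (-1:ℝ) 1, g.eval t ≤ g.eval 1) :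
    0 ≤ (derivative g).eval 1 := by
  have hd := (g.hasDerivAt 1).hasDerivWithinAt (s := Iio 1)
  rw [hasDerivWithinAt_iff_tendsto_slope' (by simp)] at hd
  apply ge_of_tendsto hd
  filter_upwards [Ioo_mem_nhdsLT (show (0:ℝ) < 1 by norm_num)] with t ht
  have h1 := h t ⟨by linarith [ht.1], ht.2.le⟩
  rw [slope_def_field]
  exact div_nonneg_of_nonpos (by linarith) (by linarith [ht.2])

lemma end_slope_neg (g : ℝ[X]) (h : ∀ t ∈ Icc (-1:ℝ) 1, g.eval t ≤ g.eval (-1)) :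
    (derivative g).eval (-1) ≤ 0 := by
  have := end_slope (g.comp (-X)) (by
    intro t ht
    simp only [eval_comp, eval_neg, eval_X]
    exact h (-t) ⟨by linarith [ht.2], by linarith [ht.1]⟩)
  rw [derivative_comp] at this
  simp at this
  linarith

/-- The vector field used for the second order variation. -/
lemma D_package (p w : ℝ[X]) (a b W x0 : ℝ)
    (hfac : (X^2 - 1) * derivative p = (C b * X + C a) * w)
    (hx0 : x0 ∈ Ioo (-1:ℝ) 1)
    (hpos : ∀ t ∈ Ioo (-1:ℝ) 1, 0 < (b * t + a) * W) :
    ∃ (D : ℝ → ℝ) (σ d s0 : ℝ), σ^2 = 1 ∧ 0 < s0 ∧ ContinuousOn D (Icc (-1) 1) ∧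
      (∀ t ∈ Icc (-1:ℝ) 1, D t * (derivative p).eval t = w.eval t) ∧
      (∀ t ∈ Icc (-1:ℝ) 1, w.eval t = 0 →
        D t^2 * (derivative (derivative p)).eval t = D t * (derivative w).eval t) ∧
      (∀ s, 0 < s → s ≤ s0 → ∀ t ∈ Icc (-1:ℝ) 1, t + s * (σ * D t) ∈ Icc (-1:ℝ) 1) ∧
      (∀ t ∈ Icc (-1:ℝ) 1, W * D x0 + d * (t - x0) ≤ W * D t) ∧
      (b * x0 + a) * D x0 = x0^2 - 1 := by
  have hW : W ≠ 0 := by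
    rintro rfl
    have := hpos x0 hx0
    simp at this
  by_cases h1 : b + a = 0
  · have ha : a = -b := by linarith
    subst ha
    have hb : b ≠ 0 := by
      rintro rfl
      have := hpos x0 hx0
      simp at this
    have hcan : (X + 1) * derivative p = C b * w := by
      apply mul_left_cancel₀ (show (X - 1 : ℝ[X]) ≠ 0 by simpa using X_sub_C_ne_zero (1:ℝ))
      simp only [map_neg] at hfac
      linear_combination hfac
    have hD1 : ∀ t, (t + 1) * (derivative p).eval t = b * w.eval t := by
      intro t
      have := congrArg (fun g => g.eval t) hcan
      simpa using this
    have hD2 : ∀ t, (derivative p).eval t + (t + 1) * (derivative (derivative p)).eval t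
        = b * (derivative w).eval t := by
      intro t
      have := congrArg (fun g => (derivative g).eval t) hcan
      simpa using this
    refine ⟨fun t => (t + 1) / b, - b / |b|, W / b, |b|, ?_, by positivity, by fun_prop, ?_, ?_, ?_, ?_, ?_⟩
    · rw [div_pow, sq_abs]; field_simp
    · intro t _
      have := hD1 t
      field_simp
      linarith
    · intro t ht hw
      have e1 := hD1 t
      have e2 := hD2 t
      rw [hw, mul_zero] at e1
      field_simp
      linear_combination (t + 1) * e2 - e1
    · intro s hs hs1 t ht
      have e : s * (-b / |b| * ((t + 1) / b)) = - (s / |b|) * (t + 1) := by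
        field_simp
      rw [e]
      have h0 : 0 < s / |b| := by positivity
      have h01 : s / |b| ≤ 1 := by rw [div_le_one (by positivity)]; exact hs1
      constructor <;> nlinarith [ht.1, ht.2]
    · intro t _
      apply le_of_eq; field_simp; ring
    · field_simp; ring
  by_cases h2 : -b + a = 0
  · have ha : a = b := by linarith
    subst ha
    have hb : a ≠ 0 := by
      rintro rfl
      simp at h1
    have hcan : (X - 1) * derivative p = C a * w := by
      apply mul_left_cancel₀ (show (X + 1 : ℝ[X]) ≠ 0 by simpa using X_add_C_ne_zero (1:ℝ))
      linear_combination hfac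
    have hD1 : ∀ t, (t - 1) * (derivative p).eval t = a * w.eval t := by
      intro t
      have := congrArg (fun g => g.eval t) hcan
      simpa using this
    have hD2 : ∀ t, (derivative p).eval t + (t - 1) * (derivative (derivative p)).eval t
        = a * (derivative w).eval t := by
      intro t
      have := congrArg (fun g => (derivative g).eval t) hcan
      simpa using this
    refine ⟨fun t => (t - 1) / a, - a / |a|, W / a, |a|, ?_, by positivity, by fun_prop, ?_, ?_, ?_, ?_, ?_⟩
    · rw [div_pow, sq_abs]; field_simp
    · intro t _
      have := hD1 t
      field_simp
      linarith
    · intro t ht hw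
      have e1 := hD1 t
      have e2 := hD2 t
      rw [hw, mul_zero] at e1
      field_simp
      linear_combination (t - 1) * e2 - e1
    · intro s hs hs1 t ht
      have e : s * (-a / |a| * ((t - 1) / a)) = - (s / |a|) * (t - 1) := by
        field_simp
      rw [e]
      have h0 : 0 < s / |a| := by positivity
      have h01 : s / |a| ≤ 1 := by rw [div_le_one (by positivity)]; exact hs1
      constructor <;> nlinarith [ht.1, ht.2]
    · intro t _
      apply le_of_eq; field_simp; ring
    · field_simp; ring
  have hl0 : 0 < a * W := by simpa using hpos 0 (by norm_num)
  have hcont : Continuous (fun t : ℝ => (b * t + a) * W) := by fun_prop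
  have hnn : ∀ t ∈ Icc (-1:ℝ) 1, 0 ≤ (b * t + a) * W := by
    intro t ht
    have hcl : t ∈ closure (Ioo (-1:ℝ) 1) := by
      rw [closure_Ioo (by norm_num)]; exact ht
    have hclosed : IsClosed {t : ℝ | 0 ≤ (b * t + a) * W} := isClosed_le continuous_const hcont
    exact hclosed.closure_subset_iff.2 (fun t ht => (hpos t ht).le) hcl
  have hp1 : 0 < (b * 1 + a) * W :=
    lt_of_le_of_ne (hnn 1 (by norm_num)) (mul_ne_zero (by simpa using h1) hW).symm
  have hm1 : 0 < (b * (-1) + a) * W :=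
    lt_of_le_of_ne (hnn (-1) (by norm_num)) (mul_ne_zero (by simpa using h2) hW).symm
  have hall : ∀ t ∈ Icc (-1:ℝ) 1, 0 < (b * t + a) * W := by
    intro t ht
    have e : (b * t + a) * W = (1 + t) / 2 * ((b * 1 + a) * W)
        + (1 - t) / 2 * ((b * (-1) + a) * W) := by ring
    rw [e]
    rcases ht.2.lt_or_eq with h | h
    · have h3 := mul_pos (show 0 < (1 - t) / 2 by linarith) hm1
      have h4 := mul_nonneg (show 0 ≤ (1 + t) / 2 by linarith [ht.1]) hp1.le
      linarith
    · rw [h]; linarith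
  have hne : ∀ t ∈ Icc (-1:ℝ) 1, b * t + a ≠ 0 := by
    intro t ht h0
    have := hall t ht
    rw [h0] at this; simp at this
  have hx0' : x0 ∈ Icc (-1:ℝ) 1 := ⟨hx0.1.le, hx0.2.le⟩
  have hD1 : ∀ t, (t^2 - 1) * (derivative p).eval t = (b * t + a) * w.eval t := by
    intro t
    have := congrArg (fun g => g.eval t) hfac
    simpa using this
  have hD2 : ∀ t, 2 * t * (derivative p).eval t + (t^2 - 1) * (derivative (derivative p)).eval t
      = b * w.eval t + (b * t + a) * (derivative w).eval t := by
    intro t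
    have := congrArg (fun g => (derivative g).eval t) hfac
    simp at this
    linarith
  have hcD : ContinuousOn (fun t : ℝ => 1 / (b * t + a)) (Icc (-1) 1) := by
    apply ContinuousOn.div continuousOn_const (by fun_prop) hne
  obtain ⟨B, hB⟩ := isCompact_Icc.exists_bound_of_continuousOn hcD
  have hB0 : 0 < B := by
    have := hB x0 hx0'
    have h3 : 0 < ‖1 / (b * x0 + a)‖ := norm_pos_iff.2 (one_div_ne_zero (hne x0 hx0'))
    linarith
  refine ⟨fun t => (t^2 - 1) / (b * t + a), 1,
    W * (2 * x0 / (b * x0 + a) - b * (x0^2 - 1) / (b * x0 + a)^2), 1 / (2 * B), by norm_num,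
    by positivity, ?_, ?_, ?_, ?_, ?_, ?_⟩
  · apply ContinuousOn.div (by fun_prop) (by fun_prop) hne
  · intro t ht
    have h3 := hne t ht
    have e1 := hD1 t
    simp only
    rw [div_mul_eq_mul_div, e1, mul_div_cancel_left₀ _ h3]
  · intro t ht hw
    have h3 := hne t ht
    have e1 := hD1 t
    have e2 := hD2 t
    rw [hw, mul_zero] at e1
    rw [hw, mul_zero, zero_add] at e2
    obtain ⟨l, hl⟩ : ∃ l, l = b * t + a := ⟨_, rfl⟩
    simp only
    rw [← hl] at h3 e2 ⊢
    field_simp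
    linear_combination (t^2 - 1) * e2 - 2 * t * e1
  · intro s hs hs1 t ht
    have h3 := hB t ht
    rw [Real.norm_eq_abs] at h3
    have h4 := abs_le.1 h3
    have e : s * (1 * ((t^2 - 1) / (b * t + a))) = (s * (1 / (b * t + a))) * (t^2 - 1) := by ring
    rw [e]
    have hsB : s * B ≤ 1 / 2 := by
      have := mul_le_mul_of_nonneg_right hs1 hB0.le
      have h5 : 1 / (2 * B) * B = 1 / 2 := by field_simp
      linarith
    obtain ⟨v, hv⟩ : ∃ v, v = s * (1 / (b * t + a)) := ⟨_, rfl⟩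
    have hv1 : v ≤ 1/2 := by rw [hv]; nlinarith
    have hv2 : -(1/2) ≤ v := by rw [hv]; nlinarith
    rw [← hv]
    have hA : 0 ≤ 1 - t := by linarith [ht.2]
    have hC : 0 ≤ 1 + t := by linarith [ht.1]
    have hAC : 0 ≤ (1 - t) * (1 + t) := mul_nonneg hA hC
    constructor
    · have : v * (t^2-1) ≥ -(1/2) * ((1 - t) * (1 + t)) := by nlinarith
      nlinarith
    · have : v * (t^2-1) ≤ (1/2) * ((1 - t) * (1 + t)) := by nlinarith
      nlinarith
  · intro t ht
    have h3 := hne t ht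
    have h4 := hne x0 hx0'
    have key : W * ((t^2 - 1) / (b * t + a)) - (W * ((x0^2 - 1) / (b * x0 + a))
        + W * (2 * x0 / (b * x0 + a) - b * (x0^2 - 1) / (b * x0 + a)^2) * (t - x0))
        = (t - x0)^2 * (((b * 1 + a) * W) * ((b * (-1) + a) * W)) * ((b * t + a) * W) /
          ((b * t + a)^2 * (b * x0 + a)^2 * W^2) := by
      obtain ⟨l, hl⟩ : ∃ l, l = b * t + a := ⟨_, rfl⟩
      obtain ⟨m, hm⟩ : ∃ m, m = b * x0 + a := ⟨_, rfl⟩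
      rw [← hl] at h3
      rw [← hm] at h4
      rw [← hl, ← hm]
      field_simp
      rw [hl, hm]; ring
    have hk : 0 ≤ (t - x0)^2 * (((b * 1 + a) * W) * ((b * (-1) + a) * W)) * ((b * t + a) * W) /
          ((b * t + a)^2 * (b * x0 + a)^2 * W^2) := by
      have := hall t ht
      positivity
    simp only
    linarith
  · have h4 := hne x0 hx0'
    field_simp


lemma nodeP_derivative (E : Finset ℝ) : derivative (nodeP E) = ∑ t ∈ E, nodeP (E.erase t) := by
  classical
  unfold nodeP
  rw [derivative_prod_finset]
  apply Finset.sum_congr rfl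
  intro t _
  simp

lemma nodeP_derivative_eval (E : Finset ℝ) {t : ℝ} (ht : t ∈ E) :
    (derivative (nodeP E)).eval t = (nodeP (E.erase t)).eval t := by
  rw [nodeP_erase E ht, derivative_mul]
  simp

lemma nodeP_erase_eval_ne (E : Finset ℝ) (t : ℝ) : (nodeP (E.erase t)).eval t ≠ 0 := by
  intro h
  have : t ∈ (nodeP (E.erase t)).roots := (mem_roots (nodeP_monic _).ne_zero).2 h
  rw [nodeP_roots] at this
  exact Finset.notMem_erase t E this

open Filter Topology in
/-- Admissibility of the second order variation. -/
lemma second_adm (p w u : ℝ[X]) (hp : ∀ t ∈ Icc (-1:ℝ) 1, |p.eval t| ≤ 1)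
    (D : ℝ → ℝ) (σ s0 : ℝ) (hσ : σ^2 = 1) (hs0 : 0 < s0) (hD : ContinuousOn D (Icc (-1) 1))
    (hDp : ∀ t ∈ Icc (-1:ℝ) 1, D t * (derivative p).eval t = w.eval t)
    (hmove : ∀ s, 0 < s → s ≤ s0 → ∀ t ∈ Icc (-1:ℝ) 1, t + s * (σ * D t) ∈ Icc (-1:ℝ) 1)
    (hE : ∀ t ∈ Icc (-1:ℝ) 1, |p.eval t| = 1 →
      p.eval t * (u.eval t - D t^2 * (derivative (derivative p)).eval t / 2) < 0) :
    ∀ᶠ s in 𝓝[>] (0:ℝ), ∀ t ∈ Icc (-1:ℝ) 1,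
      |(p + C s * (C σ * w) + C (s^2) * u).eval t| ≤ 1 := by
  obtain ⟨R, hR, hT⟩ := taylor2 p
  have hT' : ∀ t h, p.eval (t + h) = p.eval t + h * (derivative p).eval t
      + h^2/2 * (derivative (derivative p)).eval t + h^3 * R t h := hT
  have hcR : ContinuousOn (fun z : ℝ × ℝ => (σ * D z.1)^3 * R z.1 (z.2 * (σ * D z.1)))
      (Icc (-1:ℝ) 1 ×ˢ Icc 0 1) := by
    have hD' : ContinuousOn (fun z : ℝ × ℝ => σ * D z.1) (Icc (-1:ℝ) 1 ×ˢ Icc 0 1) :=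
      continuousOn_const.mul (hD.comp continuousOn_fst (fun z hz => hz.1))
    refine (hD'.pow 3).mul ?_
    exact hR.comp_continuousOn (continuousOn_fst.prodMk (continuousOn_snd.mul hD'))
  obtain ⟨K1, hK1⟩ := (isCompact_Icc.prod isCompact_Icc).exists_bound_of_continuousOn hcR
  obtain ⟨K2, hK2⟩ := isCompact_Icc.exists_bound_of_continuousOn
    (f := fun t => (C σ * w).eval t) (s := Icc (-1:ℝ) 1) (Polynomial.continuous _).continuousOn
  obtain ⟨K3, hK3⟩ := isCompact_Icc.exists_bound_of_continuousOn
    (f := fun t => u.eval t) (s := Icc (-1:ℝ) 1) (Polynomial.continuous _).continuousOn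
  have hK10 : 0 ≤ K1 := (norm_nonneg _).trans (hK1 (0, 0) (by simp))
  have hK20 : 0 ≤ K2 := (norm_nonneg _).trans (hK2 0 (by simp))
  have hK30 : 0 ≤ K3 := (norm_nonneg _).trans (hK3 0 (by simp))
  refine perturb p hp (fun s => p + C s * (C σ * w) + C (s^2) * u)
    (fun t => u.eval t - D t^2 * (derivative (derivative p)).eval t / 2) ?_ hE 2 (K1 + K2 + K3)
    (min s0 1) (by positivity) ?_ ?_
  · have h1 : ContinuousOn (fun t => u.eval t) (Icc (-1:ℝ) 1) := (Polynomial.continuous _).continuousOn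
    have h2 : ContinuousOn (fun t => (derivative (derivative p)).eval t) (Icc (-1:ℝ) 1) :=
      (Polynomial.continuous _).continuousOn
    exact h1.sub (((hD.pow 2).mul h2).div_const 2)
  · intro s hs hs1 t ht
    have hs2 : s ≤ 1 := hs1.trans (min_le_right _ _)
    have e2 := hK2 t ht
    have e3 := hK3 t ht
    rw [Real.norm_eq_abs] at e2 e3
    have e : (p + C s * (C σ * w) + C (s^2) * u).eval t - p.eval t
        = s * (C σ * w).eval t + s^2 * u.eval t := by
      simp only [eval_add, eval_mul, eval_C]; ring
    simp only [e]
    refine (abs_add_le _ _).trans ?_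
    rw [abs_mul, abs_mul, abs_of_pos hs, abs_of_pos (show 0 < s^2 by positivity)]
    have f1 := mul_le_mul_of_nonneg_left e2 hs.le
    have f2 := mul_le_mul_of_nonneg_left e3 (show 0 ≤ s^2 by positivity)
    have f3 : s^2 * K3 ≤ s * K3 := by
      apply mul_le_mul_of_nonneg_right _ hK30
      nlinarith
    nlinarith [mul_nonneg hK10 hs.le]
  · intro s hs hs1 t ht
    have hs2 : s ≤ 1 := hs1.trans (min_le_right _ _)
    refine ⟨t + s * (σ * D t), hmove s hs (hs1.trans (min_le_left _ _)) t ht, ?_⟩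
    have e1 := hK1 (t, s) ⟨ht, hs.le, hs2⟩
    rw [Real.norm_eq_abs] at e1
    simp only at e1
    have e : (p + C s * (C σ * w) + C (s^2) * u).eval t - p.eval (t + s * (σ * D t))
        - s^2 * (u.eval t - D t^2 * (derivative (derivative p)).eval t / 2)
        = - (s^3 * ((σ * D t)^3 * R t (s * (σ * D t)))) := by
      rw [hT']
      simp only [eval_add, eval_mul, eval_C]
      rw [← hDp t ht]
      linear_combination (-(s^2 * D t^2 / 2 * (derivative (derivative p)).eval t)) * hσ
    simp only [e]
    rw [abs_neg, abs_mul, abs_of_pos (show 0 < s^3 by positivity)]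
    have f1 := mul_le_mul_of_nonneg_left e1 (show 0 ≤ s^3 by positivity)
    have f2 : 0 ≤ s^3 * (K2 + K3) := by positivity
    have f3 : (K1 + K2 + K3) * s^(2+1) = s^3 * K1 + s^3 * (K2 + K3) := by ring
    rw [f3]
    linarith

open Filter Topology in
/-- Gain of the second order variation. -/
lemma second_gain (p w u : ℝ[X]) (k : ℕ) (x0 M ν σ : ℝ) (hp0 : dv k p x0 = M)
    (hp1 : dv (k+1) p x0 = 0) (hw : dv k w x0 = 0)
    (hpos : 0 < ν^2 * dv (k+2) p x0 / 2 + σ * ν * dv (k+1) w x0 + dv k u x0) :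
    ∀ᶠ s in 𝓝[>] (0:ℝ), M < dv k (p + C s * (C σ * w) + C (s^2) * u) (x0 + s * ν) := by
  have hT : ∀ f : ℝ[X], ∃ R : ℝ → ℝ, Continuous R ∧ ∀ h, dv k f (x0 + h) = dv k f x0
      + h * dv (k+1) f x0 + h^2/2 * dv (k+2) f x0 + h^3 * R h := by
    intro f
    obtain ⟨R, hR, hT⟩ := taylor2 (derivative^[k] f)
    refine ⟨R x0, hR.comp (Continuous.prodMk continuous_const continuous_id), ?_⟩
    intro h
    have e1 : dv 1 (derivative^[k] f) x0 = dv (k+1) f x0 := by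
      simp [dv, Function.iterate_succ_apply']
    have e2 : dv 2 (derivative^[k] f) x0 = dv (k+2) f x0 := by
      simp [dv, Function.iterate_succ_apply']
    have := hT x0 h
    rw [e1, e2] at this
    exact this
  obtain ⟨R1, hR1, hT1⟩ := hT p
  obtain ⟨R2, hR2, hT2⟩ := hT w
  obtain ⟨B, hB⟩ : ∃ B : ℝ → ℝ, B = fun s => ν^2 * dv (k+2) p x0 / 2 + s * ν^3 * R1 (s * ν)
      + σ * (ν * dv (k+1) w x0 + s * ν^2 / 2 * dv (k+2) w x0 + s^2 * ν^3 * R2 (s * ν))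
      + dv k u (x0 + s * ν) := ⟨_, rfl⟩
  have hBc : Continuous B := by
    have := dv_continuous k u
    rw [hB]; fun_prop
  have hev : ∀ᶠ s in 𝓝 (0:ℝ), 0 < B s := by
    refine hBc.continuousAt.eventually (Ioi_mem_nhds ?_)
    rw [hB]; simp; linarith
  filter_upwards [eventually_nhdsWithin_of_eventually_nhds hev, self_mem_nhdsWithin] with s h1 h2
  have h2 : 0 < s := h2
  have e : dv k (p + C s * (C σ * w) + C (s^2) * u) (x0 + s * ν) = M + s^2 * B s := by
    simp only [dv_add, dv_Cmul, hT1, hT2, hp0, hp1, hw, hB]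
    ring
  rw [e]
  have : 0 < s^2 * B s := by positivity
  linarith

lemma core_n {n k : ℕ} {M : ℝ} (hk : 1 ≤ k) (hM : GMax n k M) (hM0 : 0 < M)
    {p : ℝ[X]} {x0 : ℝ} (hx0 : x0 ∈ Ioo (-1:ℝ) 1)
    (hp : ∀ t ∈ Icc (-1:ℝ) 1, |p.eval t| ≤ 1)
    (hp0 : dv k p x0 = M) (hp1 : dv (k+1) p x0 = 0) (hp2 : dv (k+2) p x0 < 0)
    (hpn : p.natDegree ≤ n) (E : Finset ℝ)
    (hE : ∀ t, t ∈ E ↔ t ∈ Icc (-1:ℝ) 1 ∧ |p.eval t| = 1) (hcard : E.card = n)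
    (a b W : ℝ) (hW : W = dv (k+1) (nodeP E) x0)
    (hfac : (X^2 - 1) * derivative p = (C b * X + C a) * nodeP E)
    (hpos : ∀ t ∈ Ioo (-1:ℝ) 1, 0 < (b * t + a) * W)
    (hw0 : dv k (nodeP E) x0 = 0)
    (hid : (b * x0 + a) * W = (x0^2 - 1) * dv (k+2) p x0 + k * (k+1) * M)
    (hi : ∀ t ∈ E, 0 < W * dv k (nodeP (E.erase t)) x0) : False := by
  classical
  obtain ⟨D, σ, d, s0, hσ, hs0, hDc, hDp, hDE, hmove, hconv, hDx⟩ :=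
    D_package p (nodeP E) a b W x0 hfac hx0 hpos
  obtain ⟨P, hP⟩ : ∃ P, P = dv (k+2) p x0 := ⟨_, rfl⟩
  have hlW := hpos x0 hx0
  have hW0 : W ≠ 0 := by rintro h; rw [h] at hlW; simp at hlW
  have hWW : 0 < W^2 := by positivity
  obtain ⟨K, rfl⟩ : ∃ K, k = K + 1 := ⟨k-1, by omega⟩
  have hs1 : ∑ t ∈ E, dv (K+1) (nodeP (E.erase t)) x0 = W := by
    rw [hW, dv_succ', nodeP_derivative, dv_sum]
  have hs2 : ∑ t ∈ E, dv K (nodeP (E.erase t)) x0 = 0 := by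
    rw [← hw0, dv_succ', nodeP_derivative, dv_sum]
  have hs3 : ∑ t ∈ E, (t - x0) * dv (K+1) (nodeP (E.erase t)) x0 = 0 := by
    have : ∀ t ∈ E, (t - x0) * dv (K+1) (nodeP (E.erase t)) x0
        = ((K:ℝ)+1) * dv K (nodeP (E.erase t)) x0 := by
      intro t ht
      have h := dv_X_sub K t (nodeP (E.erase t)) x0
      rw [← nodeP_erase E ht, hw0] at h
      linarith
    rw [Finset.sum_congr rfl this, ← Finset.mul_sum, hs2, mul_zero]
  obtain ⟨Sg, hSg⟩ : ∃ S, S = ∑ t ∈ E, D t * dv (K+1) (nodeP (E.erase t)) x0 := ⟨_, rfl⟩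
  have hSge : W * D x0 ≤ Sg := by
    have h1 : ∑ t ∈ E, (W * D x0 + d * (t - x0)) * (W * dv (K+1) (nodeP (E.erase t)) x0)
        ≤ ∑ t ∈ E, (W * D t) * (W * dv (K+1) (nodeP (E.erase t)) x0) := by
      apply Finset.sum_le_sum
      intro t ht
      exact mul_le_mul_of_nonneg_right (hconv t ((hE t).1 ht).1) (hi t ht).le
    have h2 : ∑ t ∈ E, (W * D t) * (W * dv (K+1) (nodeP (E.erase t)) x0) = W^2 * Sg := by
      rw [hSg, Finset.mul_sum]
      exact Finset.sum_congr rfl (fun t _ => by ring)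
    have h3 : ∑ t ∈ E, (W * D x0 + d * (t - x0)) * (W * dv (K+1) (nodeP (E.erase t)) x0)
        = W^2 * D x0 * (∑ t ∈ E, dv (K+1) (nodeP (E.erase t)) x0)
          + d * W * ∑ t ∈ E, (t - x0) * dv (K+1) (nodeP (E.erase t)) x0 := by
      rw [Finset.mul_sum, Finset.mul_sum, ← Finset.sum_add_distrib]
      exact Finset.sum_congr rfl (fun t _ => by ring)
    rw [h2, h3, hs1, hs3] at h1
    have h4 : W^2 * (W * D x0) ≤ W^2 * Sg := by linarith
    exact le_of_mul_le_mul_left h4 hWW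
  have hP0 : P < 0 := hP ▸ hp2
  have hgain : 0 < - (W^2 / P) + Sg := by
    have h1 : 0 < - (W^2 / P) + W * D x0 := by
      obtain ⟨l, hl⟩ : ∃ l, l = b * x0 + a := ⟨_, rfl⟩
      rw [← hl] at hlW hid hDx
      have hl0 : l ≠ 0 := by rintro h; rw [h] at hlW; simp at hlW
      rw [← hP] at hid
      have e : - (W^2 / P) + W * D x0 = (l * W) * ((((K+1:ℕ):ℝ) * (((K+1:ℕ):ℝ)+1)) * M) / (l^2 * (-P)) := by
        have hPne : P ≠ 0 := hP0.ne
        have hD0 : D x0 = (x0^2 - 1) / l := by rw [eq_div_iff hl0]; linarith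
        rw [hD0]
        have : ((K+1:ℕ):ℝ) * (((K+1:ℕ):ℝ)+1) * M = l * W - (x0^2-1) * P := by linarith
        rw [this]
        field_simp
        ring
      rw [e]
      have : 0 < -P := by linarith
      positivity
    linarith
  obtain ⟨η, hη⟩ : ∃ η, η = (- (W^2 / P) + Sg) / (4 * M) := ⟨_, rfl⟩
  have hη0 : 0 < η := by rw [hη]; positivity
  have hηM : η * M = (- (W^2 / P) + Sg) / 4 := by rw [hη]; field_simp
  obtain ⟨v, hv⟩ : ∃ v : ℝ[X], v = ∑ t ∈ E, C (D t) * nodeP (E.erase t) := ⟨_, rfl⟩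
  have hvn : v.natDegree ≤ n := by
    rw [hv]
    apply natDegree_sum_le_of_forall_le
    intro t ht
    refine (natDegree_C_mul_le _ _).trans ?_
    rw [nodeP_natDegree, Finset.card_erase_of_mem ht]; omega
  have hvE : ∀ t ∈ E, v.eval t = D t * (derivative (nodeP E)).eval t := by
    intro t ht
    rw [hv, eval_finsetSum, Finset.sum_eq_single t]
    · rw [eval_mul, eval_C, nodeP_derivative_eval E ht]
    · intro t' ht' hne
      rw [eval_mul, nodeP_eval _ (Finset.mem_erase.2 ⟨hne.symm, ht⟩), mul_zero]
    · intro h; exact absurd ht h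
  have hvk : dv (K+1) v x0 = Sg := by
    rw [hv, hSg, dv_sum]
    simp only [dv_Cmul]
  refine no_gain hM hx0 hp0 hp1 hp2 hpn (r := C σ * nodeP E) (u := C (1/2) * v - C η * p) ?_ ?_
    (second_adm p (nodeP E) _ hp D σ s0 hσ hs0 hDc hDp hmove ?_) (-(σ * W / P))
    (second_gain p (nodeP E) _ (K+1) x0 M _ σ hp0 hp1 hw0 ?_)
  · refine (natDegree_C_mul_le _ _).trans ?_
    rw [nodeP_natDegree, hcard]
  · exact (natDegree_sub_le _ _).trans (max_le ((natDegree_C_mul_le _ _).trans hvn)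
      ((natDegree_C_mul_le _ _).trans hpn))
  · intro t ht h1
    have htE : t ∈ E := (hE t).2 ⟨ht, h1⟩
    have e1 := hDE t ht (nodeP_eval E htE)
    have e2 := hvE t htE
    have h2 : p.eval t ^ 2 = 1 := by rw [← sq_abs, h1]; norm_num
    simp only [eval_sub, eval_mul, eval_C, e2, e1]
    nlinarith
  · rw [dv_sub, dv_Cmul, dv_Cmul, hvk, hp0, ← hW]
    have hPne : P ≠ 0 := hP0.ne
    have e : (-(σ * W / P))^2 * P / 2 + σ * (-(σ * W / P)) * W = - (W^2 / P) / 2 := by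
      field_simp
      linear_combination (-1) * hσ
    rw [← hP]
    linarith


lemma case_n {n k : ℕ} {M : ℝ} (hk : 1 ≤ k) (hkn : k + 2 ≤ n) (hM : GMax n k M) (hM0 : 0 < M)
    {p : ℝ[X]} {x0 : ℝ} (hx0 : x0 ∈ Ioo (-1:ℝ) 1)
    (hp : ∀ t ∈ Icc (-1:ℝ) 1, |p.eval t| ≤ 1) (hp' : derivative p ≠ 0)
    (hp0 : dv k p x0 = M) (hp1 : dv (k+1) p x0 = 0)
    (hpn : p.natDegree ≤ n) (E : Finset ℝ)
    (hE : ∀ t, t ∈ E ↔ t ∈ Icc (-1:ℝ) 1 ∧ |p.eval t| = 1) (hcard : E.card = n)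
    (hd : nodeP E ∣ (X^2 - 1) * derivative p) : False := by
  classical
  obtain ⟨l, hl⟩ := hd
  have h0 : (X^2 - 1) * derivative p ≠ 0 := mul_ne_zero X2_monic.ne_zero hp'
  have hl0 : l ≠ 0 := by rintro rfl; simp [hl] at h0
  have hdp : (derivative p).natDegree ≤ n - 1 := (natDegree_derivative_le p).trans (by omega)
  have hdeg : 2 + (derivative p).natDegree = n + l.natDegree := by
    have := congrArg natDegree hl
    rwa [X2_monic.natDegree_mul' hp', (nodeP_monic E).natDegree_mul' hl0, X2_natDegree,
      nodeP_natDegree, hcard] at this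
  have hl1 : l.natDegree ≤ 1 := by omega
  obtain ⟨b, a, hba⟩ := exists_eq_X_add_C_of_natDegree_le_one hl1
  have hRR : RR (derivative p) := by
    have h1 : (nodeP E).Splits := by
      rw [splits_iff_card_roots, nodeP_roots, nodeP_natDegree]; rfl
    have h2 : l.Splits := Splits.of_natDegree_le_one hl1
    have h3 : (derivative p).Splits := (hl ▸ h1.mul h2 : ((X^2 - 1) * derivative p).Splits).of_dvd h0
      (dvd_mul_left _ _)
    rw [splits_iff_card_roots] at h3
    exact h3.ge
  have hfac : (X^2 - 1) * derivative p = (C b * X + C a) * nodeP E := by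
    rw [hl, hba, mul_comm]
  obtain ⟨K, rfl⟩ : ∃ K, k = K + 1 := ⟨k-1, by omega⟩
  have hp0' : dv K (derivative p) x0 = M := by rw [← dv_succ', hp0]
  have hp1' : dv (K+1) (derivative p) x0 = 0 := by rw [← dv_succ', hp1]
  have hp2 : dv (K+1+2) p x0 < 0 := by
    have := hRR.dv_lt K x0 (by omega) (by rw [hp0']; exact hM0.ne')
    rw [hp0', hp1'] at this
    rw [dv_succ']
    have h3 : M * dv (K+2) (derivative p) x0 < 0 := by linarith
    exact (pos_iff_neg_of_mul_neg h3).1 hM0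
  have hwn : (nodeP E).natDegree ≤ n := by rw [nodeP_natDegree, hcard]
  have hw0 : dv (K+1) (nodeP E) x0 = 0 := by
    apply le_antisymm
    · apply FOu hM hM0 hx0 hp hp0 hp1 hp2 hpn hwn
      intro t ht h1
      rw [nodeP_eval E ((hE t).2 ⟨ht, h1⟩)]; simp
    · have := FOu hM hM0 hx0 hp hp0 hp1 hp2 hpn (r := C (-1) * nodeP E)
        ((natDegree_C_mul_le _ _).trans hwn) (by
          intro t ht h1
          rw [eval_mul, nodeP_eval E ((hE t).2 ⟨ht, h1⟩)]; simp)
      rw [dv_Cmul] at this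
      linarith
  obtain ⟨W, hW⟩ : ∃ W, W = dv (K+1+1) (nodeP E) x0 := ⟨_, rfl⟩
  have hid : (b * x0 + a) * W = (x0^2 - 1) * dv (K+1+2) p x0 + ((K+1:ℕ):ℝ) * (((K+1:ℕ):ℝ)+1) * M := by
    have h1 := dv_quad K (derivative p) x0
    have h2 := dv_lin (K+1) a b (nodeP E) x0
    rw [← hfac, h1, hw0, hp1', hp0', ← dv_succ', ← hW] at h2
    push_cast at h2 ⊢
    linear_combination (-1) * h2
  have hlW : 0 < (b * x0 + a) * W := by
    rw [hid]
    have h1 : 0 < 1 - x0^2 := by nlinarith [hx0.1, hx0.2]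
    have h2 : 0 < (1 - x0^2) * (- dv (K+1+2) p x0) := mul_pos h1 (by linarith)
    have h3 : 0 < ((K+1:ℕ):ℝ) * (((K+1:ℕ):ℝ)+1) * M := by positivity
    linarith
  have hi : ∀ t ∈ E, 0 < W * dv (K+1) (nodeP (E.erase t)) x0 := by
    intro t ht
    have h1 := dv_X_sub (K+1) t (nodeP (E.erase t)) x0
    have h2 := dv_X_sub K t (nodeP (E.erase t)) x0
    rw [← nodeP_erase E ht] at h1 h2
    rw [← hW] at h1
    rw [hw0] at h2
    have h3 := (nodeP_SR (E.erase t)).dv_lt K x0 (by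
      rw [nodeP_natDegree, Finset.card_erase_of_mem ht]; omega)
    set y0 := dv K (nodeP (E.erase t)) x0
    set y1 := dv (K+1) (nodeP (E.erase t)) x0
    set y2 := dv (K+2) (nodeP (E.erase t)) x0
    have e : W * y1 = (K+1) * (y1^2 - y0 * y2) + y1^2 := by
      rw [h1]; push_cast
      linear_combination (-y2) * h2
    rw [e]
    have : 0 < ((K:ℝ)+1) * (y1^2 - y0 * y2) := mul_pos (by positivity) (by linarith)
    positivity
  have hsgn : ∀ t ∈ E, 0 < (p.eval t * (derivative (nodeP E)).eval t) * W := by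
    intro t ht
    have htE := (hE t).1 ht
    have h2 : p.eval t ^ 2 = 1 := by rw [← sq_abs, htE.2]; norm_num
    rw [nodeP_derivative_eval E ht]
    obtain ⟨y, hy⟩ : ∃ y, y = (nodeP (E.erase t)).eval t := ⟨_, rfl⟩
    have hy0 : y ≠ 0 := hy ▸ nodeP_erase_eval_ne E t
    have hFO := FOu hM hM0 hx0 hp hp0 hp1 hp2 hpn
      (r := C (-(p.eval t * y)) * nodeP (E.erase t)) (by
        refine (natDegree_C_mul_le _ _).trans ?_
        rw [nodeP_natDegree, Finset.card_erase_of_mem ht]; omega) (by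
        intro t' ht' h1
        by_cases hne : t' = t
        · subst hne
          rw [eval_mul, eval_C, ← hy]
          nlinarith [sq_nonneg y]
        · rw [eval_mul, nodeP_eval _ (Finset.mem_erase.2 ⟨hne, (hE t').2 ⟨ht', h1⟩⟩)]
          simp)
    rw [dv_Cmul] at hFO
    rw [← hy]
    have hit := hi t ht
    set z := dv (K+1) (nodeP (E.erase t)) x0
    have hz : 0 ≤ (p.eval t * y) * z := by linarith
    have hpy : p.eval t * y ≠ 0 := by
      apply mul_ne_zero _ hy0
      intro h; rw [h] at h2; norm_num at h2
    have hW0 : W ≠ 0 := by rintro h; rw [h] at hlW; simp at hlW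
    have hge : 0 ≤ (p.eval t * y) * W := by
      by_contra hcon
      push Not at hcon
      have hzz : z ≠ 0 := by rintro h; rw [h] at hit; simp at hit
      have h5 : ((p.eval t * y) * z) * W^2 = ((p.eval t * y) * W) * (W * z) := by ring
      have h6 : ((p.eval t * y) * W) * (W * z) < 0 := mul_neg_of_neg_of_pos hcon hit
      have h7 : 0 ≤ ((p.eval t * y) * z) * W^2 := by positivity
      linarith
    exact lt_of_le_of_ne hge (mul_ne_zero hpy hW0).symm
  have hev : ∀ t, (t^2 - 1) * (derivative p).eval t = (b * t + a) * (nodeP E).eval t := by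
    intro t
    have := congrArg (fun g => g.eval t) hfac
    simpa using this
  have hev2 : ∀ t, 2 * t * (derivative p).eval t + (t^2 - 1) * (derivative (derivative p)).eval t
      = b * (nodeP E).eval t + (b * t + a) * (derivative (nodeP E)).eval t := by
    intro t
    have := congrArg (fun g => (derivative g).eval t) hfac
    simp at this
    linarith
  have hnotE : ∀ t, t^2 = 1 → t ∉ E → b * t + a = 0 := by
    intro t ht hn
    have := hev t
    rw [ht] at this
    have hne : (nodeP E).eval t ≠ 0 := by
      intro h
      have : t ∈ (nodeP E).roots := (mem_roots (nodeP_monic _).ne_zero).2 h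
      rw [nodeP_roots] at this
      exact hn this
    have h3 : (b * t + a) * (nodeP E).eval t = 0 := by linarith
    exact (mul_eq_zero.1 h3).resolve_right hne
  have hmax : ∀ t ∈ E, ∀ s ∈ Icc (-1:ℝ) 1, (C (p.eval t) * p).eval s ≤ (C (p.eval t) * p).eval t := by
    intro t ht s hs
    have htE := (hE t).1 ht
    have h2 : p.eval t ^ 2 = 1 := by rw [← sq_abs, htE.2]; norm_num
    simp only [eval_mul, eval_C]
    have h3 : |p.eval t * p.eval s| ≤ 1 := by
      rw [abs_mul, htE.2, one_mul]; exact hp s hs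
    have := (abs_le.1 h3).2
    nlinarith
  have hfin : ∀ (e y l : ℝ), 0 < (e * y) * W → 0 ≤ e * (l * y) → 0 ≤ l * W := by
    intro e y l h1 h2
    by_contra hcon
    push Not at hcon
    have hey : e * y ≠ 0 := by rintro h; rw [h] at h1; simp at h1
    have h3 : (e * (l * y)) * W^2 = ((e * y) * W) * (l * W) := by ring
    have h4 := mul_neg_of_pos_of_neg h1 hcon
    have h5 : 0 ≤ (e * (l * y)) * W^2 := by positivity
    linarith
  have hend1 : 0 ≤ (b * 1 + a) * W := by
    by_cases h1 : (1:ℝ) ∈ E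
    · have h2 := end_slope _ (hmax 1 h1)
      rw [derivative_C_mul, eval_mul, eval_C] at h2
      have h3 := hev2 1
      rw [nodeP_eval E h1] at h3
      apply hfin _ _ _ (hsgn 1 h1)
      have h4 : (b * 1 + a) * (derivative (nodeP E)).eval 1 = 2 * (derivative p).eval 1 := by linarith
      rw [h4]
      linarith
    · rw [hnotE 1 (by norm_num) h1]; simp
  have hend2 : 0 ≤ (b * (-1) + a) * W := by
    by_cases h1 : (-1:ℝ) ∈ E
    · have h2 := end_slope_neg _ (hmax (-1) h1)
      rw [derivative_C_mul, eval_mul, eval_C] at h2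
      have h3 := hev2 (-1)
      rw [nodeP_eval E h1] at h3
      apply hfin _ _ _ (hsgn (-1) h1)
      have h4 : (b * (-1) + a) * (derivative (nodeP E)).eval (-1) = -2 * (derivative p).eval (-1) := by
        linarith
      rw [h4]
      linarith
    · rw [hnotE (-1) (by norm_num) h1]; simp
  have hpos : ∀ t ∈ Ioo (-1:ℝ) 1, 0 < (b * t + a) * W := by
    have e : ∀ t, (b * t + a) * W = (1 + t) / 2 * ((b * 1 + a) * W)
        + (1 - t) / 2 * ((b * (-1) + a) * W) := by intro t; ring
    intro t ht
    have ht1 : 0 < (1 + t) / 2 := by linarith [ht.1]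
    have ht2 : 0 < (1 - t) / 2 := by linarith [ht.2]
    rcases hend1.lt_or_eq with h | h
    · rw [e t]; positivity
    rcases hend2.lt_or_eq with h' | h'
    · rw [e t]; positivity
    · rw [e x0, ← h, ← h'] at hlW
      simp at hlW
  exact core_n hk hM hM0 hx0 hp hp0 hp1 hp2 hpn E hE hcard a b W hW hfac hpos hw0 hid hi

/-- Schur-type theorem for higher derivatives:
`max_{x₀∈[-1,1]} μ_k^*(x₀) = max{ |T_n^{(k)}(ω_k)|, μ_k^*(1) }`. -/
theorem schur_type_max (n k : ℕ) (hn : 2 ≤ n) (hk1 : 1 ≤ k) (hk2 : k ≤ n - 1)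
    (ωk : ℝ) (hω : IsGreatest {x : ℝ | chebDeriv n (k+1) x = 0} ωk) :
    sSup {y | ∃ x ∈ Icc (-1:ℝ) 1, y = mukStar n k x} =
      max (|chebDeriv n k ωk|) (mukStar n k 1) := by
  have hkn : k + 1 ≤ n := by omega
  have hω0 : dv (k+1) (Chebyshev.T ℝ n) ωk = 0 := hω.1
  have hωle : ∀ x, dv (k+1) (Chebyshev.T ℝ n) x = 0 → x ≤ ωk := fun x hx => hω.2 hx
  have hdT : (Chebyshev.T ℝ (n:ℤ)).natDegree = n := by
    rw [Chebyshev.natDegree_T]; simp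
  have hT1 : ∀ t ∈ Icc (-1:ℝ) 1, |(Chebyshev.T ℝ (n:ℤ)).eval t| ≤ 1 := fun t ht =>
    Chebyshev.abs_eval_T_real_le_one (n:ℤ) (abs_le.2 ht)
  have hkn2 : k + 2 ≤ n := by
    by_contra hcon
    have hkn' : k + 1 = n := by omega
    have h1 := cheb_pos (n := n) (j := k+1) (by omega) hkn (le_refl (1:ℝ))
    have h2 := natDegree_iter (Chebyshev.T ℝ (n:ℤ)) (k+1) (by omega)
    rw [hdT, hkn', Nat.sub_self] at h2
    have h3 := eq_C_of_natDegree_eq_zero h2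
    rw [hkn'] at h1 hω0
    unfold dv at h1 hω0
    rw [h3, eval_C] at h1 hω0
    linarith
  have hωlt : ωk < 1 := by
    by_contra hcon
    have := cheb_pos (n := n) (j := k+1) (by omega) hkn (not_lt.1 hcon)
    linarith
  have hωnn : 0 ≤ ωk := by
    have h1 := cheb_abs_neg n (k+1) ωk
    rw [hω0, abs_zero, abs_eq_zero] at h1
    have := hωle _ h1
    linarith
  obtain ⟨p, x0, hpn, hp, hx0, hp1, hM⟩ := exists_max n k
  obtain ⟨M, hMdef⟩ : ∃ M, M = dv k p x0 := ⟨_, rfl⟩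
  rw [← hMdef] at hM
  have hzero : ∀ j y, dv j (0:ℝ[X]) y = 0 := fun j y => by simp [dv]
  have hM0 : 0 ≤ M := by
    have := hM.le 0 (by simp) (by simp) 0 (by simp) (hzero _ _)
    rwa [hzero] at this
  have hall : ∀ q : ℝ[X], q.natDegree ≤ n → (∀ t ∈ Icc (-1:ℝ) 1, |q.eval t| ≤ 1) →
      ∀ y ∈ Icc (-1:ℝ) 1, dv (k+1) q y = 0 → |dv k q y| ≤ M := by
    intro q hq hq1 y hy h0
    have h1 := hM.le q hq hq1 y hy h0
    have h2 := hM.le (C (-1) * q) ((natDegree_C_mul_le _ _).trans hq)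
      (fun t ht => by
        rw [eval_mul, eval_C, abs_mul]; simpa using hq1 t ht) y hy (by rw [dv_Cmul, h0, mul_zero])
    rw [dv_Cmul] at h2
    exact abs_le.2 ⟨by linarith, h1⟩
  have hub : ∀ x ∈ Icc (-1:ℝ) 1, mukStar n k x ≤ M := by
    intro x hx
    refine csSup_le ⟨0, 0, by simp, by simp, hzero _ _, by simp⟩ ?_
    rintro y ⟨q, hq, hq1, h0, rfl⟩
    exact hall q hq hq1 x hx h0
  have hlb : ∀ x ∈ Icc (-1:ℝ) 1, ∀ q : ℝ[X], q.natDegree ≤ n →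
      (∀ t ∈ Icc (-1:ℝ) 1, |q.eval t| ≤ 1) → dv (k+1) q x = 0 → |dv k q x| ≤ mukStar n k x := by
    intro x hx q hq hq1 h0
    refine le_csSup ⟨M, ?_⟩ ⟨q, hq, hq1, h0, rfl⟩
    rintro y ⟨r, hr, hr1, h0, rfl⟩
    exact hall r hr hr1 x hx h0
  have hsup : sSup {y | ∃ x ∈ Icc (-1:ℝ) 1, y = mukStar n k x} = M := by
    apply le_antisymm
    · refine csSup_le ⟨_, x0, hx0, rfl⟩ ?_
      rintro y ⟨x, hx, rfl⟩
      exact hub x hx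
    · refine le_trans ?_ (le_csSup ⟨M, ?_⟩ ⟨x0, hx0, rfl⟩)
      · refine le_trans ?_ (hlb x0 hx0 p hpn hp hp1)
        rw [← hMdef]; exact le_abs_self M
      · rintro y ⟨x, hx, rfl⟩
        exact hub x hx
  have hωI : ωk ∈ Icc (-1:ℝ) 1 := ⟨by linarith, hωlt.le⟩
  have h1I : (1:ℝ) ∈ Icc (-1:ℝ) 1 := by constructor <;> norm_num
  change _ = max (|dv k (Chebyshev.T ℝ n) ωk|) (mukStar n k 1)
  rw [hsup]
  apply le_antisymm
  swap
  · exact max_le (hall _ hdT.le hT1 ωk hωI hω0) (hub 1 h1I)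
  rcases hM0.eq_or_lt with h0 | hMpos
  · rw [← h0]; exact le_max_of_le_left (abs_nonneg _)
  have hpM : |dv k p x0| = M := by rw [← hMdef]; exact abs_of_pos hMpos
  by_cases hx1 : x0 = 1
  · apply le_max_of_le_right
    rw [← hpM, hx1]
    exact hlb 1 h1I p hpn hp (hx1 ▸ hp1)
  by_cases hx2 : x0 = -1
  · apply le_max_of_le_right
    have h := hlb 1 h1I (p.comp (-X)) (by
        refine natDegree_comp_le.trans ?_
        simpa using hpn) (by
        intro t ht
        rw [eval_comp]
        simp only [eval_neg, eval_X]
        exact hp (-t) ⟨by linarith [ht.2], by linarith [ht.1]⟩) (by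
        rw [dv_comp_neg, ← hx2, hp1, mul_zero])
    rw [dv_comp_neg, abs_mul, ← hx2, hpM, abs_pow] at h
    simpa [hx2] using h
  have hx0' : x0 ∈ Ioo (-1:ℝ) 1 :=
    ⟨lt_of_le_of_ne hx0.1 (Ne.symm hx2), lt_of_le_of_ne hx0.2 hx1⟩
  have hp' : derivative p ≠ 0 := by
    intro h
    obtain ⟨j, rfl⟩ : ∃ j, k = j + 1 := ⟨k - 1, by omega⟩
    rw [dv_succ', h, hzero] at hMdef
    linarith
  obtain ⟨E, hE, hd⟩ := ext_finset p hp hp'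
  have hc1 := card_ge hk1 hkn hM hMpos hx0 hp hMdef.symm hp1 hpn E hE
  have hc2 : E.card ≤ n + 1 := by
    have h := natDegree_le_of_dvd hd (mul_ne_zero X2_monic.ne_zero hp')
    have h2 := natDegree_mul_le (p := (X^2 - 1 : ℝ[X])) (q := derivative p)
    have h3 := natDegree_derivative_le p
    rw [nodeP_natDegree] at h
    rw [X2_natDegree] at h2
    omega
  rcases (show E.card = n ∨ E.card = n + 1 by omega) with hc | hc
  · exact (case_n hk1 hkn2 hM hMpos hx0' hp hp' hMdef.symm hp1 hpn E hE hc hd).elim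
  obtain ⟨α, hα, hpα⟩ := full_case (by omega) p hp' hpn E (fun t ht => ((hE t).1 ht).2) hd hc
  have hα0 : α ≠ 0 := by rintro rfl; simp at hα
  have hT0 : dv (k+1) (Chebyshev.T ℝ n) x0 = 0 := by
    rw [hpα, dv_Cmul] at hp1
    exact (mul_eq_zero.1 hp1).resolve_left hα0
  apply le_max_of_le_left
  rw [hpα, dv_Cmul, abs_mul, hα, one_mul] at hpM
  rw [← hpM]
  rcases le_total 0 x0 with hs | hs
  · exact cheb_mono (by omega) hs (hωle _ hT0) hT0 hω0
  · have hT0' : dv (k+1) (Chebyshev.T ℝ n) (-x0) = 0 := by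
      rw [← abs_eq_zero, cheb_abs_neg, hT0, abs_zero]
    rw [← cheb_abs_neg]
    exact cheb_mono (by omega) (by linarith) (hωle _ hT0') hT0' hω0
end
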